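/- arXiv:2109.15116 — 2 statements merged into one kernel-verified Lean document; each statement's English description precedes it below -/
import Mathlib

section
/- Let P ⊆ ℝ^d be a polytope of dimension d (the convex hull of a finite set whose affine span is all of ℝ^d), and let φ : ℝ^d → ℝ be an affine function that is not constant on any edge of P. Then there exist d φ-monotone paths in the graph of P from the unique φ-minimizing vertex of P to the unique φ-maximizing vertex of P such that any two of the paths have no vertex in common other than these two endpoints. -/
/-!
The proof reduces the theorem to a cut condition through a directed form of Menger's theorem,
and verifies that condition with shadow (parametric simplex) paths.

If the segment `[s, t]` is an edge of `P`, the one-edge path may be repeated `d` times, since the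
paths are only required to be disjoint away from `s` and `t`. Otherwise `s` and `t` are not
adjacent, and by `exists_disjoint_dipaths` it is enough that no set `X` of fewer than `d` vertices
other than `s`, `t` meets every monotone path from `s` to `t`.

Given such an `X`, let `f` be the linear part of `φ`. There is a linear functional `ψ` with
`ψ s = ψ t`, `ψ ≤ ψ s` on `X`, and `ψ u > ψ s` for some `u ∈ V` (`exists_functional`): otherwise
every functional constant on `{s, t}` and at most its value at `s` on `X` has the same bound on
`P`, which by a dimension count makes `[s, t]` a face of `P`. Consider the vertices of `P`
maximizing `ψ + r f` for some real `r`, i.e. the upper boundary of the shadow of `P` under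
`(f, ψ)`. From each such vertex other than `t` an `f`-increasing edge leads to another one
(`IsShadowVertex.step`), so they contain a monotone path from `s` to `t`. None of them lies in `X`:
comparing the optimal value at `x ∈ X` with those at `s` and `t` forces `r = 0`, and then
`ψ x < ψ u` contradicts optimality.

The existence of improving edges (`exists_edge_up`) comes from the vertex figure: an extreme point
of the vertex figure of `v` spans an edge of `P` at `v`. The Menger statement is deduced from Hall's
marriage theorem, with `d` copies each of `s` and `t`; a matching assigns to each inner vertex either
itself or an out-neighbour, and following it from the copies of `s` gives the paths.
-/

open Set

/-- A directed path from `a` to `b` in the digraph with arc relation `A`. -/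
def IsDipath {V : Type*} (A : V → V → Prop) (p : List V) (a b : V) : Prop :=
  p ≠ [] ∧ p.head? = some a ∧ p.getLast? = some b ∧ p.Chain' A ∧ p.Nodup

/-- `v` is a vertex of the polytope `P`: the singleton `{v}` is a face
(an extreme subset) of `P`. -/
def IsVertexOf {d : ℕ} (P : Set (Fin d → ℝ)) (v : Fin d → ℝ) : Prop :=
  IsExtreme ℝ P {v}

/-- `[v, w]` is an edge of `P`: `v ≠ w` are vertices and the closed segment
joining them is a face (an extreme subset) of `P`. -/
def IsEdgeOf {d : ℕ} (P : Set (Fin d → ℝ)) (v w : Fin d → ℝ) : Prop :=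
  v ≠ w ∧ IsVertexOf P v ∧ IsVertexOf P w ∧ IsExtreme ℝ P (segment ℝ v w)

/-- The arc relation of the graph of `P` oriented by the affine function `φ`:
`v → w` when `[v, w]` is an edge and `φ v < φ w`. -/
def PolyArc {d : ℕ} (P : Set (Fin d → ℝ)) (φ : (Fin d → ℝ) →ᵃ[ℝ] ℝ)
    (v w : Fin d → ℝ) : Prop :=
  IsEdgeOf P v w ∧ φ v < φ w

/-! ### Menger's theorem from Hall's theorem -/

/-- If from every `p`-vertex other than `t` a step of `R` leads to a `p`-vertex with larger `f`, and
there are finitely many `p`-vertices, then `t` is reached. -/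
theorem reflTransGen_of_climb {T : Type*} {I : Set T} (hI : I.Finite) (f : T → ℝ)
    (R : T → T → Prop) (t : T) (p : T → Prop) (hpI : ∀ v, p v → v ∈ I)
    (h : ∀ v, p v → v ≠ t → ∃ w, p w ∧ R v w ∧ f v < f w) :
    ∀ v, p v → Relation.ReflTransGen R v t := by
  classical
  suffices H : ∀ n : ℕ, ∀ v, p v → (hI.toFinset.filter (fun u => f v < f u)).card ≤ n →
      Relation.ReflTransGen R v t from fun v hv => H _ v hv le_rfl
  intro n
  induction n with
  | zero =>
    intro v hv hc
    by_cases hvt : v = t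
    · rw [hvt]
    · obtain ⟨w, hw, -, hlt⟩ := h v hv hvt
      have : w ∈ hI.toFinset.filter (fun u => f v < f u) := by simp [hpI w hw, hlt]
      simp only [nonpos_iff_eq_zero, Finset.card_eq_zero] at hc
      simp [hc] at this
  | succ n ih =>
    intro v hv hc
    by_cases hvt : v = t
    · rw [hvt]
    · obtain ⟨w, hw, hR, hlt⟩ := h v hv hvt
      refine Relation.ReflTransGen.head hR (ih w hw ?_)
      have hss : hI.toFinset.filter (fun u => f w < f u) ⊂
          hI.toFinset.filter (fun u => f v < f u) := by
        refine Finset.ssubset_iff_of_subset ?_ |>.2 ⟨w, by simp [hpI w hw, hlt], by simp⟩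
        intro u hu
        simp only [Finset.mem_filter] at hu ⊢
        exact ⟨hu.1, hlt.trans hu.2⟩
      have := Finset.card_lt_card hss
      omega

theorem exists_list_of_reflTransGen {T : Type*} {R : T → T → Prop} {a b : T}
    (h : Relation.ReflTransGen R a b) :
    ∃ l : List T, (a :: l).getLast? = some b ∧ (a :: l).IsChain R ∧
      ∀ x ∈ a :: l, Relation.ReflTransGen R a x := by
  induction h using Relation.ReflTransGen.head_induction_on with
  | refl => exact ⟨[], by simp, by simp, by simp [Relation.ReflTransGen.refl]⟩
  | @head a c hac _ ih =>
    obtain ⟨l, h1, h2, h3⟩ := ih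
    refine ⟨c :: l, ?_, ?_, ?_⟩
    · rw [List.getLast?_cons_cons, h1]
    · exact List.isChain_cons_cons.2 ⟨hac, h2⟩
    · intro x hx
      rcases List.mem_cons.1 hx with rfl | hx
      · exact .refl
      · exact .head hac (h3 x hx)

/-- Directed vertex Menger theorem for a finite digraph, acyclic because its arcs increase `f`,
and non-adjacent `s`, `t`: if no set of fewer than `d` inner vertices separates `s` from `t`,
there are `d` internally disjoint paths from `s` to `t`. In the bipartite graph, `Sum.inl i` on
the left is the `i`-th copy of `s` and on the right the `i`-th copy of `t`. Hall's condition for a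
set containing a copy of `s` and the inner vertices `U`, none adjacent to `t`, says that the
out-neighbours of `U ∪ {s}` outside `U` number at least `d`; this holds because they separate `s`
from `t`. -/
theorem exists_disjoint_dipaths {T : Type*} (d : ℕ) (I : Finset T) (s t : T)
    (hs : s ∉ I) (ht : t ∉ I) (hst : s ≠ t) (A : T → T → Prop) (f : T → ℝ)
    (hA : ∀ a b, A a b → f a < f b) (hAI : ∀ a b, A a b → b ∈ I ∨ b = t)
    (hAst : ¬ A s t)
    (hsep : ∀ X ⊆ I, X.card < d → Relation.ReflTransGen (fun a b => A a b ∧ b ∉ X) s t) :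
    ∃ p : Fin d → List T, (∀ i, IsDipath A (p i) s t) ∧
      ∀ i j, i ≠ j → ∀ x, x ∈ p i → x ∈ p j → x = s ∨ x = t := by
  classical
  let N : Fin d ⊕ I → Finset (Fin d ⊕ I) := fun a => Finset.univ.filter fun b =>
    match a, b with
    | .inl _, .inl _ => False
    | .inl _, .inr w => A s w
    | .inr v, .inl _ => A v t
    | .inr v, .inr w => v = w ∨ A v w
  have hall : ∀ Z : Finset (Fin d ⊕ I), Z.card ≤ (Z.biUnion N).card := by
    intro Z
    by_cases hZ : ∃ i, Sum.inl i ∈ Z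
    · obtain ⟨i₀, hi₀⟩ := hZ
      have hZr := Finset.card_toLeft_add_card_toRight (u := Z)
      have hZl : Z.toLeft.card ≤ d := by
        simpa using Finset.card_le_univ Z.toLeft
      have hsub : Z.toRight ⊆ (Z.biUnion N).toRight := by
        intro v hv
        simp only [Finset.mem_toRight, Finset.mem_biUnion] at hv ⊢
        exact ⟨_, hv, by simp [N]⟩
      have hNr := Finset.card_toLeft_add_card_toRight (u := Z.biUnion N)
      by_cases hU : ∃ v : I, Sum.inr v ∈ Z ∧ A v t
      · obtain ⟨v, hv, hvt⟩ := hU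
        have : (Z.biUnion N).toLeft = Finset.univ := by
          ext j
          simp only [Finset.mem_toLeft, Finset.mem_biUnion, Finset.mem_univ, iff_true]
          exact ⟨_, hv, by simp [N, hvt]⟩
        have h1 := Finset.card_le_card hsub
        rw [this] at hNr
        simp at hNr
        omega
      · push Not at hU
        -- The right neighbours of `Z` outside `Z` separate `s` from `t`.
        have hX : d ≤ ((Z.biUnion N).toRight \ Z.toRight).card := by
          by_contra! hlt
          have hr := hsep (((Z.biUnion N).toRight \ Z.toRight).map (.subtype _))
            (by intro x hx; simp only [Finset.mem_map] at hx; obtain ⟨y, -, rfl⟩ := hx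
                exact y.2) (by simpa using hlt)
          have key : ∀ b, Relation.ReflTransGen (fun a b => A a b ∧
              b ∉ ((Z.biUnion N).toRight \ Z.toRight).map (.subtype _)) s b →
              b = s ∨ ∃ hb : b ∈ I, Sum.inr ⟨b, hb⟩ ∈ Z := by
            intro b hb
            induction hb with
            | refl => exact .inl rfl
            | @tail b c _ hbc ih =>
              obtain ⟨hAbc, hcX⟩ := hbc
              right
              have hc : c ∈ I := by
                rcases hAI _ _ hAbc with h | rfl
                · exact h
                · rcases ih with rfl | ⟨hb, hbZ⟩
                  · exact absurd hAbc hAst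
                  · exact absurd hAbc (hU _ hbZ)
              refine ⟨hc, ?_⟩
              by_contra hcZ
              apply hcX
              simp only [Finset.mem_map, Finset.mem_sdiff, Finset.mem_toRight,
                Finset.mem_biUnion]
              refine ⟨⟨c, hc⟩, ⟨?_, hcZ⟩, rfl⟩
              rcases ih with rfl | ⟨hb, hbZ⟩
              · exact ⟨_, hi₀, by simp [N, hAbc]⟩
              · exact ⟨_, hbZ, by simp [N, hAbc]⟩
          rcases key t hr with h | ⟨h, -⟩
          · exact hst h.symm
          · exact ht h
        rw [Finset.card_sdiff_of_subset hsub] at hX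
        have h1 := Finset.card_le_card hsub
        omega
    · push Not at hZ
      apply Finset.card_le_card
      intro a ha
      rcases a with i | v
      · exact absurd ha (hZ i)
      · exact Finset.mem_biUnion.2 ⟨_, ha, by simp [N]⟩
  obtain ⟨g, hginj, hg⟩ := (Finset.all_card_le_biUnion_card_iff_exists_injective N).1 hall
  -- Trajectories of the matching `g`; a step to `t` comes from a match with a copy of `t`.
  let R : T → T → Prop := fun a b => A a b ∧ ∃ ha : a ∈ I,
    (∃ hb : b ∈ I, g (.inr ⟨a, ha⟩) = .inr ⟨b, hb⟩) ∨ b = t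
  have hstart : ∀ i, ∃ v : I, A s v ∧ g (.inl i) = .inr v := by
    intro i
    have := hg (.inl i)
    rcases h : g (.inl i) with j | v
    · simp [N, h] at this
    · exact ⟨v, by simpa [N, h] using this, rfl⟩
  choose v hsv hgv using hstart
  -- By injectivity of `g`, a vertex entered by a trajectory is not matched to itself, so the
  -- trajectory keeps increasing `f` until it reaches `t`.
  have hreach : ∀ i, Relation.ReflTransGen R (v i) t := by
    intro i
    refine reflTransGen_of_climb (I := ↑I ∪ {t}) (I.finite_toSet.union (finite_singleton t)) f R t
      (fun x => x = t ∨ ∃ hx : x ∈ I, g (.inr ⟨x, hx⟩) ≠ .inr ⟨x, hx⟩) ?_ ?_ (v i) ?_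
    · rintro x (rfl | ⟨hx, -⟩)
      · simp
      · simp [hx]
    · rintro x (rfl | ⟨hx, hgx⟩) hxt
      · exact absurd rfl hxt
      · have := hg (.inr ⟨x, hx⟩)
        rcases h : g (.inr ⟨x, hx⟩) with j | w
        · have hAt : A x t := by simpa [N, h] using this
          exact ⟨t, .inl rfl, ⟨hAt, hx, .inr rfl⟩, hA _ _ hAt⟩
        · have hxw : ⟨x, hx⟩ ≠ w := fun e => hgx (by rw [h, e])
          have hAw : A x w := by
            simp only [N, h, Finset.mem_filter] at this
            exact this.2.resolve_left hxw
          refine ⟨w, .inr ⟨w.2, fun e => hxw ?_⟩, ⟨hAw, hx, .inl ⟨w.2, h⟩⟩, hA _ _ hAw⟩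
          exact Sum.inr_injective (hginj (h.trans e.symm))
    · refine .inr ⟨(v i).2, fun e => ?_⟩
      exact Sum.inl_ne_inr (hginj ((hgv i).trans e.symm))
  -- Backward determinism: an inner vertex belongs to at most one trajectory.
  have hdisj : ∀ i x, Relation.ReflTransGen R (v i) x → x ≠ t → ∀ j,
      Relation.ReflTransGen R (v j) x → i = j := by
    intro i x hx
    induction hx with
    | refl =>
      intro _ j hj
      rcases Relation.ReflTransGen.cases_tail hj with e | ⟨b, -, -, hb, ⟨_, e⟩ | e⟩
      · have : v i = v j := Subtype.ext e
        exact Sum.inl_injective (hginj ((hgv i).trans (by rw [this, hgv j])))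
      · exact absurd (hginj ((hgv i).trans e.symm)) Sum.inl_ne_inr
      · exact absurd (v i).2 (e ▸ ht)
    | @tail b c _ hbc ih =>
      intro hct j hj
      obtain ⟨-, hb, ⟨hc, e⟩ | e⟩ := hbc
      swap
      · exact absurd e hct
      rcases Relation.ReflTransGen.cases_tail hj with rfl | ⟨b', hjb', -, hb', ⟨_, e'⟩ | e'⟩
      · exact absurd (hginj ((hgv j).trans e.symm)) Sum.inl_ne_inr
      · have hbb : b = b' := congrArg Subtype.val (Sum.inr_injective (hginj (e.trans e'.symm)))
        subst hbb
        exact ih (fun h => ht (h ▸ hb)) j hjb'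
      · exact absurd e' hct
  choose l hlast hchain hmem using fun i => exists_list_of_reflTransGen (hreach i)
  refine ⟨fun i => s :: v i :: l i, fun i => ?_, ?_⟩
  · have hch : (s :: (v i : T) :: l i).IsChain A :=
      List.isChain_cons_cons.2 ⟨hsv i, (hchain i).imp fun _ _ h => h.1⟩
    refine ⟨by simp, by simp, by rw [List.getLast?_cons_cons, hlast], hch, ?_⟩
    have h2 : (s :: (v i : T) :: l i).IsChain (fun a b => f a < f b) := hch.imp hA
    have : Trans (fun a b : T => f a < f b) (fun a b => f a < f b) (fun a b => f a < f b) :=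
      ⟨fun h h' => lt_trans h h'⟩
    exact (List.isChain_iff_pairwise.1 h2).imp fun h e => (e ▸ h).ne rfl
  · intro i j hij x hxi hxj
    by_contra! hx
    exact hij (hdisj i x (hmem i x ((List.mem_cons.1 hxi).resolve_left hx.1)) hx.2 j
      (hmem j x ((List.mem_cons.1 hxj).resolve_left hx.1)))

/-! ### Improving edges -/

theorem le_on_convexHull {d : ℕ} {V : Set (Fin d → ℝ)} {c : (Fin d → ℝ) →ₗ[ℝ] ℝ} {r : ℝ}
    (h : ∀ u ∈ V, c u ≤ r) : ∀ p ∈ convexHull ℝ V, c p ≤ r := fun _ hp =>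
  convexHull_min (t := {k | c k ≤ r}) h (convex_halfSpace_le c.isLinear r) hp

theorem eq_left_of_combo_eq_max {α β p q m : ℝ} (hα : 0 < α) (hβ : 0 < β) (hαβ : α + β = 1)
    (hp : p ≤ m) (hq : q ≤ m) (h : α * p + β * q = m) : p = m := by
  have h5 : α * (m - p) + β * (m - q) = 0 := by linear_combination m * hαβ - h
  have h6 := mul_nonneg hβ.le (sub_nonneg.2 hq)
  have h7 := mul_nonneg hα.le (sub_nonneg.2 hp)
  have h8 : α * (m - p) = 0 := by linarith
  linarith [(mul_eq_zero.1 h8).resolve_left hα.ne.symm]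

/-- A vertex `v` of a polytope that does not maximize `c` has a `c`-increasing edge. It is spanned by an
extreme point `y` of the vertex figure of `v` with `c y > 0`, and ends at the last point of the
polytope on the ray from `v` in direction `y`. -/
theorem exists_edge_up {d : ℕ} {V : Set (Fin d → ℝ)} (hV : V.Finite) {v x : Fin d → ℝ}
    (hv : IsVertexOf (convexHull ℝ V) v) (c : (Fin d → ℝ) →ₗ[ℝ] ℝ) (hx : x ∈ V)
    (hvx : c v < c x) :
    ∃ w ∈ V, IsEdgeOf (convexHull ℝ V) v w ∧ c v < c w := by
  have hvV : v ∈ (convexHull ℝ V).extremePoints ℝ := isExtreme_singleton.1 hv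
  -- Strictly separate `v` from the other generators.
  have hv' : v ∉ convexHull ℝ (V \ {v}) := fun h =>
    (extremePoints_convexHull_subset (inter_extremePoints_subset_extremePoints_of_subset
      (convexHull_mono sdiff_subset) ⟨h, hvV⟩)).2 rfl
  have hfin' : (V \ {v}).Finite := hV.subset sdiff_subset
  obtain ⟨ℓ, u, hu, hub⟩ := geometric_hahn_banach_point_closed (convex_convexHull ℝ (V \ {v}))
    (hfin'.isClosed_convexHull ℝ) hv'
  have hℓ : ∀ b ∈ V \ {v}, 0 < ℓ b - ℓ v := fun b hb =>
    sub_pos.2 (hu.trans (hub b (subset_convexHull ℝ _ hb)))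
  have hxv : x ∈ V \ {v} := ⟨hx, fun e => by rw [mem_singleton_iff.1 e] at hvx; exact hvx.ne rfl⟩
  -- The vertex figure of `v`, translated to the hyperplane `ℓ = 1`.
  let pr : (Fin d → ℝ) → (Fin d → ℝ) := fun b => (ℓ b - ℓ v)⁻¹ • (b - v)
  let K := convexHull ℝ (pr '' (V \ {v}))
  have hprK : ∀ b ∈ V \ {v}, pr b ∈ K := fun b hb => subset_convexHull ℝ _ (mem_image_of_mem _ hb)
  have hKfin : (pr '' (V \ {v})).Finite := hfin'.image _
  have hKℓ : ∀ k ∈ K, ℓ k = 1 := by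
    intro k hk
    have hc : Convex ℝ {k | ℓ k = 1} := convex_hyperplane ℓ.isLinear 1
    refine convexHull_min ?_ hc hk
    rintro _ ⟨b, hb, rfl⟩
    have := (hℓ b hb).ne'
    simp [pr, this]
  have hKconv : Convex ℝ K := convex_convexHull ℝ _
  have hcone : ∀ p ∈ convexHull ℝ V, ∃ r : ℝ, 0 ≤ r ∧ ∃ k ∈ K, p = v + r • k := by
    have hconv : Convex ℝ {p | ∃ r : ℝ, 0 ≤ r ∧ ∃ k ∈ K, p = v + r • k} := by
      rintro _ ⟨r₁, hr₁, k₁, hk₁, rfl⟩ _ ⟨r₂, hr₂, k₂, hk₂, rfl⟩ a b ha hb hab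
      rcases (add_nonneg (mul_nonneg ha hr₁) (mul_nonneg hb hr₂)).eq_or_lt' with h0 | h0
      · have h1 : a * r₁ = 0 := by nlinarith [mul_nonneg ha hr₁, mul_nonneg hb hr₂]
        have h2 : b * r₂ = 0 := by nlinarith [mul_nonneg ha hr₁, mul_nonneg hb hr₂]
        refine ⟨0, le_rfl, k₁, hk₁, ?_⟩
        simp only [smul_add, smul_smul, h1, h2, zero_smul, add_zero]
        rw [← add_smul, hab, one_smul]
      · refine ⟨a * r₁ + b * r₂, h0.le, (a * r₁ / (a * r₁ + b * r₂)) • k₁ +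
          (b * r₂ / (a * r₁ + b * r₂)) • k₂, hKconv hk₁ hk₂ (by positivity) (by positivity)
          (by field_simp), ?_⟩
        simp only [smul_add, smul_smul]
        rw [mul_div_cancel₀ _ h0.ne', mul_div_cancel₀ _ h0.ne']
        nth_rewrite 3 [← one_smul ℝ v]
        rw [← hab, add_smul]
        abel
    intro p hp
    refine convexHull_min ?_ hconv hp
    intro b hb
    by_cases hbv : b = v
    · exact ⟨0, le_rfl, pr x, hprK x hxv, by simp [hbv]⟩
    · have hbV : b ∈ V \ {v} := ⟨hb, hbv⟩
      exact ⟨ℓ b - ℓ v, (hℓ b hbV).le, pr b, hprK b hbV, by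
        simp [pr, smul_smul, mul_inv_cancel₀ (hℓ b hbV).ne.symm]⟩
  -- An extreme point of the vertex figure in a direction increasing `c`.
  obtain ⟨y, hyK, hcy⟩ : ∃ y ∈ K.extremePoints ℝ, 0 < c y := by
    by_contra! H
    have hKcomp : IsCompact K := hKfin.isCompact_convexHull ℝ
    have hextfin : (K.extremePoints ℝ).Finite := hKfin.subset extremePoints_convexHull_subset
    have hKeq : convexHull ℝ (K.extremePoints ℝ) = K := by
      rw [← (hextfin.isClosed_convexHull ℝ).closure_eq]
      exact closure_convexHull_extremePoints hKcomp hKconv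
    have hle : ∀ k ∈ K, c k ≤ 0 := by
      rw [← hKeq]
      exact le_on_convexHull H
    have := hle _ (hprK x hxv)
    simp only [pr, map_smul, map_sub, smul_eq_mul] at this
    have h2 : 0 < (ℓ x - ℓ v)⁻¹ * (c x - c v) :=
      mul_pos (inv_pos.2 (hℓ x hxv)) (sub_pos.2 hvx)
    linarith
  obtain ⟨b, hbV, hby⟩ : y ∈ pr '' (V \ {v}) := extremePoints_convexHull_subset hyK
  have hℓy : ℓ y = 1 := hKℓ y hyK.1
  have hℓnn : ∀ p ∈ convexHull ℝ V, 0 ≤ ℓ p - ℓ v := by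
    intro p hp
    obtain ⟨r, hr, k, hk, rfl⟩ := hcone p hp
    simpa [hKℓ k hk] using hr
  -- The face spanned by the ray from `v` in direction `y`.
  let F : Set (Fin d → ℝ) := {p | p ∈ convexHull ℝ V ∧ p = v + (ℓ p - ℓ v) • y}
  have hFcomp : IsCompact F := by
    have : F = convexHull ℝ V ∩ {p | p = v + (ℓ p - ℓ v) • y} := rfl
    rw [this]
    exact (hV.isCompact_convexHull ℝ).inter_right (isClosed_eq (by fun_prop) (by fun_prop))
  have hvF : v ∈ F := ⟨hvV.1, by simp⟩
  have hbF : b ∈ F := ⟨subset_convexHull ℝ _ hbV.1, by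
    rw [← hby]; simp [pr, smul_smul, mul_inv_cancel₀ (hℓ b hbV).ne.symm]⟩
  obtain ⟨w, hwF, hwmax⟩ := hFcomp.exists_isMaxOn ⟨v, hvF⟩ ℓ.continuous.continuousOn
  have hwmax' : ∀ p ∈ F, ℓ p ≤ ℓ w := fun p hp => hwmax hp
  have hRpos : 0 < ℓ w - ℓ v := by
    have := hℓ b hbV; have := hwmax' b hbF; linarith
  have hFext : IsExtreme ℝ (convexHull ℝ V) F := by
    refine ⟨fun p hp => hp.1, ?_⟩
    rintro p hp q hq z ⟨-, hz⟩ ⟨α, β, hα, hβ, hαβ, rfl⟩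
    refine ⟨hp, ?_⟩
    obtain ⟨r₁, hr₁, k₁, hk₁, rfl⟩ := hcone p hp
    obtain ⟨r₂, hr₂, k₂, hk₂, rfl⟩ := hcone q hq
    have e1 : ℓ (v + r₁ • k₁) - ℓ v = r₁ := by simp [hKℓ k₁ hk₁]
    have e2 : ℓ (α • (v + r₁ • k₁) + β • (v + r₂ • k₂)) - ℓ v = α * r₁ + β * r₂ := by
      simp only [map_add, map_smul, hKℓ k₁ hk₁, hKℓ k₂ hk₂, smul_eq_mul]
      linear_combination (ℓ v) * hαβ
    rw [e1]
    rw [e2] at hz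
    have hz' : (α * r₁) • k₁ + (β * r₂) • k₂ = (α * r₁ + β * r₂) • y := by
      have : α • (v + r₁ • k₁) + β • (v + r₂ • k₂)
          = v + ((α * r₁) • k₁ + (β * r₂) • k₂) := by
        simp only [smul_add, smul_smul]
        nth_rewrite 3 [← one_smul ℝ v]
        rw [← hαβ, add_smul]
        abel
      rw [this] at hz
      exact add_left_cancel hz
    congr 1
    rcases hr₁.eq_or_lt' with h1 | h1
    · simp [h1]
    rcases hr₂.eq_or_lt' with h2 | h2
    · have h3 : (α * r₁) ≠ 0 := (mul_pos hα h1).ne'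
      simp only [h2, mul_zero, zero_smul, add_zero] at hz'
      rw [smul_right_injective _ h3 hz']
    · have hs : 0 < α * r₁ + β * r₂ := by positivity
      have : k₁ = y := by
        refine hyK.2 hk₁ hk₂ ⟨α * r₁ / (α * r₁ + β * r₂), β * r₂ / (α * r₁ + β * r₂),
          by positivity, by positivity, by field_simp, ?_⟩
        apply smul_right_injective _ hs.ne'
        simp only [smul_add, smul_smul]
        rw [mul_div_cancel₀ _ hs.ne', mul_div_cancel₀ _ hs.ne', hz']
      rw [this]
  have hwR : w - v = (ℓ w - ℓ v) • y := sub_eq_iff_eq_add'.2 hwF.2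
  have hFseg : F = segment ℝ v w := by
    apply Subset.antisymm
    · rintro p ⟨hp, hpe⟩
      refine ⟨1 - (ℓ p - ℓ v) / (ℓ w - ℓ v), (ℓ p - ℓ v) / (ℓ w - ℓ v), ?_, ?_, by ring, ?_⟩
      · have := hwmax' p ⟨hp, hpe⟩
        rw [sub_nonneg, div_le_one hRpos]
        linarith
      · exact div_nonneg (hℓnn p hp) hRpos.le
      · calc _ = v + ((ℓ p - ℓ v) / (ℓ w - ℓ v)) • (w - v) := by module
          _ = v + (ℓ p - ℓ v) • y := by rw [hwR, smul_smul, div_mul_cancel₀ _ hRpos.ne']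
          _ = p := hpe.symm
    · rintro p ⟨α, β, hα, hβ, hαβ, rfl⟩
      refine ⟨convex_convexHull ℝ V hvV.1 hwF.1 hα hβ hαβ, ?_⟩
      have e : ℓ (α • v + β • w) - ℓ v = β * (ℓ w - ℓ v) := by
        simp only [map_add, map_smul, smul_eq_mul]
        linear_combination (ℓ v) * hαβ
      rw [e, ← smul_smul, ← hwR, ← sub_eq_zero, ← eq_sub_iff_add_eq.2 hαβ |>.symm]
      module
  have hwv : v ≠ w := fun e => by rw [e] at hRpos; simp at hRpos
  have hwvert : IsVertexOf (convexHull ℝ V) w := by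
    refine hFext.trans ⟨by simpa using hwF, ?_⟩
    rintro p hp q hq z hz ⟨α, β, hα, hβ, hαβ, rfl⟩
    have hz : α • p + β • q = w := hz
    have h1 := hwmax' p hp
    have h2 := hwmax' q hq
    have h3 : α * ℓ p + β * ℓ q = ℓ w := by rw [← hz]; simp
    have h4 : ℓ p = ℓ w := eq_left_of_combo_eq_max hα hβ hαβ h1 h2 h3
    exact hp.2.trans (h4 ▸ hwF.2.symm)
  refine ⟨w, extremePoints_convexHull_subset (isExtreme_singleton.1 hwvert),
    ⟨hwv, hv, hwvert, hFseg ▸ hFext⟩, ?_⟩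
  rw [hwF.2]
  simp only [map_add, map_smul, smul_eq_mul]
  have := mul_pos hRpos hcy
  linarith

/-- Version of `exists_edge_up` inside the face where `g` is maximal: the functional `c + N g` with
`N` large improves along an edge only if `g` is constant on it. -/
theorem exists_edge_up_face {d : ℕ} {V : Set (Fin d → ℝ)} (hV : V.Finite) {v x : Fin d → ℝ}
    (hv : IsVertexOf (convexHull ℝ V) v) (g c : (Fin d → ℝ) →ₗ[ℝ] ℝ)
    (hg : ∀ u ∈ V, g u ≤ g v) (hx : x ∈ V) (hgx : g x = g v) (hvx : c v < c x) :
    ∃ w ∈ V, IsEdgeOf (convexHull ℝ V) v w ∧ g w = g v ∧ c v < c w := by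
  -- A weight `N` for which no generator off the face `g = g v` improves on `v`.
  have hN : ∀ᶠ N : ℝ in Filter.atTop, ∀ u ∈ V, g u < g v → c u + N * g u ≤ c v + N * g v := by
    rw [Filter.eventually_all_finite hV]
    intro u _
    filter_upwards [Filter.eventually_ge_atTop ((c u - c v) / (g v - g u))] with N hN hlt
    rw [div_le_iff₀ (sub_pos.2 hlt)] at hN
    linarith
  obtain ⟨N, hN⟩ := hN.exists
  obtain ⟨w, hwV, hedge, hw⟩ := exists_edge_up hV hv (c + N • g) hx (by simp [hgx, hvx])
  simp only [LinearMap.add_apply, LinearMap.smul_apply, smul_eq_mul] at hw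
  have hgw : g w = g v := by
    refine (hg w hwV).antisymm (not_lt.1 fun hlt => ?_)
    have := hN w hwV hlt
    linarith
  refine ⟨w, hwV, hedge, hgw, ?_⟩
  rw [hgw] at hw
  linarith

/-- The maximizer of `c` over `V` is unique, since a second one would give an edge in the optimal face,
on which `c` is constant. -/
theorem exists_strict_max {d : ℕ} {V : Set (Fin d → ℝ)} (hV : V.Finite) (hne : V.Nonempty)
    (c : (Fin d → ℝ) →ₗ[ℝ] ℝ)
    (hc : ∀ v w, IsEdgeOf (convexHull ℝ V) v w → c v ≠ c w) :
    ∃ t ∈ V, IsVertexOf (convexHull ℝ V) t ∧ ∀ u ∈ V, u ≠ t → c u < c t := by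
  have hcomp : IsCompact (convexHull ℝ V) := hV.isCompact_convexHull ℝ
  have hextfin : ((convexHull ℝ V).extremePoints ℝ).Finite :=
    hV.subset extremePoints_convexHull_subset
  have heq : convexHull ℝ ((convexHull ℝ V).extremePoints ℝ) = convexHull ℝ V := by
    rw [← (hextfin.isClosed_convexHull ℝ).closure_eq]
    exact closure_convexHull_extremePoints hcomp (convex_convexHull ℝ V)
  obtain ⟨t, ht, hmax⟩ := hextfin.exists_maximalFor c _
    (hcomp.extremePoints_nonempty hne.convexHull)
  have hle : ∀ u ∈ V, c u ≤ c t := by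
    intro u hu
    refine le_on_convexHull (V := (convexHull ℝ V).extremePoints ℝ) (fun e he => ?_) u
      (heq.symm ▸ subset_convexHull ℝ V hu)
    rcases le_total (c e) (c t) with h | h
    · exact h
    · exact hmax he h
  have htv : IsVertexOf (convexHull ℝ V) t := isExtreme_singleton.2 ht
  refine ⟨t, extremePoints_convexHull_subset ht, htv, fun u hu hut => ?_⟩
  refine (hle u hu).lt_of_ne fun e => ?_
  obtain ⟨χ, hχ⟩ := geometric_hahn_banach_point_point (E := Fin d → ℝ) (Ne.symm hut)
  obtain ⟨w, -, hedge, hw, -⟩ := exists_edge_up_face hV htv c χ.toLinearMap hle hu e hχ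
  exact hc _ _ hedge hw.symm

/-! ### A functional adapted to a small vertex set -/

/-- The functional `ψ` whose shadow path avoids `X`. If there is none, evaluation at `t - s` and at
`x - s`, `x ∈ X`, is injective on functionals, hence bijective by dimension; so some `ψ` is constant
on `{s, t}` and smaller on `X`. By assumption `ψ ≤ ψ s` on the polytope, and the face `ψ = ψ s` is
then the segment `[s, t]`. -/
theorem exists_functional {d : ℕ} {V : Set (Fin d → ℝ)}
    (hspan : affineSpan ℝ V = ⊤) {s t : Fin d → ℝ} (hs : s ∈ V) (ht : t ∈ V)
    (f : (Fin d → ℝ) →ₗ[ℝ] ℝ) (hfs : ∀ u ∈ V, f s ≤ f u) (hft : ∀ u ∈ V, f u ≤ f t)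
    (hst : f s < f t) (hedge : ¬ IsExtreme ℝ (convexHull ℝ V) (segment ℝ s t))
    (X : Finset (Fin d → ℝ)) (hX : X.card < d) :
    ∃ ψ : (Fin d → ℝ) →ₗ[ℝ] ℝ, ψ s = ψ t ∧ (∀ x ∈ X, ψ x ≤ ψ s) ∧ ∃ u ∈ V, ψ s < ψ u := by
  by_contra! H
  -- Evaluation at the `X.card + 1 ≤ d` vectors `t - s` and `x - s`, for `x ∈ X`.
  let ev : ((Fin d → ℝ) →ₗ[ℝ] ℝ) →ₗ[ℝ] (Option X → ℝ) :=
    { toFun := fun L o => o.elim (L (t - s)) (fun x => L (x - s))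
      map_add' := fun _ _ => by ext o; cases o <;> rfl
      map_smul' := fun _ _ => by ext o; cases o <;> rfl }
  have hinj : Function.Injective ev := by
    rw [← LinearMap.ker_eq_bot, LinearMap.ker_eq_bot']
    intro L h0
    have hL' : L s = L t := by
      have : L (t - s) = 0 := congrFun h0 none
      rw [map_sub] at this
      linarith
    have h0' : ∀ x ∈ X, L x = L s := by
      intro x hx
      have : L (x - s) = 0 := congrFun h0 (some ⟨x, hx⟩)
      rw [map_sub] at this
      linarith
    have hV : ∀ u ∈ V, L u = L s := fun u hu =>
      (H L hL' (fun x hx => (h0' x hx).le) u hu).antisymm (by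
        simpa using H (-L) (by simpa using hL') (fun x hx => by simp [h0' x hx]) u hu)
    have hker : vectorSpan ℝ V ≤ LinearMap.ker L := by
      rw [vectorSpan_def, Submodule.span_le]
      rintro _ ⟨a, ha, b, hb, rfl⟩
      simp [hV a ha, hV b hb]
    rwa [AffineSubspace.vectorSpan_eq_top_of_affineSpan_eq_top ℝ _ _ hspan, top_le_iff,
      LinearMap.ker_eq_top] at hker
  have hsurj : Function.Surjective ev := by
    refine (LinearMap.injective_iff_surjective_of_finrank_eq_finrank
      (le_antisymm (LinearMap.finrank_le_finrank_of_injective hinj) ?_)).1 hinj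
    simp only [Module.finrank_linearMap, Module.finrank_fintype_fun_eq_card, Fintype.card_option,
      Fintype.card_coe, Fintype.card_fin, Module.finrank_self]
    omega
  obtain ⟨ψ, hψ⟩ := hsurj (fun o => o.elim 0 (fun _ => -1))
  have hψX : ∀ x ∈ X, ψ x = ψ s - 1 := by
    intro x hx
    have : ψ (x - s) = -1 := congrFun hψ (some ⟨x, hx⟩)
    rw [map_sub] at this
    linarith
  have hψst : ψ s = ψ t := by
    have : ψ (t - s) = 0 := congrFun hψ none
    rw [map_sub] at this
    linarith
  have hψP := le_on_convexHull (H ψ hψst (fun x hx => by rw [hψX x hx]; linarith))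
  have hsP := subset_convexHull ℝ V hs
  have htP := subset_convexHull ℝ V ht
  -- On the face `ψ = ψ s`, every functional constant on `{s, t}` is at most its value at `s`.
  have hle : ∀ p ∈ convexHull ℝ V, ψ p = ψ s → ∀ L : (Fin d → ℝ) →ₗ[ℝ] ℝ, L s = L t →
      L p ≤ L s := by
    intro p hp hψp L hL
    -- Adding a large multiple of `ψ` makes `L` at most `L s` on `X`, without changing it at `p`.
    have h := le_on_convexHull (H (L + (∑ x ∈ X, |L x - L s|) • ψ) (by simp [hL, hψst]) (by
      intro x hx
      have h1 := Finset.single_le_sum (f := fun x => |L x - L s|) (fun _ _ => abs_nonneg _) hx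
      have h2 := le_abs_self (L x - L s)
      simp only [LinearMap.add_apply, LinearMap.smul_apply, smul_eq_mul, hψX x hx]
      linarith)) p hp
    simp only [LinearMap.add_apply, LinearMap.smul_apply, smul_eq_mul, hψp] at h
    linarith
  have hface : segment ℝ s t = {p | p ∈ convexHull ℝ V ∧ ψ p = ψ s} := by
    apply Subset.antisymm
    · rintro p ⟨α, β, hα, hβ, hαβ, rfl⟩
      refine ⟨convex_convexHull ℝ V hsP htP hα hβ hαβ, ?_⟩
      simp only [map_add, map_smul, smul_eq_mul, ← hψst]
      rw [← add_mul, hαβ, one_mul]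
    · rintro p ⟨hp, hψp⟩
      have hmem : p - s ∈ Submodule.span ℝ {t - s} := by
        by_contra hn
        obtain ⟨L, hL, hLs⟩ := Submodule.exists_le_ker_of_notMem hn
        have hLst : L s = L t := by
          have := hLs (Submodule.mem_span_singleton_self (t - s))
          rw [LinearMap.mem_ker, map_sub] at this
          linarith
        have h1 := hle p hp hψp L hLst
        have h2 := hle p hp hψp (-L) (by simp [hLst])
        simp only [LinearMap.neg_apply, neg_le_neg_iff] at h2
        exact hL (by rw [map_sub]; linarith)
      obtain ⟨r, hr⟩ := Submodule.mem_span_singleton.1 hmem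
      have hfr : f p - f s = r * (f t - f s) := by
        rw [← map_sub, ← hr, map_smul, map_sub, smul_eq_mul]
      have h1 := le_on_convexHull hft p hp
      have h2 := le_on_convexHull (c := -f) (r := - f s) (by simpa using hfs) p hp
      simp only [LinearMap.neg_apply, neg_le_neg_iff] at h2
      have hpos := sub_pos.2 hst
      refine ⟨1 - r, r, ?_, ?_, by ring, ?_⟩
      · by_contra! hneg
        nlinarith
      · by_contra! hneg
        nlinarith
      · calc _ = s + r • (t - s) := by module
          _ = p := by rw [hr]; abel
  apply hedge
  rw [hface]
  refine ⟨fun p hp => hp.1, ?_⟩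
  rintro p hp q hq z ⟨-, hz⟩ ⟨α, β, hα, hβ, hαβ, rfl⟩
  exact ⟨hp, eq_left_of_combo_eq_max hα hβ hαβ (hψP p hp) (hψP q hq) (by simpa using hz)⟩

/-! ### Shadow paths -/

/-- `v` is a vertex of `conv V` that maximizes `ψ + r f` for some real `r`; it then lies over the upper
boundary of the planar projection of `conv V` under `(f, ψ)`. Maximality is only tested on `V`. -/
def IsShadowVertex {d : ℕ} (V : Set (Fin d → ℝ)) (f ψ : (Fin d → ℝ) →ₗ[ℝ] ℝ)
    (v : Fin d → ℝ) : Prop :=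
  IsVertexOf (convexHull ℝ V) v ∧ ∃ r : ℝ, ∀ u ∈ V, ψ u + r * f u ≤ ψ v + r * f v

/-- One pivot of the parametric simplex method: increase `r` until a second point becomes optimal, then
move along an edge of the optimal face. -/
theorem IsShadowVertex.step {d : ℕ} {V : Set (Fin d → ℝ)} (hV : V.Finite)
    {f ψ : (Fin d → ℝ) →ₗ[ℝ] ℝ} {v t : Fin d → ℝ} (hv : IsShadowVertex V f ψ v) (ht : t ∈ V)
    (hvt : f v < f t) :
    ∃ w, IsShadowVertex V f ψ w ∧ IsEdgeOf (convexHull ℝ V) v w ∧ f v < f w := by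
  obtain ⟨hvert, r, hr⟩ := hv
  -- `r'` is the largest parameter for which `v` is still optimal.
  obtain ⟨x, ⟨hxV, hfx⟩, hmin⟩ := (hV.subset (sep_subset V fun u => f v < f u)).exists_minimalFor
    (fun u => (ψ v - ψ u) / (f u - f v)) _ ⟨t, ht, hvt⟩
  set r' := (ψ v - ψ x) / (f x - f v) with hr'
  have hxeq : ψ x + r' * f x = ψ v + r' * f v := by
    have := sub_pos.2 hfx
    have h : r' * (f x - f v) = ψ v - ψ x := div_mul_cancel₀ _ this.ne'
    linarith
  have hrr' : r ≤ r' := by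
    rw [hr', le_div_iff₀ (sub_pos.2 hfx)]
    linarith [hr x hxV]
  have hopt : ∀ u ∈ V, ψ u + r' * f u ≤ ψ v + r' * f v := by
    intro u hu
    rcases lt_or_ge (f v) (f u) with hlt | hge
    · have h : r' ≤ (ψ v - ψ u) / (f u - f v) := by
        rcases le_total ((ψ v - ψ x) / (f x - f v)) ((ψ v - ψ u) / (f u - f v)) with h | h
        · exact h
        · exact hmin ⟨hu, hlt⟩ h
      rw [le_div_iff₀ (sub_pos.2 hlt)] at h
      linarith
    · have := hr u hu
      nlinarith
  obtain ⟨w, -, hedge, hgw, hfw⟩ := exists_edge_up_face hV hvert (ψ + r' • f) f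
    (by simpa using hopt) hxV (by simpa using hxeq) hfx
  refine ⟨w, ⟨hedge.2.2.1, r', fun u hu => ?_⟩, hedge, hfw⟩
  simp only [LinearMap.add_apply, LinearMap.smul_apply, smul_eq_mul] at hgw
  rw [hgw]
  exact hopt u hu

/-- The minimizer of `f` is optimal for `ψ + r f` once `r` is sufficiently negative. -/
theorem isShadowVertex_source {d : ℕ} {V : Set (Fin d → ℝ)} (hV : V.Finite)
    (f ψ : (Fin d → ℝ) →ₗ[ℝ] ℝ) {s : Fin d → ℝ} (hs : IsVertexOf (convexHull ℝ V) s)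
    (hmin : ∀ u ∈ V, u ≠ s → f s < f u) : IsShadowVertex V f ψ s := by
  refine ⟨hs, ?_⟩
  have hN : ∀ᶠ r : ℝ in Filter.atBot, ∀ u ∈ V, ψ u + r * f u ≤ ψ s + r * f s := by
    rw [Filter.eventually_all_finite hV]
    intro u hu
    by_cases hus : u = s
    · simp [hus]
    have hlt := sub_pos.2 (hmin u hu hus)
    filter_upwards [Filter.eventually_le_atBot ((ψ s - ψ u) / (f u - f s))] with N hN
    rw [le_div_iff₀ hlt] at hN
    linarith
  exact hN.exists

/-- Fewer than `d` vertices other than `s`, `t` do not separate `s` from `t` when `[s, t]` is not a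
face. -/
theorem reflTransGen_avoiding {d : ℕ} {V : Set (Fin d → ℝ)} (hV : V.Finite)
    (hspan : affineSpan ℝ V = ⊤) {s t : Fin d → ℝ} (hs : s ∈ V) (ht : t ∈ V)
    (hsv : IsVertexOf (convexHull ℝ V) s) (f : (Fin d → ℝ) →ₗ[ℝ] ℝ)
    (hfs : ∀ u ∈ V, u ≠ s → f s < f u) (hft : ∀ u ∈ V, u ≠ t → f u < f t)
    (hst : s ≠ t) (hedge : ¬ IsExtreme ℝ (convexHull ℝ V) (segment ℝ s t))
    (X : Finset (Fin d → ℝ)) (hX : X.card < d) (hsX : s ∉ X) (htX : t ∉ X) :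
    Relation.ReflTransGen
      (fun a b => (IsEdgeOf (convexHull ℝ V) a b ∧ f a < f b) ∧ b ∉ X) s t := by
  obtain ⟨ψ, hψst, hψX, x, hxV, hψx⟩ := exists_functional hspan hs ht f
    (fun u hu => by
      by_cases h : u = s
      · rw [h]
      · exact (hfs u hu h).le)
    (fun u hu => by
      by_cases h : u = t
      · rw [h]
      · exact (hft u hu h).le) (hft s hs hst) hedge X hX
  have hmem : ∀ v, IsShadowVertex V f ψ v → v ∈ V := fun v hv =>
    extremePoints_convexHull_subset (isExtreme_singleton.1 hv.1)
  have havoid : ∀ v, IsShadowVertex V f ψ v → v ∉ X := by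
    intro v hv hvX
    have h1 := hfs v (hmem v hv) (fun e => hsX (e ▸ hvX))
    have h2 := hft v (hmem v hv) (fun e => htX (e ▸ hvX))
    have h3 := hψX v hvX
    obtain ⟨-, r, hr⟩ := hv
    have hrs := hr s hs
    have hrt := hr t ht
    have hrx := hr x hxV
    -- Optimality against `s` and `t` forces the parameter to vanish.
    have hr0 : 0 ≤ r := by by_contra! h; nlinarith
    have hr1 : r ≤ 0 := by by_contra! h; nlinarith
    obtain rfl : r = 0 := le_antisymm hr1 hr0
    linarith
  refine reflTransGen_of_climb hV f _ t (IsShadowVertex V f ψ) hmem (fun v hv hvt => ?_) s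
    (isShadowVertex_source hV f ψ hsv hfs)
  obtain ⟨w, hw, hvw, hlt⟩ := hv.step hV ht (hft v (hmem v hv) hvt)
  exact ⟨w, hw, ⟨⟨hvw, hlt⟩, havoid w hw⟩, hlt⟩

/-! ### The Holt–Klee theorem -/

/-- **Holt–Klee theorem.**  If `P ⊆ ℝ^d` is a `d`-dimensional polytope and
`φ` is an affine function that is not constant on any edge of `P`, then the
digraph of `P` oriented by `φ` admits `d` monotone paths from the unique
`φ`-minimizing vertex `s` to the unique `φ`-maximizing vertex `t`, any two of
which share no vertex other than `s` and `t`. -/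
theorem holt_klee_polytope (d : ℕ) (V : Set (Fin d → ℝ)) (hVfin : V.Finite)
    (hspan : affineSpan ℝ V = ⊤)
    (P : Set (Fin d → ℝ)) (hP : P = convexHull ℝ V)
    (φ : (Fin d → ℝ) →ᵃ[ℝ] ℝ)
    (hφ : ∀ v w, IsEdgeOf P v w → φ v ≠ φ w) :
    ∃ s t : Fin d → ℝ, IsVertexOf P s ∧ IsVertexOf P t ∧
      (∀ u, IsVertexOf P u → u ≠ s → φ s < φ u) ∧
      (∀ u, IsVertexOf P u → u ≠ t → φ u < φ t) ∧
      ∃ Paths : Fin d → List (Fin d → ℝ),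
        (∀ i, IsDipath (PolyArc P φ) (Paths i) s t) ∧
        (∀ i j, i ≠ j → ∀ x, x ∈ Paths i → x ∈ Paths j → x = s ∨ x = t) := by
  classical
  subst hP
  have hφf : ∀ a, φ a = φ.linear a + φ 0 := fun a => congrFun φ.decomp a
  have hlt : ∀ a b, φ a < φ b ↔ φ.linear a < φ.linear b := by
    intro a b
    rw [hφf a, hφf b, add_lt_add_iff_right]
  have hne : V.Nonempty := by
    rw [← affineSpan_nonempty ℝ, hspan]
    exact ⟨0, trivial⟩
  have hφ' : ∀ v w, IsEdgeOf (convexHull ℝ V) v w → φ.linear v ≠ φ.linear w := by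
    intro v w h e
    exact hφ v w h (by rw [hφf v, hφf w, e])
  obtain ⟨t, htV, htv, hft⟩ := exists_strict_max hVfin hne φ.linear hφ'
  obtain ⟨s, hsV, hsv, hfs⟩ := exists_strict_max hVfin hne (-φ.linear) (fun v w h => by
    simpa using hφ' v w h)
  simp only [LinearMap.neg_apply, neg_lt_neg_iff] at hfs
  have hmem : ∀ u, IsVertexOf (convexHull ℝ V) u → u ∈ V := fun u hu =>
    extremePoints_convexHull_subset (isExtreme_singleton.1 hu)
  refine ⟨s, t, hsv, htv, fun u hu hus => (hlt _ _).2 (hfs u (hmem u hu) hus),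
    fun u hu hut => (hlt _ _).2 (hft u (hmem u hu) hut), ?_⟩
  by_cases hst : s = t
  · subst hst
    exact ⟨fun _ => [s], fun _ => ⟨by simp, by simp, by simp, List.IsChain.singleton _, by simp⟩,
      fun _ _ _ x hx _ => .inl (by simpa using hx)⟩
  by_cases hedge : IsExtreme ℝ (convexHull ℝ V) (segment ℝ s t)
  · have harc : PolyArc (convexHull ℝ V) φ s t :=
      ⟨⟨hst, hsv, htv, hedge⟩, (hlt _ _).2 (hft s hsV hst)⟩
    exact ⟨fun _ => [s, t], fun _ => ⟨by simp, by simp, by simp,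
      List.IsChain.cons_cons harc (.singleton _), by simp [hst]⟩,
      fun _ _ _ x hx _ => by simpa using hx⟩
  refine exists_disjoint_dipaths d (hVfin.toFinset \ {s, t}) s t (by simp) (by simp) hst
    (PolyArc (convexHull ℝ V) φ) φ (fun a b h => h.2) (fun a b h => ?_) (fun h => hedge h.1.2.2.2)
    (fun X hXI hX => ?_)
  · by_cases hbt : b = t
    · exact .inr hbt
    left
    have hbs : b ≠ s := by
      rintro rfl
      have h1 := (hlt _ _).1 h.2
      have h2 := hfs a (hmem a h.1.2.1) h.1.1
      exact lt_asymm h1 h2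
    simp [hmem b h.1.2.2.1, hbs, hbt]
  · refine Relation.ReflTransGen.mono (fun a b h => ⟨⟨h.1.1, (hlt _ _).2 h.1.2⟩, h.2⟩) _ _
      (reflTransGen_avoiding hVfin hspan hsV htV hsv φ.linear hfs hft hst hedge X hX
      (fun h => ?_) (fun h => ?_))
    · simpa using hXI h
    · simpa using hXI h
end

section
/- Let M be an oriented matroid program of rank r on [n] ∪ {f,g}, let M̂ be an extension of M/g by an element h in general position, and let x_h be the sink of K_h, i.e. the unique node admitting a vector X of M̂∖f with X_+ = x_h ∪ {h} and X_− = ∅. Then there is a monotone path in K_f from the source of K_f to x_h all of whose vertices are vertices of K_{[f,−h]}, and a monotone path in K_f from x_h to the sink of K_f all of whose vertices are vertices of K_{[−h,−f]}; the only vertex these two paths have in common is x_h, and their concatenation is a monotone path in K_f from the source of K_f to the sink of K_f. -/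
/-!
The path to `xh` is a parametric simplex path: it follows the optima of the objectives in the
pencil spanned by `f` and `h`. Write `ε` for a sign. A node `x` carries a vector that is `+` on
`x ∪ {h}` and `ε` at `f` exactly when it is optimal for some member of half of that pencil;
`ε = 1` gives the vertices of `K_{[-h,-f]}` and `ε = -1` those of `K_{[f,-h]}`. Starting at `xh`
both halves are traversed until an optimum of `f` is reached, the sink for `ε = 1` and the source
for `ε = -1`; the second path is then reversed.

For the step from a node `x` (`exists_crossing`) linear programming duality in `Mhat` gives a
complementary pair: a vector `X` supported in `x ∪ {f, h}` with `f ↦ ε` and `h ↦ 1`, and a covector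
`W`, nonnegative on `x`, with `f ↦ ε` and `h ↦ -1`. General position of `h` makes `W`, up to sign,
the only nonzero covector vanishing on `supp X ∖ {f, h}` (`line_unique`), so `W` is the direction
of an edge leaving `x`; its other end `x'` exists because nonnegative cocircuits of `M ∖ f` have
`g` in their support (`step`), and it again contains `supp X ∖ {f, h}`, so it carries the required
vector (`isVector_of_conf`). Orthogonality of the vectors `X` to the directions `W` shows that a
node is entered from at most one other node (`crossing_inj`) and that `xh` is never entered
(`no_crossing_to`). Hence an injective orbit in a finite set cannot go on forever
(`path_following`); it ends at an optimum of `f`, which is unique since `f` is in general position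
(`fEnd_unique`) and which is the given sink or source (`exists_step`).

A node on both paths carries vectors with opposite signs at `f`; eliminating `f` gives a vector of
`Mhat ∖ f` that identifies the node as `xh`. So the two paths meet only in `xh` and concatenate.

The first three parts supply the general theory starting from the covector axioms: Minty's painting
lemma, duality between vectors and covectors, conformal decomposition, minors, and strong duality.
-/

open Set

/-- A *sign vector* on an ambient type `α`. -/
abbrev SignVec (α : Type*) := α → SignType

namespace OMHK

variable {α : Type*}

/-- The support of a sign vector. -/
def supp (X : SignVec α) : Set α := {e | X e ≠ 0}

/-- A sign vector is nonnegative if every entry is `+` or `0`. -/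
def Nonneg (X : SignVec α) : Prop := ∀ e, X e = 1 ∨ X e = 0

/-- Composition of sign vectors: `(X ∘ Y)ₑ = Xₑ` if `Xₑ ≠ 0`, else `Yₑ`. -/
def compose (X Y : SignVec α) : SignVec α := fun e => if X e ≠ 0 then X e else Y e

/-- The separation set `S(X,Y) = {e : Xₑ = -Yₑ ≠ 0}`. -/
def sep (X Y : SignVec α) : Set α := {e | X e = -(Y e) ∧ X e ≠ 0}

/-- Two sign vectors are orthogonal if `S(X,Y)` and `S(X,-Y)` are both empty
or both nonempty. -/
def Orth (X Y : SignVec α) : Prop :=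
  (sep X Y = ∅ ∧ sep X (-Y) = ∅) ∨ (sep X Y ≠ ∅ ∧ sep X (-Y) ≠ ∅)

/-- An oriented matroid with finite ground set inside the ambient type `α`,
presented by its collection of covectors (sign vectors supported on the
ground set), satisfying the covector axioms. -/
structure OrientedMatroid (α : Type*) where
  ground : Set α
  ground_finite : ground.Finite
  covectors : Set (SignVec α)
  supp_subset : ∀ X ∈ covectors, supp X ⊆ ground
  zero_mem : (0 : SignVec α) ∈ covectors
  neg_mem : ∀ X ∈ covectors, -X ∈ covectors
  compose_mem : ∀ X ∈ covectors, ∀ Y ∈ covectors, compose X Y ∈ covectors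
  elim : ∀ X ∈ covectors, ∀ Y ∈ covectors, ∀ e ∈ sep X Y,
    ∃ Z ∈ covectors, Z e = 0 ∧ ∀ e' ∉ sep X Y, Z e' = compose X Y e'

namespace OrientedMatroid

variable (M : OrientedMatroid α)

/-- A cocircuit: a nonzero covector of minimal support. -/
def IsCocircuit (X : SignVec α) : Prop :=
  X ∈ M.covectors ∧ X ≠ 0 ∧
    ∀ Y ∈ M.covectors, Y ≠ 0 → supp Y ⊆ supp X → supp Y = supp X

/-- A vector: a sign vector supported on the ground set and orthogonal to
every covector. -/
def IsVector (X : SignVec α) : Prop :=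
  supp X ⊆ M.ground ∧ ∀ Y ∈ M.covectors, Orth X Y

/-- A circuit: a nonzero vector of minimal support. -/
def IsCircuit (X : SignVec α) : Prop :=
  M.IsVector X ∧ X ≠ 0 ∧
    ∀ Y, M.IsVector Y → Y ≠ 0 → supp Y ⊆ supp X → supp Y = supp X

/-- A set is independent if it is contained in the ground set and contains
the support of no circuit. -/
def Indep (A : Set α) : Prop :=
  A ⊆ M.ground ∧ ∀ X, M.IsCircuit X → ¬ supp X ⊆ A

/-- The rank of a subset: maximal cardinality of an independent subset of it. -/
noncomputable def rk (A : Set α) : ℕ :=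
  sSup {k | ∃ I : Set α, I ⊆ A ∧ M.Indep I ∧ I.ncard = k}

/-- The rank of the oriented matroid. -/
noncomputable def rank : ℕ := M.rk M.ground

end OrientedMatroid

open scoped Classical in
/-- Zero out the coordinates in `A` (the restriction to the complement of `A`,
in ambient terms). -/
noncomputable def restrictAway (A : Set α) (X : SignVec α) : SignVec α :=
  fun e => if e ∈ A then 0 else X e

/-- `M'` is the deletion `M ∖ A`: its ground set is `M.ground ∖ A` and its
circuits are the circuits of `M` vanishing on `A`. -/
def IsDeletion (M : OrientedMatroid α) (A : Set α) (M' : OrientedMatroid α) : Prop :=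
  M'.ground = M.ground \ A ∧
  ∀ X, M'.IsCircuit X ↔ (M.IsCircuit X ∧ ∀ e ∈ A, X e = 0)

/-- `M'` is the contraction `M / A`: its ground set is `M.ground ∖ A` and its
circuits are the nonzero minimal-support members of the restrictions away from
`A` of circuits of `M`. -/
def IsContraction (M : OrientedMatroid α) (A : Set α) (M' : OrientedMatroid α) : Prop :=
  M'.ground = M.ground \ A ∧
  ∀ X, M'.IsCircuit X ↔
    (X ≠ 0 ∧ (∃ Y, M.IsCircuit Y ∧ X = restrictAway A Y) ∧
      ∀ Z : SignVec α, Z ≠ 0 → (∃ Y, M.IsCircuit Y ∧ Z = restrictAway A Y) →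
        supp Z ⊆ supp X → supp Z = supp X)

/-- `Nh` is an extension of `N` by the new element `h` (same rank). -/
def IsExtension (N : OrientedMatroid α) (h : α) (Nh : OrientedMatroid α) : Prop :=
  h ∉ N.ground ∧ Nh.ground = insert h N.ground ∧ Nh.rank = N.rank ∧
    IsDeletion Nh {h} N

/-- The element `h` is in general position in `Nh`: every circuit whose support
contains `h` has support of cardinality `rank + 1`. -/
def GenPos (Nh : OrientedMatroid α) (h : α) : Prop :=
  ∀ X, Nh.IsCircuit X → X h ≠ 0 → (supp X).ncard = Nh.rank + 1

/-- A directed path from `a` to `b` in the digraph with arc relation `A`. -/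
def IsDipath {V : Type*} (A : V → V → Prop) (p : List V) (a b : V) : Prop :=
  p ≠ [] ∧ p.head? = some a ∧ p.getLast? = some b ∧ p.Chain' A ∧ p.Nodup

/-! ### Oriented matroid programs.
We fix the ambient type `ℕ`; the ground set of a program is `[n] ∪ {f, g}`
where `[n] = {0, …, n-1}`, the objective element is `f = n` and the right hand
side element is `g = n + 1`.  Extensions use the fresh element `h = n + 2`. -/

/-- `[n] = {0, …, n - 1}`. -/
def nset (n : ℕ) : Set ℕ := {k | k < n}

/-- `M` is an oriented matroid program of rank `r` on `[n] ∪ {f, g}`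
(`f = n`, `g = n + 1`), where `Mf` denotes the deletion `M ∖ f`:
(i) every nonnegative cocircuit of `M ∖ f` has `g` in its support;
(ii) for every `e ∈ [n]` there is a nonnegative cocircuit `Y` of `M ∖ f`
with `Y e = +`; (iii) every circuit of `M` whose support contains `f` has
support of cardinality `r + 1`. -/
def IsProgram (M Mf : OrientedMatroid ℕ) (n r : ℕ) : Prop :=
  M.ground = nset n ∪ {n, n + 1} ∧ M.rank = r ∧ IsDeletion M {n} Mf ∧
  (∀ Y, Mf.IsCocircuit Y → Nonneg Y → Y (n + 1) ≠ 0) ∧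
  (∀ e, e < n → ∃ Y, Mf.IsCocircuit Y ∧ Nonneg Y ∧ Y e = 1) ∧
  (∀ X, M.IsCircuit X → X n ≠ 0 → (supp X).ncard = r + 1)

/-- A node of the program: `[n] ∖ supp Y` for `Y` a nonnegative cocircuit of
`M ∖ f`. -/
def IsNode (Mf : OrientedMatroid ℕ) (n : ℕ) (v : Set ℕ) : Prop :=
  ∃ Y, Mf.IsCocircuit Y ∧ Nonneg Y ∧ v = nset n \ supp Y

/-- The arc relation of the digraph `K_f`: `v → v'` when `v, v'` are adjacent
nodes and the witnessing cocircuit `Y''` of `M` (zero at `g`, positive on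
`v' ∖ v`, negative on `v ∖ v'`, zero on `v ∩ v'`, nonzero at `f`) satisfies
`Y'' f = Y'' e` for `e ∈ v ∖ v'`. -/
def Arc (M Mf : OrientedMatroid ℕ) (n r : ℕ) (v v' : Set ℕ) : Prop :=
  IsNode Mf n v ∧ IsNode Mf n v' ∧ v ≠ v' ∧ M.rk (v ∩ v') = r - 2 ∧
  ∃ Y, M.IsCocircuit Y ∧ Y (n + 1) = 0 ∧
    (∀ e ∈ v' \ v, Y e = 1) ∧ (∀ e ∈ v \ v', Y e = -1) ∧
    (∀ e ∈ v ∩ v', Y e = 0) ∧ Y n ≠ 0 ∧ (∀ e ∈ v \ v', Y n = Y e)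

/-- The source of `K_f`: the node with no incoming arcs. -/
def IsSource (M Mf : OrientedMatroid ℕ) (n r : ℕ) (v : Set ℕ) : Prop :=
  IsNode Mf n v ∧ ∀ u, ¬ Arc M Mf n r u v

/-- The sink of `K_f`: the node with no outgoing arcs. -/
def IsSink (M Mf : OrientedMatroid ℕ) (n r : ℕ) (v : Set ℕ) : Prop :=
  IsNode Mf n v ∧ ∀ u, ¬ Arc M Mf n r v u

/-- The arc relation of the digraph `K_h` determined by an extension `M̂` of
`M/g` by `h = n + 2` in general position; `Mhf` denotes `M̂ ∖ f`. -/
def ArcH (M Mf Mhf : OrientedMatroid ℕ) (n r : ℕ) (v v' : Set ℕ) : Prop :=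
  IsNode Mf n v ∧ IsNode Mf n v' ∧ v ≠ v' ∧ M.rk (v ∩ v') = r - 2 ∧
  ∃ Y, Mhf.IsCocircuit Y ∧
    (∀ e ∈ v' \ v, Y e = 1) ∧ (∀ e ∈ v \ v', Y e = -1) ∧
    (∀ e ∈ v ∩ v', Y e = 0) ∧ Y (n + 2) ≠ 0 ∧ (∀ e ∈ v \ v', Y (n + 2) = Y e)

/-- `x` is a vertex of the subdigraph `K_{[f,-h]}`: there is a vector `X` of
`M̂` with `X₊ = x ∪ {h}` and `X₋ = {f}`. -/
def InKfmh (Mhat : OrientedMatroid ℕ) (n : ℕ) (x : Set ℕ) : Prop :=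
  ∃ X, Mhat.IsVector X ∧ {e | X e = 1} = x ∪ {n + 2} ∧ {e | X e = -1} = {n}

/-- `x` is a vertex of the subdigraph `K_{[-h,-f]}`: there is a vector `X` of
`M̂` with `X₊ = x ∪ {f, h}` and `X₋ = ∅`. -/
def InKmhmf (Mhat : OrientedMatroid ℕ) (n : ℕ) (x : Set ℕ) : Prop :=
  ∃ X, Mhat.IsVector X ∧ {e | X e = 1} = x ∪ {n, n + 2} ∧ {e | X e = -1} = (∅ : Set ℕ)

end OMHK

namespace OMHK

open OrientedMatroid

/-! ### Signs and orthogonality -/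

theorem orth_iff {α : Type*} (X Y : SignVec α) :
    Orth X Y ↔ ((∃ e, X e * Y e = 1) ↔ ∃ e, X e * Y e = -1) := by
  have h1 : sep X Y ≠ ∅ ↔ ∃ e, X e * Y e = -1 := by
    rw [← nonempty_iff_ne_empty]
    refine exists_congr fun e => ?_
    simp only [sep, Set.mem_ofPred_eq]
    generalize X e = a
    generalize Y e = b
    revert a b; decide
  have h2 : sep X (-Y) ≠ ∅ ↔ ∃ e, X e * Y e = 1 := by
    rw [← nonempty_iff_ne_empty]
    refine exists_congr fun e => ?_
    simp only [sep, Set.mem_ofPred_eq, Pi.neg_apply]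
    generalize X e = a
    generalize Y e = b
    revert a b; decide
  unfold Orth
  rw [← h1, ← h2]
  tauto

theorem orth_zero_of_nonneg {α : Type*} {X Y : SignVec α} (h : Orth X Y)
    (hn : ∀ e, 0 ≤ X e * Y e) (e : α) : X e * Y e = 0 := by
  rw [orth_iff] at h
  have h3 : ¬ ∃ e, X e * Y e = -1 := by
    rintro ⟨i, hi⟩
    have := hn i
    rw [hi] at this
    exact absurd this (by decide)
  have h4 : X e * Y e ≠ 1 := fun h5 => h3 (h.1 ⟨e, h5⟩)
  have := hn e
  revert this h4
  generalize X e * Y e = a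
  revert a; decide

theorem orth_neg_right {α : Type*} {X Y : SignVec α} (h : Orth X Y) : Orth X (-Y) := by
  unfold Orth at *
  rw [neg_neg]
  tauto

theorem orth_comm {α : Type*} {X Y : SignVec α} (h : Orth X Y) : Orth Y X := by
  rw [orth_iff] at *
  simpa only [mul_comm] using h

theorem orth_zero_of_nonpos {α : Type*} {X Y : SignVec α} (h : Orth X Y)
    (hn : ∀ e, X e * Y e ≤ 0) (e : α) : X e * Y e = 0 := by
  have := orth_zero_of_nonneg (orth_neg_right h) (fun i => by
    have := hn i
    revert this
    simp only [Pi.neg_apply]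
    generalize X i = a
    generalize Y i = b
    revert a b; decide) e
  revert this
  simp only [Pi.neg_apply]
  generalize X e = a
  generalize Y e = b
  revert a b; decide

theorem orth_of_forall {α : Type*} {X Y : SignVec α}
    (h1 : (∀ e, 0 ≤ X e * Y e) → ∀ e, X e * Y e = 0)
    (h2 : (∀ e, X e * Y e ≤ 0) → ∀ e, X e * Y e = 0) : Orth X Y := by
  rw [orth_iff]
  constructor
  · rintro ⟨e, he⟩
    by_contra hc
    push Not at hc
    have := h1 (fun i => by
      have := hc i
      revert this
      generalize X i * Y i = a
      revert a; decide) e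
    rw [he] at this
    exact absurd this (by decide)
  · rintro ⟨e, he⟩
    by_contra hc
    push Not at hc
    have := h2 (fun i => by
      have := hc i
      revert this
      generalize X i * Y i = a
      revert a; decide) e
    rw [he] at this
    exact absurd this (by decide)

/-- `Z` is conformal to `Y` when every nonzero entry of `Z` is the entry of `Y`. -/
def Conf {α : Type*} (Z Y : SignVec α) : Prop := ∀ i, Z i = 0 ∨ Z i = Y i

/-! ### Consequences of the covector axioms -/

/-- Elimination in additive form: `Z` behaves like a real combination `X + Y` in which the
entry `e` cancels. -/
theorem elim_add {α : Type*} (M : OrientedMatroid α) {X Y : SignVec α} (hX : X ∈ M.covectors)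
    (hY : Y ∈ M.covectors) (e : α) (h : X e = -(Y e)) (h0 : X e ≠ 0) :
    ∃ Z ∈ M.covectors, Z e = 0 ∧ (∀ i, Y i = 0 → Z i = X i) ∧ (∀ i, X i = 0 → Z i = Y i) ∧
      (∀ i, X i = Y i → Z i = X i) ∧ (∀ i, X i ≠ -(Y i) → Z i ≠ 0) := by
  obtain ⟨Z, hZ, hZe, hZ'⟩ := M.elim X hX Y hY e ⟨h, h0⟩
  have key : ∀ i, (¬ (X i = -(Y i) ∧ X i ≠ 0)) → Z i = if X i ≠ 0 then X i else Y i :=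
    fun i hi => hZ' i hi
  refine ⟨Z, hZ, hZe, ?_, ?_, ?_, ?_⟩ <;> intro i <;> have := key i <;> revert this <;>
    generalize X i = a <;> generalize Y i = b <;> generalize Z i = c <;> revert a b c <;> decide

/-- Elimination in subtractive form: `Z` behaves like a real combination `X - Y` in which the
entry `e` cancels. -/
theorem elim_sub {α : Type*} (M : OrientedMatroid α) {X Y : SignVec α} (hX : X ∈ M.covectors)
    (hY : Y ∈ M.covectors) (e : α) (h : X e = Y e) (h0 : X e ≠ 0) :
    ∃ Z ∈ M.covectors, Z e = 0 ∧ (∀ i, Y i = 0 → Z i = X i) ∧ (∀ i, X i = 0 → Z i = -(Y i)) ∧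
      (∀ i, X i = -(Y i) → Z i = X i) ∧ (∀ i, X i ≠ Y i → Z i ≠ 0) := by
  obtain ⟨Z, hZ, h1, h2, h3, h4, h5⟩ := elim_add M hX (M.neg_mem Y hY) e
    (by rw [Pi.neg_apply, neg_neg, h]) h0
  refine ⟨Z, hZ, h1, fun i hi => h2 i (by simp [hi]), fun i hi => h3 i hi,
    fun i hi => h4 i (by simpa using hi), fun i hi => h5 i (by simpa using hi)⟩

/-- A sign vector that fails to be orthogonal to some covector vanishing on `G` meets one of
them, up to sign, only in products of the same sign. -/
theorem exists_bad {α : Type*} (M : OrientedMatroid α) (G : Set α) (X : SignVec α)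
    (h : ¬ ∀ Y ∈ M.covectors, (∀ i ∈ G, Y i = 0) → Orth X Y) :
    ∃ Y ∈ M.covectors, (∀ i ∈ G, Y i = 0) ∧ (∀ e, 0 ≤ X e * Y e) ∧ ∃ e, X e * Y e ≠ 0 := by
  push Not at h
  obtain ⟨Y, hY, hG, hO⟩ := h
  by_contra hc
  push Not at hc
  refine hO (orth_of_forall (hc Y hY hG) fun hn e => ?_)
  have := hc (-Y) (M.neg_mem Y hY) (fun i hi => by simp [hG i hi]) (fun i => by
    have := hn i
    revert this
    simp only [Pi.neg_apply]
    generalize X i = a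
    generalize Y i = b
    revert a b; decide) e
  revert this
  simp only [Pi.neg_apply]
  generalize X e = a
  generalize Y e = b
  revert a b; decide

/-- Two covectors with opposite signs at `c` that weakly agree with `X` elsewhere can be
eliminated at `c`, so they do not meet `X` off `c`. -/
theorem lift_aux {α : Type*} (M : OrientedMatroid α) (G : Set α) (c : α) (X : SignVec α)
    (hX : ∀ Y ∈ M.covectors, (∀ i ∈ G, Y i = 0) → Y c = 0 → Orth X Y)
    {Y Y' : SignVec α} (hY : Y ∈ M.covectors) (hY' : Y' ∈ M.covectors)
    (hG : ∀ i ∈ G, Y i = 0) (hG' : ∀ i ∈ G, Y' i = 0)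
    (hc : Y c = -(Y' c)) (h0 : Y c ≠ 0) (hn : ∀ i, i ≠ c → 0 ≤ X i * Y i)
    (hn' : ∀ i, i ≠ c → 0 ≤ X i * Y' i) (e : α) (hec : e ≠ c) (he : X e * Y e ≠ 0) : False := by
  obtain ⟨Z, hZ, h1, h2, h3, h4, h5⟩ := elim_add M hY hY' c hc h0
  have hO := hX Z hZ (fun i hi => by rw [h2 i (hG' i hi), hG i hi]) h1
  have key : ∀ i, i ≠ c → 0 ≤ X i * Z i ∧ (X i * Y i ≠ 0 → X i * Z i ≠ 0) := by
    intro i hi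
    have a1 := hn i hi
    have a2 := hn' i hi
    have a3 := h2 i
    have a4 := h3 i
    have a5 := h4 i
    revert a1 a2 a3 a4 a5
    generalize X i = x
    generalize Y i = y
    generalize Y' i = y'
    generalize Z i = z
    revert x y y' z; decide
  refine (key e hec).2 he (orth_zero_of_nonneg hO (fun i => ?_) e)
  by_cases hi : i = c
  · rw [hi, h1, mul_zero]
  · exact (key i hi).1

/-- A sign vector orthogonal to the covectors vanishing at `c` extends over `c`. -/
theorem lift_one {α : Type*} [DecidableEq α] (M : OrientedMatroid α) (G : Set α) (c : α)
    (X : SignVec α) (hXc : X c = 0)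
    (hX : ∀ Y ∈ M.covectors, (∀ i ∈ G, Y i = 0) → Y c = 0 → Orth X Y) :
    ∃ s, ∀ Y ∈ M.covectors, (∀ i ∈ G, Y i = 0) → Orth (Function.update X c s) Y := by
  by_contra hcon
  rw [not_exists] at hcon
  have bad : ∀ s, ∃ Y ∈ M.covectors, (∀ i ∈ G, Y i = 0) ∧ Y c ≠ 0 ∧ 0 ≤ s * Y c ∧
      (∀ i, i ≠ c → 0 ≤ X i * Y i) ∧ (s * Y c ≠ 0 ∨ ∃ e, e ≠ c ∧ X e * Y e ≠ 0) := by
    intro s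
    obtain ⟨Y, hY, hG, hn, e, he⟩ := exists_bad M G _ (hcon s)
    have hn' : ∀ i, i ≠ c → 0 ≤ X i * Y i := fun i hi => by
      have := hn i
      rwa [Function.update_of_ne hi] at this
    have hor : s * Y c ≠ 0 ∨ ∃ e, e ≠ c ∧ X e * Y e ≠ 0 := by
      by_cases hec : e = c
      · left; subst hec; simpa using he
      · right; exact ⟨e, hec, by rwa [Function.update_of_ne hec] at he⟩
    refine ⟨Y, hY, hG, ?_, by simpa using hn c, hn', hor⟩
    intro hYc
    have hO := orth_zero_of_nonneg (hX Y hY hG hYc) (fun i => by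
      by_cases hi : i = c
      · rw [hi, hYc, mul_zero]
      · exact hn' i hi)
    rcases hor with h | ⟨e, -, he⟩
    · exact h (by rw [hYc, mul_zero])
    · exact he (hO e)
  obtain ⟨Y0, hY0, hG0, hc0, -, hn0, hor⟩ := bad 0
  obtain ⟨Y1, hY1, hG1, hc1, hs1, hn1, -⟩ := bad 1
  obtain ⟨Y2, hY2, hG2, hc2, hs2, hn2, -⟩ := bad (-1)
  obtain ⟨e, hec, he⟩ : ∃ e, e ≠ c ∧ X e * Y0 e ≠ 0 := by
    rcases hor with h | h
    · simp at h
    · exact h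
  have h12 : Y0 c = -(Y1 c) ∨ Y0 c = -(Y2 c) := by
    revert hc0 hc1 hc2 hs1 hs2
    generalize Y0 c = a
    generalize Y1 c = b
    generalize Y2 c = d
    revert a b d; decide
  rcases h12 with h | h
  · exact lift_aux M G c X hX hY0 hY1 hG0 hG1 h hc0 hn0 hn1 e hec he
  · exact lift_aux M G c X hX hY0 hY2 hG0 hG2 h hc0 hn0 hn2 e hec he

/-- A sign vector orthogonal to the covectors vanishing on `G` extends over `G` to a vector. -/
theorem lift_set {α : Type*} (M : OrientedMatroid α) (G : Set α) (hGf : G.Finite)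
    (hGM : G ⊆ M.ground) :
    ∀ X : SignVec α, supp X ⊆ M.ground → (∀ i ∈ G, X i = 0) →
    (∀ Y ∈ M.covectors, (∀ i ∈ G, Y i = 0) → Orth X Y) →
    ∃ X', M.IsVector X' ∧ ∀ i, i ∉ G → X' i = X i := by
  classical
  induction G, hGf using Set.Finite.induction_on with
  | empty => intro X hs _ h; exact ⟨X, ⟨hs, fun Y hY => h Y hY (by simp)⟩, fun _ _ => rfl⟩
  | @insert c G hcG _ ih =>
    intro X hs h0 h
    obtain ⟨s, hS⟩ := lift_one M G c X (h0 c (by simp)) (fun Y hY hG hc => h Y hY (by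
      intro i hi
      rcases hi with rfl | hi
      · exact hc
      · exact hG i hi))
    obtain ⟨X', hX', hag⟩ := ih (fun i hi => hGM (by simp [hi])) (Function.update X c s)
      (fun i hi => by
        by_cases hic : i = c
        · rw [hic]; exact hGM (by simp)
        · apply hs
          simpa [supp, Function.update_of_ne hic] using hi)
      (fun i hi => by
        have hic : i ≠ c := fun h => hcG (h ▸ hi)
        rw [Function.update_of_ne hic]
        exact h0 i (by simp [hi])) hS
    refine ⟨X', hX', fun i hi => ?_⟩
    rw [Set.mem_insert_iff, not_or] at hi
    rw [hag i hi.2, Function.update_of_ne hi.1]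

/-- The painting lemma (Farkas, Minty). On `B` both sign vectors must weakly agree with `τ`; on
`G` the covector vanishes and the vector is free; elsewhere the vector vanishes and the covector
is free. -/
theorem painting {α : Type*} (M : OrientedMatroid α) (τ : α → SignType) (e : α) (B : Set α)
    (hB : B.Finite) :
    ∀ G : Set α, e ∉ B → e ∉ G → insert e B ⊆ M.ground → (∀ b ∈ insert e B, τ b ≠ 0) →
      (∀ b ∈ B, b ∉ G) →
    (∃ Y ∈ M.covectors, Y e = τ e ∧ (∀ b ∈ B, 0 ≤ τ b * Y b) ∧ ∀ c ∈ G, Y c = 0) ∨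
    (∃ X, M.IsVector X ∧ X e = τ e ∧ (∀ b ∈ B, 0 ≤ τ b * X b) ∧
      ∀ i, i ≠ e → i ∉ B → i ∉ G → X i = 0) := by
  classical
  induction B, hB using Set.Finite.induction_on with
  | empty =>
    intro G _ heG hg hτ _
    by_cases hY : ∃ Y ∈ M.covectors, Y e ≠ 0 ∧ ∀ c ∈ G, Y c = 0
    · left
      obtain ⟨Y, hY, hYe, hYG⟩ := hY
      have hτe := hτ e (by simp)
      have : Y e = τ e ∨ (-Y) e = τ e := by
        revert hYe hτe
        rw [Pi.neg_apply]
        generalize Y e = a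
        generalize τ e = b
        revert a b; decide
      rcases this with h | h
      · exact ⟨Y, hY, h, by simp, hYG⟩
      · exact ⟨-Y, M.neg_mem Y hY, h, by simp, fun c hc => by simp [hYG c hc]⟩
    · right
      push Not at hY
      have heM : e ∈ M.ground := hg (by simp)
      obtain ⟨X, hX, hag⟩ := lift_set M (G ∩ M.ground) (M.ground_finite.inter_of_right G)
        (Set.inter_subset_right) (Pi.single e (τ e))
        (fun i hi => by
          by_cases h : i = e
          · rw [h]; exact heM
          · simp [supp, Pi.single_apply, h] at hi)
        (fun i hi => by
          have : i ≠ e := fun h => heG (h ▸ hi.1)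
          simp [this])
        (fun Y hYc hYG => by
          have hYe : Y e = 0 := by
            by_contra hne
            obtain ⟨c, hc, hc0⟩ := hY Y hYc hne
            exact hc0 (hYG c ⟨hc, M.supp_subset Y hYc hc0⟩)
          have h0 : ∀ i, (Pi.single e (τ e) : SignVec α) i * Y i = 0 := by
            intro i
            by_cases h : i = e
            · rw [h, hYe, mul_zero]
            · simp [h]
          exact orth_of_forall (fun _ => h0) (fun _ => h0))
      refine ⟨X, hX, ?_, by simp, fun i hi _ hiG => ?_⟩
      · rw [hag e (fun h => heG h.1)]; simp
      · rw [hag i (fun h => hiG h.1)]; simp [hi]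
  | @insert b B hbB _ ih =>
    intro G heB heG hg hτ hBG
    rw [Set.mem_insert_iff, not_or] at heB
    have hg' : insert e B ⊆ M.ground := fun i hi => hg (by
      rcases hi with h | h
      · left; exact h
      · right; right; exact h)
    have hτ' : ∀ i ∈ insert e B, τ i ≠ 0 := fun i hi => hτ i (by
      rcases hi with h | h
      · left; exact h
      · right; right; exact h)
    have hbG : b ∉ G := hBG b (by simp)
    rcases ih G heB.2 heG hg' hτ' (fun i hi => hBG i (by simp [hi])) with
      ⟨Y1, hY1, hY1e, hY1B, hY1G⟩ | ⟨X, hX, hXe, hXB, hX0⟩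
    swap
    · right
      have hXb : X b = 0 := hX0 b (Ne.symm heB.1) hbB hbG
      refine ⟨X, hX, hXe, ?_, ?_⟩
      · intro i hi
        rcases hi with rfl | hi
        · rw [hXb, mul_zero]
        · exact hXB i hi
      · intro i hie hiB hiG
        exact hX0 i hie (fun h => hiB (by simp [h])) hiG
    rcases ih (insert b G) heB.2 (by simp [heB.1, heG]) hg' hτ' (fun i hi h => by
      rcases h with h | h
      · exact hbB (h ▸ hi)
      · exact hBG i (by simp [hi]) h) with
      ⟨Y2, hY2, hY2e, hY2B, hY2G⟩ | ⟨X2, hX2, hX2e, hX2B, hX20⟩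
    · left
      refine ⟨Y2, hY2, hY2e, ?_, fun c hc => hY2G c (by simp [hc])⟩
      intro i hi
      rcases hi with rfl | hi
      · rw [hY2G i (by simp), mul_zero]
      · exact hY2B i hi
    by_cases hy : 0 ≤ τ b * Y1 b
    · left
      refine ⟨Y1, hY1, hY1e, ?_, hY1G⟩
      intro i hi
      rcases hi with rfl | hi
      · exact hy
      · exact hY1B i hi
    by_cases hx : 0 ≤ τ b * X2 b
    · right
      refine ⟨X2, hX2, hX2e, ?_, ?_⟩
      · intro i hi
        rcases hi with rfl | hi
        · exact hx
        · exact hX2B i hi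
      · intro i hie hiB hiG
        rw [Set.mem_insert_iff, not_or] at hiB
        exact hX20 i hie hiB.2 (by simp [hiB.1, hiG])
    exfalso
    have hz := orth_zero_of_nonneg (hX2.2 Y1 hY1) (fun i => by
      by_cases hie : i = e
      · rw [hie, hX2e, hY1e]
        generalize τ e = t
        revert t; decide
      by_cases hib : i = b
      · subst hib
        revert hy hx
        generalize τ i = t
        generalize Y1 i = y
        generalize X2 i = x
        revert t y x; decide
      by_cases hiB : i ∈ B
      · have a1 := hX2B i hiB
        have a2 := hY1B i hiB
        have a3 := hτ' i (by simp [hiB])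
        revert a1 a2 a3
        generalize τ i = t
        generalize Y1 i = y
        generalize X2 i = x
        revert t y x; decide
      by_cases hiG : i ∈ G
      · rw [hY1G i hiG, mul_zero]
      · rw [hX20 i hie hiB (by simp [hib, hiG]), zero_mul]) e
    rw [hX2e, hY1e] at hz
    have := hτ e (by simp)
    revert hz this
    generalize τ e = t
    revert t; decide

/-- The painting lemma with the distinguished element counted among the constrained ones. -/
theorem painting' {α : Type*} (M : OrientedMatroid α) (τ : α → SignType) (e : α) (B G : Set α)
    (heB : e ∈ B) (hBM : B ⊆ M.ground) (hτ : ∀ b ∈ B, τ b ≠ 0) (hBG : ∀ b ∈ B, b ∉ G) :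
    (∃ Y ∈ M.covectors, Y e = τ e ∧ (∀ b ∈ B, 0 ≤ τ b * Y b) ∧ ∀ c ∈ G, Y c = 0) ∨
    (∃ X, M.IsVector X ∧ X e = τ e ∧ (∀ b ∈ B, 0 ≤ τ b * X b) ∧
      ∀ i, i ∉ B → i ∉ G → X i = 0) := by
  have hins : insert e (B \ {e}) = B := by
    rw [Set.insert_sdiff_singleton, Set.insert_eq_of_mem heB]
  have hte : ∀ t : SignType, 0 ≤ t * t := by decide
  rcases painting M τ e (B \ {e}) ((M.ground_finite.subset hBM).subset Set.sdiff_subset) G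
    (by simp) (hBG e heB) (by rw [hins]; exact hBM) (by rw [hins]; exact hτ)
    (fun b hb => hBG b hb.1) with ⟨Y, hY, hYe, hYB, hYG⟩ | ⟨X, hX, hXe, hXB, hX0⟩
  · refine Or.inl ⟨Y, hY, hYe, fun b hb => ?_, hYG⟩
    by_cases h : b = e
    · rw [h, hYe]; exact hte _
    · exact hYB b ⟨hb, h⟩
  · refine Or.inr ⟨X, hX, hXe, fun b hb => ?_, fun i hi hiG => ?_⟩
    · by_cases h : b = e
      · rw [h, hXe]; exact hte _
      · exact hXB b ⟨hb, h⟩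
    · exact hX0 i (fun h => hi (h ▸ heB)) (fun h => hi h.1) hiG

/-- A sign vector all of whose nonzero entries are attained by conformal covectors is a
covector. -/
theorem mem_of_conf_cover {α : Type*} (M : OrientedMatroid α) (Y : SignVec α)
    (hs : supp Y ⊆ M.ground)
    (h : ∀ e ∈ supp Y, ∃ Z ∈ M.covectors, Z e = Y e ∧ Conf Z Y) : Y ∈ M.covectors := by
  have key : ∀ s : Set α, s.Finite → s ⊆ supp Y →
      ∃ Z ∈ M.covectors, Conf Z Y ∧ ∀ i ∈ s, Z i = Y i := by
    intro s hs
    induction s, hs using Set.Finite.induction_on with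
    | empty => exact fun _ => ⟨0, M.zero_mem, fun _ => Or.inl rfl, by simp⟩
    | @insert a s _ _ ih =>
      intro hsub
      obtain ⟨Z, hZ, hZc, hZs⟩ := ih (fun i hi => hsub (by simp [hi]))
      obtain ⟨W, hW, hWa, hWc⟩ := h a (hsub (by simp))
      refine ⟨compose Z W, M.compose_mem Z hZ W hW, fun i => ?_, fun i hi => ?_⟩
      · unfold compose
        split_ifs
        · exact hZc i
        · exact hWc i
      · unfold compose
        rcases hi with rfl | hi
        · split_ifs with h1
          · exact (hZc i).resolve_left h1
          · exact hWa
        · have : Z i ≠ 0 := by rw [hZs i hi]; exact hsub (by simp [hi])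
          rw [if_pos this, hZs i hi]
  obtain ⟨Z, hZ, hZc, hZs⟩ := key _ (M.ground_finite.subset hs) subset_rfl
  have : Z = Y := by
    funext i
    by_cases hi : Y i = 0
    · rcases hZc i with h | h
      · rw [h, hi]
      · exact h
    · exact hZs i hi
  exact this ▸ hZ

theorem conf_of_sign {α : Type*} {Z Y : SignVec α} (h1 : ∀ b ∈ supp Y, 0 ≤ Y b * Z b)
    (h2 : ∀ b, b ∉ supp Y → Z b = 0) : Conf Z Y := by
  intro i
  by_cases hi : i ∈ supp Y
  · have a1 := h1 i hi
    have a2 : Y i ≠ 0 := hi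
    revert a1 a2
    generalize Y i = y
    generalize Z i = z
    revert y z; decide
  · exact Or.inl (h2 i hi)

/-- A sign vector on the ground set orthogonal to all vectors is a covector. -/
theorem mem_of_orth_vectors {α : Type*} (M : OrientedMatroid α) (Y : SignVec α)
    (hs : supp Y ⊆ M.ground) (h : ∀ X, M.IsVector X → Orth X Y) : Y ∈ M.covectors := by
  refine mem_of_conf_cover M Y hs fun e he => ?_
  rcases painting' M Y e (supp Y) (supp Y)ᶜ he hs (fun b hb => hb) (fun b hb h => h hb) with
    ⟨Z, hZ, hZe, hZB, hZG⟩ | ⟨X, hX, hXe, hXB, -⟩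
  · exact ⟨Z, hZ, hZe, conf_of_sign hZB hZG⟩
  · exfalso
    have := orth_zero_of_nonneg (h X hX) (fun i => by
      by_cases hi : i ∈ supp Y
      · rw [mul_comm]; exact hXB i hi
      · have : Y i = 0 := by simpa [supp] using hi
        rw [this, mul_zero]) e
    rw [hXe] at this
    have h2 : Y e ≠ 0 := he
    revert this h2
    generalize Y e = y
    revert y; decide

theorem orth_compose {α : Type*} {X X' Y : SignVec α} (h : Orth X Y) (h' : Orth X' Y) :
    Orth (compose X X') Y := by
  by_cases hz : ∀ e, X e * Y e = 0
  · have : ∀ e, compose X X' e * Y e = X' e * Y e := by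
      intro e
      have := hz e
      revert this
      unfold compose
      generalize X e = a
      generalize X' e = b
      generalize Y e = c
      revert a b c; decide
    rw [orth_iff] at *
    simpa only [this] using h'
  · have key : ∀ e s, s ≠ 0 → X e * Y e = s → compose X X' e * Y e = s := by
      intro e s
      unfold compose
      generalize X e = a
      generalize X' e = b
      generalize Y e = c
      revert a b c s; decide
    rw [orth_iff] at h ⊢
    push Not at hz
    obtain ⟨e, he⟩ := hz
    have h1 : ∃ e, X e * Y e = 1 := by
      by_cases h1 : X e * Y e = 1
      · exact ⟨e, h1⟩
      · refine h.2 ⟨e, ?_⟩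
        revert he h1
        generalize X e * Y e = a
        revert a; decide
    obtain ⟨i, hi⟩ := h1
    obtain ⟨j, hj⟩ := h.1 ⟨i, hi⟩
    exact ⟨fun _ => ⟨j, key j _ (by decide) hj⟩, fun _ => ⟨i, key i _ (by decide) hi⟩⟩

theorem isVector_neg {α : Type*} {M : OrientedMatroid α} {X : SignVec α} (h : M.IsVector X) :
    M.IsVector (-X) := by
  refine ⟨fun i hi => h.1 (by simpa [supp] using hi), fun Y hY => ?_⟩
  exact orth_comm (orth_neg_right (orth_comm (h.2 Y hY)))

/-- Vector elimination, obtained from the painting lemma. -/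
theorem isVector_elim {α : Type*} (M : OrientedMatroid α) {X Y : SignVec α} (hX : M.IsVector X)
    (hY : M.IsVector Y) (e : α) (he : e ∈ sep X Y) :
    ∃ Z, M.IsVector Z ∧ Z e = 0 ∧ ∀ e', e' ∉ sep X Y → Z e' = compose X Y e' := by
  classical
  -- the target off the separation set
  set T : SignVec α := fun i => if i ∈ sep X Y then 0 else compose X Y i with hT
  have hTs : supp T ⊆ M.ground := by
    intro i hi
    by_contra hc
    have h1 : X i = 0 := by by_contra h; exact hc (hX.1 h)
    have h2 : Y i = 0 := by by_contra h; exact hc (hY.1 h)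
    apply hi
    simp [hT, compose, h1, h2]
  have hprod : ∀ i, i ∉ sep X Y → ∀ w, 0 ≤ T i * w →
      (0 ≤ X i * w ∧ 0 ≤ Y i * w ∧ (T i * w ≠ 0 → X i * w ≠ 0 ∨ Y i * w ≠ 0)) := by
    intro i hi w
    have hTi : T i = compose X Y i := by simp [hT, hi]
    rw [hTi]
    have hi' : ¬ (X i = -(Y i) ∧ X i ≠ 0) := hi
    revert hi' w
    unfold compose
    generalize X i = a
    generalize Y i = b
    revert a b; decide
  have hsT : ∀ i, i ∈ sep X Y → T i = 0 := fun i hi => by simp [hT, hi]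
  -- every entry of the target is attained by a vector vanishing at `e`
  have step : ∀ p ∈ supp T, ∃ Z, M.IsVector Z ∧ Z p = T p ∧ Z e = 0 ∧
      ∀ i, i ∉ sep X Y → Z i = 0 ∨ Z i = T i := by
    intro p hp
    have hpS : p ∉ sep X Y := fun h => hp (hsT p h)
    rcases painting' M T p (supp T) (sep X Y \ {e}) hp hTs (fun b hb => hb)
      (fun b hb h => hb (hsT b h.1)) with ⟨W, hW, hWp, hWB, hWG⟩ | ⟨Z, hZ, hZp, hZB, hZ0⟩
    · exfalso
      have hWn : ∀ i, i ∉ sep X Y → 0 ≤ T i * W i := by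
        intro i hi
        by_cases h : i ∈ supp T
        · exact hWB i h
        · have : T i = 0 := by simpa [supp] using h
          rw [this, zero_mul]
      have hpp : T p * W p ≠ 0 := by
        rw [hWp]
        have : T p ≠ 0 := hp
        revert this
        generalize T p = t
        revert t; decide
      have hoff : ∀ i, i ≠ e → 0 ≤ X i * W i ∧ 0 ≤ Y i * W i := by
        intro i hi
        by_cases h : i ∈ sep X Y
        · rw [hWG i ⟨h, hi⟩, mul_zero, mul_zero]; exact ⟨le_rfl, le_rfl⟩
        · exact ⟨(hprod i h _ (hWn i h)).1, (hprod i h _ (hWn i h)).2.1⟩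
      have hpe := (hprod p hpS _ (hWn p hpS)).2.2 hpp
      have hcon : ∀ V : SignVec α, M.IsVector V → (∀ i, i ≠ e → 0 ≤ V i * W i) →
          0 ≤ V e * W e → ∀ i, V i * W i = 0 := fun V hV h1 h2 =>
        orth_zero_of_nonneg (hV.2 W hW) (fun i => by
          by_cases hi : i = e
          · rw [hi]; exact h2
          · exact h1 i hi)
      have hXe := hcon X hX (fun i hi => (hoff i hi).1)
      have hYe := hcon Y hY (fun i hi => (hoff i hi).2)
      have hes : X e = -(Y e) := he.1
      have hcase : (0 ≤ X e * W e ∧ (X e * W e = 0 → 0 ≤ Y e * W e)) ∨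
          (0 ≤ Y e * W e ∧ (Y e * W e = 0 → 0 ≤ X e * W e)) := by
        revert hes
        generalize X e = a
        generalize Y e = b
        generalize W e = c
        revert a b c; decide
      have h0 : X e ≠ 0 := he.2
      have hWe : W e = 0 := by
        rcases hcase with ⟨h1, -⟩ | ⟨h1, -⟩
        · have := hXe h1 e
          revert this h0
          generalize X e = a
          generalize W e = c
          revert a c; decide
        · have := hYe h1 e
          revert this h0 hes
          generalize X e = a
          generalize Y e = b
          generalize W e = c
          revert a b c; decide
      rcases hpe with h | h
      · exact h (hXe (by rw [hWe, mul_zero]) p)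
      · exact h (hYe (by rw [hWe, mul_zero]) p)
    · refine ⟨Z, hZ, hZp, hZ0 e (fun h => h (hsT e he)) (by simp), fun i hi => ?_⟩
      by_cases h : i ∈ supp T
      · have a1 := hZB i h
        have a2 : T i ≠ 0 := h
        revert a1 a2
        generalize T i = y
        generalize Z i = z
        revert y z; decide
      · exact Or.inl (hZ0 i h (fun h => hi h.1))
  have key : ∀ s : Set α, s.Finite → s ⊆ supp T →
      ∃ Z, M.IsVector Z ∧ Z e = 0 ∧ (∀ i, i ∉ sep X Y → Z i = 0 ∨ Z i = T i) ∧
        ∀ i ∈ s, Z i = T i := by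
    intro s hs
    induction s, hs using Set.Finite.induction_on with
    | empty =>
      refine fun _ => ⟨0, ⟨by simp [supp], fun Y hY => ?_⟩, rfl, fun _ _ => Or.inl rfl, by simp⟩
      rw [orth_iff]; simp
    | @insert a s _ _ ih =>
      intro hsub
      obtain ⟨Z, hZ, hZe, hZc, hZs⟩ := ih (fun i hi => hsub (by simp [hi]))
      obtain ⟨W, hW, hWa, hWe, hWc⟩ := step a (hsub (by simp))
      refine ⟨compose Z W, ⟨fun i hi => ?_, fun U hU => orth_compose (hZ.2 U hU) (hW.2 U hU)⟩,
        ?_, fun i hi => ?_, fun i hi => ?_⟩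
      · by_contra hc
        have h1 : Z i = 0 := by by_contra h; exact hc (hZ.1 h)
        have h2 : W i = 0 := by by_contra h; exact hc (hW.1 h)
        apply hi
        simp [compose, h1, h2]
      · simp [compose, hZe, hWe]
      · unfold compose
        split_ifs
        · exact hZc i hi
        · exact hWc i hi
      · have hiS : i ∉ sep X Y := fun h => hsub hi (hsT i h)
        unfold compose
        rcases hi with rfl | hi
        · split_ifs with h1
          · exact (hZc i hiS).resolve_left h1
          · exact hWa
        · have : Z i ≠ 0 := by rw [hZs i hi]; exact hsub (by simp [hi])
          rw [if_pos this, hZs i hi]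
  obtain ⟨Z, hZ, hZe, hZc, hZs⟩ := key _ (M.ground_finite.subset hTs) subset_rfl
  refine ⟨Z, hZ, hZe, fun i hi => ?_⟩
  have hTi : T i = compose X Y i := by simp [hT, hi]
  rw [← hTi]
  by_cases h : T i = 0
  · rcases hZc i hi with h' | h'
    · rw [h', h]
    · exact h'
  · exact hZs i h

/-- The dual oriented matroid: its covectors are the vectors of `M`. -/
def dualOM {α : Type*} (M : OrientedMatroid α) : OrientedMatroid α where
  ground := M.ground
  ground_finite := M.ground_finite
  covectors := {X | M.IsVector X}
  supp_subset := fun _ hX => hX.1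
  zero_mem := ⟨by simp [supp], fun Y _ => by rw [orth_iff]; simp⟩
  neg_mem := fun _ hX => isVector_neg hX
  compose_mem := fun X hX Y hY => ⟨fun i hi => by
    by_contra hc
    have h1 : X i = 0 := by by_contra h; exact hc (hX.1 h)
    have h2 : Y i = 0 := by by_contra h; exact hc (hY.1 h)
    exact hi (by simp [compose, h1, h2]),
    fun U hU => orth_compose (hX.2 U hU) (hY.2 U hU)⟩
  elim := fun _ hX _ hY e he => by
    obtain ⟨Z, hZ, h1, h2⟩ := isVector_elim M hX hY e he
    exact ⟨Z, hZ, h1, h2⟩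

/-- Every nonzero entry of a covector is attained by a conformal cocircuit. -/
theorem exists_conf_cocircuit {α : Type*} (M : OrientedMatroid α) (Y : SignVec α)
    (hY : Y ∈ M.covectors) (e : α) (he : Y e ≠ 0) :
    ∃ C, M.IsCocircuit C ∧ C e = Y e ∧ Conf C Y := by
  have hfin : ∀ X ∈ M.covectors, (supp X).Finite := fun X hX =>
    M.ground_finite.subset (M.supp_subset X hX)
  -- a conformal covector through `e` of least support size
  have hex : ∃ k, ∃ V ∈ M.covectors, V e = Y e ∧ Conf V Y ∧ (supp V).ncard = k :=
    ⟨_, Y, hY, rfl, fun _ => Or.inr rfl, rfl⟩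
  classical
  obtain ⟨V, hV, hVe, hVc, hVk⟩ := Nat.find_spec hex
  have hmin : ∀ U ∈ M.covectors, U e = Y e → Conf U Y → ¬ (supp U ⊂ supp V) := by
    intro U hU hUe hUc hss
    refine Nat.find_min hex ?_ ⟨U, hU, hUe, hUc, rfl⟩
    rw [← hVk]
    exact Set.ncard_lt_ncard hss (hfin V hV)
  have hVe0 : V e ≠ 0 := by rw [hVe]; exact he
  have hsmall : ∀ U ∈ M.covectors, U e = V e → ¬ (supp U ⊂ supp V) := by
    intro U hU hUe hss
    have hex2 : ∃ k, ∃ U ∈ M.covectors, U e = V e ∧ supp U ⊂ supp V ∧ (sep V U).ncard = k :=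
      ⟨_, U, hU, hUe, hss, rfl⟩
    obtain ⟨W, hW, hWe, hWs, hWk⟩ := Nat.find_spec hex2
    by_cases hsep : ∃ a, a ∈ sep V W
    · obtain ⟨a, ha⟩ := hsep
      obtain ⟨Z, hZ, hZa, hZ1⟩ := M.elim V hV W hW a ha
      have hZV : ∀ i, i ∉ sep V W → Z i = V i := by
        intro i hi
        rw [hZ1 i hi]
        unfold compose
        split_ifs with h
        · rfl
        · have : W i = 0 := by
            by_contra hc
            exact h (hWs.1 hc)
          rw [this]; simp at h; exact h.symm
      have hZs : supp Z ⊆ supp V := by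
        intro i hi
        by_cases h : i ∈ sep V W
        · exact h.2
        · have := hZV i h
          show V i ≠ 0
          rw [← this]; exact hi
      have haV : a ∈ supp V := ha.2
      have heS : e ∉ sep V W := by
        rintro ⟨h1, h2⟩
        rw [hWe] at h1
        revert h1 h2
        generalize V e = v
        revert v; decide
      refine Nat.find_min hex2 ?_ ⟨Z, hZ, hZV e heS, ⟨hZs, fun h => (h haV) hZa⟩, rfl⟩
      rw [← hWk]
      refine Set.ncard_lt_ncard ⟨?_, fun h => ?_⟩ ((hfin V hV).subset fun i hi => hi.2)
      · intro i hi
        by_contra hc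
        have h1 := hZV i hc
        obtain ⟨h2, h3⟩ := hi
        rw [h1] at h2
        revert h2 h3
        generalize V i = v
        revert v; decide
      · have h3 := (h ha).1
        rw [hZa] at h3
        exact ha.2 (by simpa using h3)
    · refine hmin W hW (by rw [hWe, hVe]) (fun i => ?_) hWs
      by_cases hWi : W i = 0
      · exact Or.inl hWi
      right
      have h1 : V i ≠ 0 := hWs.1 hWi
      have h2 : V i = Y i := (hVc i).resolve_left h1
      rw [← h2]
      have h3 : ¬ (V i = -(W i) ∧ V i ≠ 0) := fun h => hsep ⟨i, h⟩
      revert h1 h3 hWi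
      generalize V i = v
      generalize W i = w
      revert v w; decide
  refine ⟨V, ⟨hV, fun h => hVe0 (by rw [h]; rfl), fun U hU hU0 hUs => ?_⟩, hVe, hVc⟩
  by_contra hne
  have hss : supp U ⊂ supp V := hUs.ssubset_of_ne hne
  by_cases hUe : U e = 0
  · obtain ⟨a, ha⟩ : ∃ a, U a ≠ 0 := by
      by_contra hc
      push Not at hc
      exact hU0 (funext hc)
    obtain ⟨U', hU', hU's, ha'⟩ : ∃ U' ∈ M.covectors, supp U' = supp U ∧ V a = U' a := by
      have h1 : V a ≠ 0 := hUs ha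
      have : V a = U a ∨ V a = (-U) a := by
        revert h1 ha
        rw [Pi.neg_apply]
        generalize V a = v
        generalize U a = u
        revert u v; decide
      rcases this with h | h
      · exact ⟨U, hU, rfl, h⟩
      · exact ⟨-U, M.neg_mem U hU, by ext; simp [supp], h⟩
    obtain ⟨Z, hZ, hZa, hZ1, hZ2, -, -⟩ := elim_sub M hV hU' a ha' (hUs ha)
    refine hsmall Z hZ (hZ1 e ?_) ⟨fun i hi => ?_, fun h => ?_⟩
    · by_contra hc
      have : e ∈ supp U' := hc
      rw [hU's] at this
      exact this hUe
    · by_contra hc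
      have hVi : V i = 0 := by simpa [supp] using hc
      have h3 : i ∉ supp U' := by rw [hU's]; exact fun h => hc (hUs h)
      have h4 : U' i = 0 := by simpa [supp] using h3
      exact hi (by rw [hZ1 i h4, hVi])
    · exact h (hUs ha) hZa
  · have : U e = V e ∨ (-U) e = V e := by
      revert hUe hVe0
      rw [Pi.neg_apply]
      generalize V e = v
      generalize U e = u
      revert u v; decide
    rcases this with h | h
    · exact hsmall U hU h hss
    · exact hsmall (-U) (M.neg_mem U hU) h (by
        have : supp (-U) = supp U := by ext; simp [supp]
        rw [this]; exact hss)

theorem exists_conf_circuit {α : Type*} (M : OrientedMatroid α) (X : SignVec α)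
    (hX : M.IsVector X) (e : α) (he : X e ≠ 0) :
    ∃ C, M.IsCircuit C ∧ C e = X e ∧ Conf C X :=
  exists_conf_cocircuit (dualOM M) X hX e he

/-- An oriented matroid is determined by its cocircuits. -/
theorem covectors_eq_of_cocircuits {α : Type*} {M N : OrientedMatroid α}
    (hg : M.ground = N.ground) (h : ∀ X, M.IsCocircuit X ↔ N.IsCocircuit X) :
    M.covectors = N.covectors := by
  apply Set.Subset.antisymm
  · intro Y hY
    refine mem_of_conf_cover N Y (hg ▸ M.supp_subset Y hY) fun e he => ?_
    obtain ⟨C, hC, h1, h2⟩ := exists_conf_cocircuit M Y hY e he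
    exact ⟨C, ((h C).1 hC).1, h1, h2⟩
  · intro Y hY
    refine mem_of_conf_cover M Y (hg ▸ N.supp_subset Y hY) fun e he => ?_
    obtain ⟨C, hC, h1, h2⟩ := exists_conf_cocircuit N Y hY e he
    exact ⟨C, ((h C).2 hC).1, h1, h2⟩

theorem supp_restrictAway {α : Type*} (A : Set α) (X : SignVec α) :
    supp (restrictAway A X) = supp X \ A := by
  ext i
  simp only [supp, restrictAway, Set.mem_ofPred_eq, Set.mem_sdiff]
  by_cases h : i ∈ A <;> simp [h]

theorem restrictAway_of_notMem {α : Type*} {A : Set α} {i : α} (h : i ∉ A) (X : SignVec α) :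
    restrictAway A X i = X i := by
  simp [restrictAway, h]

theorem restrictAway_of_mem {α : Type*} {A : Set α} {i : α} (h : i ∈ A) (X : SignVec α) :
    restrictAway A X i = 0 := by
  simp [restrictAway, h]

/-- The deletion of `A`, whose covectors are the restrictions of covectors. -/
def delOM {α : Type*} (M : OrientedMatroid α) (A : Set α) : OrientedMatroid α where
  ground := M.ground \ A
  ground_finite := M.ground_finite.subset Set.sdiff_subset
  covectors := {X | ∃ Y ∈ M.covectors, X = restrictAway A Y}
  supp_subset := by
    rintro _ ⟨Y, hY, rfl⟩
    rw [supp_restrictAway]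
    exact Set.sdiff_subset_sdiff_left (M.supp_subset Y hY)
  zero_mem := ⟨0, M.zero_mem, by funext i; simp [restrictAway]⟩
  neg_mem := by
    rintro _ ⟨Y, hY, rfl⟩
    exact ⟨-Y, M.neg_mem Y hY, by
      funext i; by_cases h : i ∈ A <;> simp [restrictAway, h]⟩
  compose_mem := by
    rintro _ ⟨X, hX, rfl⟩ _ ⟨Y, hY, rfl⟩
    exact ⟨compose X Y, M.compose_mem X hX Y hY, by
      funext i; by_cases h : i ∈ A <;> simp [restrictAway, compose, h]⟩
  elim := by
    rintro _ ⟨X, hX, rfl⟩ _ ⟨Y, hY, rfl⟩ e ⟨he1, he2⟩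
    have heA : e ∉ A := fun h => he2 (by simp [restrictAway, h])
    rw [restrictAway_of_notMem heA, restrictAway_of_notMem heA] at he1
    rw [restrictAway_of_notMem heA] at he2
    obtain ⟨Z, hZ, hZe, hZ1⟩ := M.elim X hX Y hY e ⟨he1, he2⟩
    refine ⟨_, ⟨Z, hZ, rfl⟩, by rw [restrictAway_of_notMem heA, hZe], fun i hi => ?_⟩
    by_cases h : i ∈ A
    · simp [restrictAway, compose, h]
    · rw [restrictAway_of_notMem h, hZ1 i]
      · simp [restrictAway, compose, h]
      · rintro ⟨h1, h2⟩
        exact hi ⟨by simpa [restrictAway, h] using h1, by simpa [restrictAway, h] using h2⟩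

/-- The contraction of `A`, whose covectors are the covectors vanishing on `A`. -/
def conOM {α : Type*} (M : OrientedMatroid α) (A : Set α) : OrientedMatroid α where
  ground := M.ground \ A
  ground_finite := M.ground_finite.subset Set.sdiff_subset
  covectors := {X | X ∈ M.covectors ∧ ∀ i ∈ A, X i = 0}
  supp_subset := fun X hX i hi => ⟨M.supp_subset X hX.1 hi, fun h => hi (hX.2 i h)⟩
  zero_mem := ⟨M.zero_mem, fun _ _ => rfl⟩
  neg_mem := fun X hX => ⟨M.neg_mem X hX.1, fun i hi => by simp [hX.2 i hi]⟩
  compose_mem := fun X hX Y hY => ⟨M.compose_mem X hX.1 Y hY.1, fun i hi => by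
    simp [compose, hX.2 i hi, hY.2 i hi]⟩
  elim := fun X hX Y hY e he => by
    obtain ⟨Z, hZ, hZe, hZ1⟩ := M.elim X hX.1 Y hY.1 e he
    refine ⟨Z, ⟨hZ, fun i hi => ?_⟩, hZe, hZ1⟩
    rw [hZ1 i (fun h => h.2 (hX.2 i hi))]
    simp [compose, hX.2 i hi, hY.2 i hi]

theorem orth_restrictAway {α : Type*} {A : Set α} {X Y : SignVec α} (hX : ∀ i ∈ A, X i = 0) :
    Orth X (restrictAway A Y) ↔ Orth X Y := by
  have : ∀ i, X i * restrictAway A Y i = X i * Y i := by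
    intro i
    by_cases h : i ∈ A
    · rw [hX i h, zero_mul, zero_mul]
    · rw [restrictAway_of_notMem h]
  rw [orth_iff, orth_iff]
  simp only [this]

theorem delOM_isVector {α : Type*} (M : OrientedMatroid α) (A : Set α) (X : SignVec α) :
    (delOM M A).IsVector X ↔ M.IsVector X ∧ ∀ i ∈ A, X i = 0 := by
  constructor
  · rintro ⟨h1, h2⟩
    have h0 : ∀ i ∈ A, X i = 0 := fun i hi => by
      by_contra hc
      exact (h1 hc).2 hi
    exact ⟨⟨fun i hi => (h1 hi).1, fun Y hY => (orth_restrictAway h0).1 (h2 _ ⟨Y, hY, rfl⟩)⟩, h0⟩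
  · rintro ⟨⟨h1, h2⟩, h0⟩
    refine ⟨fun i hi => ⟨h1 hi, fun h => hi (h0 i h)⟩, ?_⟩
    rintro _ ⟨Y, hY, rfl⟩
    exact (orth_restrictAway h0).2 (h2 Y hY)

theorem conOM_isVector {α : Type*} (M : OrientedMatroid α) (A : Set α) (X : SignVec α) :
    (conOM M A).IsVector X ↔ ∃ Z, M.IsVector Z ∧ X = restrictAway A Z := by
  constructor
  · rintro ⟨h1, h2⟩
    have h0 : ∀ i ∈ A, X i = 0 := fun i hi => by
      by_contra hc
      exact (h1 hc).2 hi
    obtain ⟨Z, hZ, hag⟩ := lift_set M (A ∩ M.ground) (M.ground_finite.inter_of_right A)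
      Set.inter_subset_right X (fun i hi => (h1 hi).1) (fun i hi => h0 i hi.1)
      (fun Y hY hYA => h2 Y ⟨hY, fun i hi => by
        by_contra hc
        exact hc (hYA i ⟨hi, M.supp_subset Y hY hc⟩)⟩)
    refine ⟨Z, hZ, ?_⟩
    funext i
    by_cases h : i ∈ A
    · rw [h0 i h, restrictAway_of_mem h]
    · rw [restrictAway_of_notMem h, hag i (fun h' => h h'.1)]
  · rintro ⟨Z, hZ, rfl⟩
    refine ⟨?_, fun Y hY => ?_⟩
    · rw [supp_restrictAway]
      exact Set.sdiff_subset_sdiff_left hZ.1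
    · exact orth_comm ((orth_restrictAway hY.2).2 (orth_comm (hZ.2 Y hY.1)))

theorem isVector_iff_of_circuits {α : Type*} {M N : OrientedMatroid α}
    (hg : M.ground = N.ground) (h : ∀ X, M.IsCircuit X ↔ N.IsCircuit X) (X : SignVec α) :
    M.IsVector X ↔ N.IsVector X :=
  Set.ext_iff.1 (covectors_eq_of_cocircuits (M := dualOM M) (N := dualOM N) hg h) X

theorem covectors_eq_of_isVector {α : Type*} {M N : OrientedMatroid α}
    (hg : M.ground = N.ground) (h : ∀ X, M.IsVector X ↔ N.IsVector X) :
    M.covectors = N.covectors := by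
  apply Set.Subset.antisymm
  · intro Y hY
    exact mem_of_orth_vectors N Y (hg ▸ M.supp_subset Y hY) fun X hX => ((h X).2 hX).2 Y hY
  · intro Y hY
    exact mem_of_orth_vectors M Y (hg ▸ N.supp_subset Y hY) fun X hX => ((h X).1 hX).2 Y hY

theorem isDeletion_isVector {α : Type*} {M M' : OrientedMatroid α} {A : Set α}
    (h : IsDeletion M A M') (X : SignVec α) :
    M'.IsVector X ↔ M.IsVector X ∧ ∀ i ∈ A, X i = 0 := by
  rw [← delOM_isVector]
  refine isVector_iff_of_circuits h.1 (fun X => ?_) X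
  rw [h.2]
  constructor
  · rintro ⟨⟨h1, h2, h3⟩, h0⟩
    exact ⟨(delOM_isVector M A X).2 ⟨h1, h0⟩, h2, fun Y hY hY0 hs =>
      h3 Y ((delOM_isVector M A Y).1 hY).1 hY0 hs⟩
  · rintro ⟨h1, h2, h3⟩
    obtain ⟨h1, h0⟩ := (delOM_isVector M A X).1 h1
    refine ⟨⟨h1, h2, fun Y hY hY0 hs => h3 Y ((delOM_isVector M A Y).2 ⟨hY, fun i hi => ?_⟩) hY0 hs⟩,
      h0⟩
    by_contra hc
    exact hs hc (h0 i hi)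

theorem isDeletion_covectors {α : Type*} {M M' : OrientedMatroid α} {A : Set α}
    (h : IsDeletion M A M') (Y : SignVec α) :
    Y ∈ M'.covectors ↔ ∃ Z ∈ M.covectors, Y = restrictAway A Z := by
  have : M'.covectors = (delOM M A).covectors := covectors_eq_of_isVector h.1 fun X => by
    rw [isDeletion_isVector h, delOM_isVector]
  rw [this]; rfl

theorem isContraction_isVector {α : Type*} {M M' : OrientedMatroid α} {A : Set α}
    (h : IsContraction M A M') (X : SignVec α) :
    M'.IsVector X ↔ ∃ Z, M.IsVector Z ∧ X = restrictAway A Z := by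
  rw [← conOM_isVector]
  have hcirc : ∀ Y, (conOM M A).IsVector Y → Y ≠ 0 →
      ∃ C, M.IsCircuit C ∧ restrictAway A C ≠ 0 ∧ Conf (restrictAway A C) Y := by
    intro Y hY hY0
    obtain ⟨Z, hZ, rfl⟩ := (conOM_isVector M A Y).1 hY
    obtain ⟨e, he⟩ : ∃ e, restrictAway A Z e ≠ 0 := by
      by_contra hc
      push Not at hc
      exact hY0 (funext hc)
    have heA : e ∉ A := fun h => he (restrictAway_of_mem h Z)
    rw [restrictAway_of_notMem heA] at he
    obtain ⟨C, hC, hCe, hCc⟩ := exists_conf_circuit M Z hZ e he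
    refine ⟨C, hC, fun h0 => ?_, fun i => ?_⟩
    · have := congrFun h0 e
      rw [restrictAway_of_notMem heA, hCe] at this
      exact he this
    · by_cases hi : i ∈ A
      · left; exact restrictAway_of_mem hi C
      · rw [restrictAway_of_notMem hi, restrictAway_of_notMem hi]; exact hCc i
  have hconf : ∀ {Y Z : SignVec α}, Conf Z Y → supp Z ⊆ supp Y := by
    intro Y Z hc i hi
    have h1 : Z i ≠ 0 := hi
    show Y i ≠ 0
    rw [← (hc i).resolve_left h1]; exact h1
  have hvec : ∀ C, M.IsCircuit C → (conOM M A).IsVector (restrictAway A C) := fun C hC =>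
    (conOM_isVector M A _).2 ⟨C, hC.1, rfl⟩
  refine isVector_iff_of_circuits h.1 (fun X => ?_) X
  rw [h.2]
  constructor
  · rintro ⟨h0, ⟨C, hC, rfl⟩, hmin⟩
    refine ⟨hvec C hC, h0, fun Y hY hY0 hs => ?_⟩
    obtain ⟨D, hD, hD0, hDc⟩ := hcirc Y hY hY0
    have h1 := hmin _ hD0 ⟨D, hD, rfl⟩ ((hconf hDc).trans hs)
    exact Set.Subset.antisymm hs (h1 ▸ hconf hDc)
  · rintro ⟨h1, h0, hmin⟩
    obtain ⟨C, hC, hC0, hCc⟩ := hcirc X h1 h0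
    have hs := hmin _ (hvec C hC) hC0 (hconf hCc)
    refine ⟨h0, ⟨C, hC, ?_⟩, ?_⟩
    · funext i
      by_cases hi : X i = 0
      · rcases hCc i with h | h
        · rw [hi, h]
        · exact h.symm
      · have : i ∈ supp (restrictAway A C) := by rw [hs]; exact hi
        exact ((hCc i).resolve_left this).symm
    · rintro Z hZ0 ⟨D, hD, rfl⟩ hZs
      exact hmin _ (hvec D hD) hZ0 hZs

theorem isContraction_covectors {α : Type*} {M M' : OrientedMatroid α} {A : Set α}
    (h : IsContraction M A M') (Y : SignVec α) :
    Y ∈ M'.covectors ↔ Y ∈ M.covectors ∧ ∀ i ∈ A, Y i = 0 := by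
  have : M'.covectors = (conOM M A).covectors := covectors_eq_of_isVector h.1 fun X => by
    rw [isContraction_isVector h, conOM_isVector]
  rw [this]; rfl

/-! ### Linear programming duality -/

theorem sign_nonneg_mul {t x w : SignType} (ht : t ≠ 0) (hx : 0 ≤ t * x) (hw : 0 ≤ t * w) :
    0 ≤ x * w := by
  revert t x w; decide

theorem sign_nonneg_mul' {t x w : SignType} (ht : t ≠ 0) (hx : ¬ 0 ≤ t * x)
    (hw : ¬ 0 ≤ t * w) : 0 ≤ x * w ∧ x * w ≠ 0 := by
  revert t x w; decide

/-- Strong duality of oriented matroid programming: if the primal (vectors `X` normalised at `a`)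
and the dual (covectors `W` normalised at `b`) are both feasible, there is a complementary pair of
feasible solutions. The vector is free on `G ∪ {b}`; the covector vanishes on `G` and is free outside
`A ∪ G ∪ {b}`.

By induction on `A`, an element `e` of `A` is deleted and contracted; when both
smaller programs are feasible and neither pair works, eliminating `a` between the two primal
solutions gives a vector that cannot be orthogonal to both dual solutions. -/
theorem duality {α : Type*} (M : OrientedMatroid α) (τ : α → SignType) (a b : α) (hab : a ≠ b)
    (haM : a ∈ M.ground) (hbM : b ∈ M.ground) (hτa : τ a ≠ 0) (hτb : τ b ≠ 0)
    (A : Set α) (hA : A.Finite) :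
    ∀ G : Set α, A ⊆ M.ground → (∀ i ∈ A, τ i ≠ 0) → a ∉ A → b ∉ A → a ∉ G → b ∉ G →
      (∀ i ∈ A, i ∉ G) →
    (∃ X, M.IsVector X ∧ X a = τ a ∧ (∀ i ∈ A, 0 ≤ τ i * X i) ∧
      ∀ i, i ≠ a → i ≠ b → i ∉ A → i ∉ G → X i = 0) →
    (∃ W ∈ M.covectors, W b = τ b ∧ (∀ i ∈ A, 0 ≤ τ i * W i) ∧ ∀ i ∈ G, W i = 0) →
    ∃ X W, (M.IsVector X ∧ X a = τ a ∧ (∀ i ∈ A, 0 ≤ τ i * X i) ∧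
      ∀ i, i ≠ a → i ≠ b → i ∉ A → i ∉ G → X i = 0) ∧
      (W ∈ M.covectors ∧ W b = τ b ∧ (∀ i ∈ A, 0 ≤ τ i * W i) ∧ ∀ i ∈ G, W i = 0) ∧
      ∀ i ∈ A, X i = 0 ∨ W i = 0 := by
  induction A, hA using Set.Finite.induction_on with
  | empty =>
    rintro G - - - - - - - ⟨X, hX⟩ ⟨W, hW⟩
    exact ⟨X, W, hX, hW, by simp⟩
  | @insert e A heA _ ih =>
    rintro G hAM hτ haA hbA haG hbG hAG ⟨P, hP, hPa, hPA, hP0⟩ ⟨Q, hQ, hQb, hQA, hQG⟩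
    rw [Set.mem_insert_iff, not_or] at haA hbA
    have hAM' : A ⊆ M.ground := fun i hi => hAM (by simp [hi])
    have hτ' : ∀ i ∈ A, τ i ≠ 0 := fun i hi => hτ i (by simp [hi])
    have hτe : τ e ≠ 0 := hτ e (by simp)
    have heG : e ∉ G := hAG e (by simp)
    have hAG' : ∀ i ∈ A, i ∉ G := fun i hi => hAG i (by simp [hi])
    have hne : ∀ i ∈ A, i ≠ e := fun i hi h => heA (h ▸ hi)
    -- feasibility of the primal with `e` deleted
    have hpd : (∃ X, M.IsVector X ∧ X a = τ a ∧ (∀ i ∈ A, 0 ≤ τ i * X i) ∧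
        ∀ i, i ≠ a → i ≠ b → i ∉ A → i ∉ G → X i = 0) ∨
        (∃ U ∈ M.covectors, U a = τ a ∧ (∀ i ∈ A, 0 ≤ τ i * U i) ∧ (∀ i ∈ G, U i = 0) ∧
          U b = 0 ∧ ¬ 0 ≤ τ e * U e) := by
      rcases painting' M τ a (insert a A) (insert b G) (by simp)
        (by rintro i (rfl | hi); exacts [haM, hAM' hi])
        (by rintro i (rfl | hi); exacts [hτa, hτ' i hi])
        (by
          rintro i (rfl | hi) (rfl | h)
          exacts [hab rfl, haG h, hbA.2 hi, hAG' _ hi h]) with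
        ⟨U, hU, hUa, hUA, hUG⟩ | ⟨X, hX, hXa, hXA, hX0⟩
      · right
        refine ⟨U, hU, hUa, fun i hi => hUA i (by simp [hi]), fun i hi => hUG i (by simp [hi]),
          hUG b (by simp), fun hUe => ?_⟩
        have := orth_zero_of_nonneg (hP.2 U hU) (fun i => by
          by_cases h1 : i = a
          · rw [h1, hPa, hUa]
            generalize τ a = t
            revert t; decide
          by_cases h2 : i = e
          · rw [h2]; exact sign_nonneg_mul hτe (hPA e (by simp)) hUe
          by_cases h3 : i ∈ A
          · exact sign_nonneg_mul (hτ' i h3) (hPA i (by simp [h3])) (hUA i (by simp [h3]))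
          by_cases h4 : i ∈ insert b G
          · rw [hUG i h4, mul_zero]
          · rw [Set.mem_insert_iff, not_or] at h4
            rw [hP0 i h1 h4.1 (by simp [h2, h3]) h4.2, zero_mul]) a
        rw [hPa, hUa] at this
        revert this hτa
        generalize τ a = t
        revert t; decide
      · left
        refine ⟨X, hX, hXa, fun i hi => hXA i (by simp [hi]), fun i h1 h2 h3 h4 =>
          hX0 i (by simp [h1, h3]) (by simp [h2, h4])⟩
    -- feasibility of the dual with `e` contracted
    have hdc : (∃ W ∈ M.covectors, W b = τ b ∧ (∀ i ∈ A, 0 ≤ τ i * W i) ∧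
        ∀ i ∈ insert e G, W i = 0) ∨
        (∃ V, M.IsVector V ∧ V b = τ b ∧ (∀ i ∈ A, 0 ≤ τ i * V i) ∧
          (∀ i, i ≠ b → i ∉ A → i ∉ G → i ≠ e → V i = 0) ∧ ¬ 0 ≤ τ e * V e) := by
      rcases painting' M τ b (insert b A) (insert e G) (by simp)
        (by rintro i (rfl | hi); exacts [hbM, hAM' hi])
        (by rintro i (rfl | hi); exacts [hτb, hτ' i hi])
        (by
          rintro i (rfl | hi) (h | h)
          exacts [hbA.1 h, hbG h, hne i hi h, hAG' _ hi h]) with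
        ⟨W, hW, hWb, hWA, hWG⟩ | ⟨V, hV, hVb, hVA, hV0⟩
      · exact Or.inl ⟨W, hW, hWb, fun i hi => hWA i (by simp [hi]), hWG⟩
      · right
        have hV0' : ∀ i, i ≠ b → i ∉ A → i ∉ G → i ≠ e → V i = 0 := fun i h1 h2 h3 h4 =>
          hV0 i (by simp [h1, h2]) (by simp [h3, h4])
        refine ⟨V, hV, hVb, fun i hi => hVA i (by simp [hi]), hV0', fun hVe => ?_⟩
        have := orth_zero_of_nonneg (hV.2 Q hQ) (fun i => by
          by_cases h1 : i = b
          · rw [h1, hVb, hQb]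
            generalize τ b = t
            revert t; decide
          by_cases h2 : i = e
          · rw [h2]; exact sign_nonneg_mul hτe hVe (hQA e (by simp))
          by_cases h3 : i ∈ A
          · exact sign_nonneg_mul (hτ' i h3) (hVA i (by simp [h3])) (hQA i (by simp [h3]))
          by_cases h4 : i ∈ G
          · rw [hQG i h4, mul_zero]
          · rw [hV0' i h1 h3 h4 h2, zero_mul]) b
        rw [hVb, hQb] at this
        revert this hτb
        generalize τ b = t
        revert t; decide
    have hdual : ∃ W ∈ M.covectors, W b = τ b ∧ (∀ i ∈ A, 0 ≤ τ i * W i) ∧ ∀ i ∈ G, W i = 0 :=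
      ⟨Q, hQ, hQb, fun i hi => hQA i (by simp [hi]), hQG⟩
    have hprimal : ∃ X, M.IsVector X ∧ X a = τ a ∧ (∀ i ∈ A, 0 ≤ τ i * X i) ∧
        ∀ i, i ≠ a → i ≠ b → i ∉ A → i ∉ insert e G → X i = 0 :=
      ⟨P, hP, hPa, fun i hi => hPA i (by simp [hi]), fun i h1 h2 h3 h4 => by
        rw [Set.mem_insert_iff, not_or] at h4
        exact hP0 i h1 h2 (by simp [h3, h4.1]) h4.2⟩
    have hdelpair := fun h => ih G hAM' hτ' haA.2 hbA.2 haG hbG hAG' h hdual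
    have hconpair := fun h => ih (insert e G) hAM' hτ' haA.2 hbA.2 (by simp [haA.1, haG])
      (by simp [hbA.1, hbG]) (fun i hi => by simp [hne i hi, hAG' i hi]) hprimal h
    rcases hpd with hpd | ⟨U, hU, hUa, hUA, hUG, hUb, hUe⟩
    · obtain ⟨X, W, ⟨hX, hXa, hXA, hX0⟩, ⟨hW, hWb, hWA, hWG⟩, hc⟩ := hdelpair hpd
      have hXe : X e = 0 := hX0 e (Ne.symm haA.1) (Ne.symm hbA.1) heA heG
      by_cases hWe : 0 ≤ τ e * W e
      · refine ⟨X, W, ⟨hX, hXa, ?_, fun i h1 h2 h3 h4 => hX0 i h1 h2 (fun h => h3 (by simp [h])) h4⟩,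
          ⟨hW, hWb, ?_, hWG⟩, ?_⟩
        · rintro i (rfl | hi)
          · rw [hXe, mul_zero]
          · exact hXA i hi
        · rintro i (rfl | hi)
          · exact hWe
          · exact hWA i hi
        · rintro i (rfl | hi)
          · exact Or.inl hXe
          · exact hc i hi
      rcases hdc with hdc | ⟨V, hV, hVb, hVA, hV0, hVe⟩
      · obtain ⟨X', W', ⟨hX', hXa', hXA', hX0'⟩, ⟨hW', hWb', hWA', hWG'⟩, hc'⟩ := hconpair hdc
        have hWe' : W' e = 0 := hWG' e (by simp)
        by_cases hXe' : 0 ≤ τ e * X' e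
        · refine ⟨X', W', ⟨hX', hXa', ?_, ?_⟩,
            ⟨hW', hWb', ?_, fun i hi => hWG' i (by simp [hi])⟩, ?_⟩
          · rintro i (rfl | hi)
            · exact hXe'
            · exact hXA' i hi
          · intro i h1 h2 h3 h4
            rw [Set.mem_insert_iff, not_or] at h3
            exact hX0' i h1 h2 h3.2 (by simp [h3.1, h4])
          · rintro i (rfl | hi)
            · rw [hWe', mul_zero]
            · exact hWA' i hi
          · rintro i (rfl | hi)
            · exact Or.inr hWe'
            · exact hc' i hi
        exfalso
        -- the two primal solutions have incomparable objective values
        obtain ⟨Z, hZ, hZa, hZ1, hZ2, -, -⟩ := elim_sub (dualOM M) (X := X) (Y := X') hX hX' a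
          (by rw [hXa, hXa']) (by rw [hXa]; exact hτa)
        have hZ : M.IsVector Z := hZ
        have hWZ : ∀ i, i ≠ b → W i * Z i ≤ 0 ∧ (i = e → W i * Z i ≠ 0) := by
          intro i hib
          by_cases h1 : i = a
          · rw [h1, hZa, mul_zero]; exact ⟨le_rfl, fun h => absurd h haA.1⟩
          by_cases h2 : i = e
          · subst h2
            have h3 := hZ2 i hXe
            rw [h3]
            refine ⟨?_, fun _ => ?_⟩
            all_goals
              revert hWe hXe'
              generalize τ i = t
              generalize W i = w
              generalize X' i = x
              revert t w x; decide
          refine ⟨?_, fun h => absurd h h2⟩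
          by_cases h3 : i ∈ A
          · rcases hc i h3 with h | h
            · rw [hZ2 i h]
              have a1 := hWA i h3
              have a2 := hXA' i h3
              have a3 := hτ' i h3
              revert a1 a2 a3
              generalize τ i = t
              generalize W i = w
              generalize X' i = x
              revert t w x; decide
            · rw [h, zero_mul]
          by_cases h4 : i ∈ G
          · rw [hWG i h4, zero_mul]
          · have h5 := hX0 i h1 hib h3 h4
            rw [hZ2 i h5, hX0' i h1 hib h3 (by simp [h2, h4]), neg_zero, mul_zero]
        have hWZ' : ∀ i, i ≠ b → 0 ≤ W' i * Z i := by
          intro i hib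
          by_cases h1 : i = a
          · rw [h1, hZa, mul_zero]
          by_cases h2 : i = e
          · rw [h2, hWe', zero_mul]
          by_cases h3 : i ∈ A
          · rcases hc' i h3 with h | h
            · rw [hZ1 i h]
              exact sign_nonneg_mul (hτ' i h3) (hWA' i h3) (hXA i h3)
            · rw [h, zero_mul]
          by_cases h4 : i ∈ G
          · rw [hWG' i (by simp [h4]), zero_mul]
          · rw [hZ1 i (hX0' i h1 hib h3 (by simp [h2, h4])), hX0 i h1 hib h3 h4, mul_zero]
        by_cases hzb : τ b * Z b ≤ 0
        · have := orth_zero_of_nonpos (orth_comm (hZ.2 W hW)) (fun i => by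
            by_cases h : i = b
            · rw [h, hWb]; exact hzb
            · exact (hWZ i h).1) e
          exact (hWZ e (Ne.symm hbA.1)).2 rfl this
        · have := orth_zero_of_nonneg (orth_comm (hZ.2 W' hW')) (fun i => by
            by_cases h : i = b
            · rw [h, hWb']; exact (lt_of_not_ge hzb).le
            · exact hWZ' i h) b
          rw [hWb'] at this
          exact hzb this.le
      · exfalso
        have h := sign_nonneg_mul' hτe hVe hWe
        have := orth_zero_of_nonneg (hV.2 W hW) (fun i => by
          by_cases h1 : i = b
          · rw [h1, hVb, hWb]
            generalize τ b = t
            revert t; decide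
          by_cases h2 : i = e
          · rw [h2]; exact h.1
          by_cases h3 : i ∈ A
          · exact sign_nonneg_mul (hτ' i h3) (hVA i h3) (hWA i h3)
          by_cases h4 : i ∈ G
          · rw [hWG i h4, mul_zero]
          · rw [hV0 i h1 h3 h4 h2, zero_mul]) e
        exact h.2 this
    · rcases hdc with hdc | ⟨V, hV, hVb, hVA, hV0, hVe⟩
      · obtain ⟨X', W', ⟨hX', hXa', hXA', hX0'⟩, ⟨hW', hWb', hWA', hWG'⟩, hc'⟩ := hconpair hdc
        have hWe' : W' e = 0 := hWG' e (by simp)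
        by_cases hXe' : 0 ≤ τ e * X' e
        · refine ⟨X', W', ⟨hX', hXa', ?_, ?_⟩,
            ⟨hW', hWb', ?_, fun i hi => hWG' i (by simp [hi])⟩, ?_⟩
          · rintro i (rfl | hi)
            · exact hXe'
            · exact hXA' i hi
          · intro i h1 h2 h3 h4
            rw [Set.mem_insert_iff, not_or] at h3
            exact hX0' i h1 h2 h3.2 (by simp [h3.1, h4])
          · rintro i (rfl | hi)
            · rw [hWe', mul_zero]
            · exact hWA' i hi
          · rintro i (rfl | hi)
            · exact Or.inr hWe'
            · exact hc' i hi
        exfalso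
        have h := sign_nonneg_mul' hτe hXe' hUe
        have := orth_zero_of_nonneg (hX'.2 U hU) (fun i => by
          by_cases h1 : i = a
          · rw [h1, hXa', hUa]
            generalize τ a = t
            revert t; decide
          by_cases h2 : i = e
          · rw [h2]; exact h.1
          by_cases h3 : i ∈ A
          · exact sign_nonneg_mul (hτ' i h3) (hXA' i h3) (hUA i h3)
          by_cases h4 : i ∈ G
          · rw [hUG i h4, mul_zero]
          by_cases h5 : i = b
          · rw [h5, hUb, mul_zero]
          · rw [hX0' i h1 h5 h3 (by simp [h2, h4]), zero_mul]) e
        exact h.2 this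
      · exfalso
        have h := sign_nonneg_mul' hτe hVe hUe
        have := orth_zero_of_nonneg (hV.2 U hU) (fun i => by
          by_cases h1 : i = b
          · rw [h1, hUb, mul_zero]
          by_cases h2 : i = e
          · rw [h2]; exact h.1
          by_cases h3 : i ∈ A
          · exact sign_nonneg_mul (hτ' i h3) (hVA i h3) (hUA i h3)
          by_cases h4 : i ∈ G
          · rw [hUG i h4, mul_zero]
          · rw [hV0 i h1 h3 h4 h2, zero_mul]) e
        exact h.2 this

/-! ### Rank -/

theorem Indep.ncard_le_rk {α : Type*} {M : OrientedMatroid α} {A J : Set α} (hJA : J ⊆ A)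
    (hJ : M.Indep J) : J.ncard ≤ M.rk A := by
  refine le_csSup ⟨M.ground.ncard, ?_⟩ ⟨J, hJA, hJ, rfl⟩
  rintro _ ⟨I, -, hI, rfl⟩
  exact Set.ncard_le_ncard hI.1 M.ground_finite

theorem rk_le {α : Type*} {M : OrientedMatroid α} {A : Set α} {k : ℕ}
    (h : ∀ J ⊆ A, M.Indep J → J.ncard ≤ k) : M.rk A ≤ k := by
  refine csSup_le ⟨_, ∅, by simp, ⟨by simp, fun X hX hs => hX.2.1 ?_⟩, rfl⟩ ?_
  · funext i
    by_contra hc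
    exact hs hc
  · rintro _ ⟨J, hJA, hJ, rfl⟩
    exact h J hJA hJ

/-- A circuit with `rank + 1` elements spans: a covector vanishing on it is zero. -/
theorem eq_zero_of_zero_on_circuit {α : Type*} {M : OrientedMatroid α} {C U : SignVec α}
    (hC : M.IsCircuit C) (hcard : (supp C).ncard = M.rank + 1) (hU : U ∈ M.covectors)
    (h0 : ∀ i ∈ supp C, U i = 0) : U = 0 := by
  by_contra hne
  obtain ⟨e, he⟩ : ∃ e, U e ≠ 0 := by
    by_contra hc
    push Not at hc
    exact hne (funext hc)
  have heC : e ∉ supp C := fun h => he (h0 e h)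
  have hfin : (supp C).Finite := M.ground_finite.subset hC.1.1
  obtain ⟨c, hc⟩ : (supp C).Nonempty := by
    rw [← Set.ncard_pos hfin, hcard]; omega
  have hJ : M.Indep (insert e (supp C \ {c})) := by
    refine ⟨?_, fun D hD hDs => ?_⟩
    · rintro i (rfl | hi)
      · exact M.supp_subset U hU he
      · exact hC.1.1 hi.1
    · have hDe : D e = 0 := by
        have hz : ∀ i, i ≠ e → D i * U i = 0 := by
          intro i hi
          by_cases h : D i = 0
          · rw [h, zero_mul]
          · rcases hDs h with h' | h'
            · exact absurd h' hi
            · rw [h0 i h'.1, mul_zero]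
        have hall : D e * U e = 0 := by
          by_cases hp : 0 ≤ D e * U e
          · refine orth_zero_of_nonneg (hD.1.2 U hU) (fun i => ?_) e
            by_cases hi : i = e
            · rw [hi]; exact hp
            · rw [hz i hi]
          · refine orth_zero_of_nonpos (hD.1.2 U hU) (fun i => ?_) e
            by_cases hi : i = e
            · rw [hi]; exact (lt_of_not_ge hp).le
            · rw [hz i hi]
        exact (mul_eq_zero.1 hall).resolve_right he
      have hDC : supp D ⊆ supp C \ {c} := by
        intro i hi
        rcases hDs hi with rfl | h
        · exact absurd hDe hi
        · exact h
      have := hC.2.2 D hD.1 hD.2.1 (hDC.trans Set.sdiff_subset)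
      exact (hDC (this ▸ hc)).2 rfl
  have h1 := Indep.ncard_le_rk hJ.1 hJ
  rw [Set.ncard_insert_of_notMem (fun h => heC h.1) (hfin.subset Set.sdiff_subset),
    Set.ncard_sdiff_singleton_of_mem hc, hcard] at h1
  have h2 : M.rank = M.rk M.ground := rfl
  omega

/-- If every circuit through `h` has `rank + 1` elements, every vector through `h` spans. -/
theorem eq_zero_of_genPos {α : Type*} {M : OrientedMatroid α} {h : α}
    (hgp : ∀ X, M.IsCircuit X → X h ≠ 0 → (supp X).ncard = M.rank + 1) {X U : SignVec α}
    (hX : M.IsVector X) (hXh : X h ≠ 0) (hU : U ∈ M.covectors)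
    (h0 : ∀ i, X i ≠ 0 → U i = 0) : U = 0 := by
  obtain ⟨C, hC, hCh, hCc⟩ := exists_conf_circuit M X hX h hXh
  refine eq_zero_of_zero_on_circuit hC (hgp C hC (by rw [hCh]; exact hXh)) hU fun i hi => h0 i ?_
  rw [← (hCc i).resolve_left hi]; exact hi

/-! ### Path following -/

/-- Path following: in a finite set on which every non-terminal point has an `E`-successor,
`E`-predecessors are unique and the start has none, iterating the successor reaches a terminal
point along a path without repetition. -/
theorem path_following {α : Type*} (P T : α → Prop) (E : α → α → Prop) (s : α)
    (hfin : {x | P x}.Finite) (hs : P s)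
    (hnext : ∀ x, P x → ¬ T x → ∃ y, P y ∧ E x y)
    (hinj : ∀ x y z, P x → P y → P z → E x z → E y z → x = y)
    (hstart : ∀ x, P x → ¬ E x s) :
    ∃ p : List α, ∃ t, T t ∧ p ≠ [] ∧ p.head? = some s ∧ p.getLast? = some t ∧
      p.IsChain E ∧ p.Nodup ∧ ∀ x ∈ p, P x := by
  classical
  choose! nxt hnP hnE using hnext
  set u : ℕ → α := fun k => nxt^[k] s with hu
  have hu1 : ∀ k, u (k + 1) = nxt (u k) := fun k => Function.iterate_succ_apply' nxt k s
  -- before reaching a terminal point the orbit stays in `P` and does not repeat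
  have hP : ∀ k, (∀ j < k, ¬ T (u j)) → P (u k) := by
    intro k
    induction k with
    | zero => exact fun _ => hs
    | succ k ih =>
      intro h
      rw [hu1]
      exact hnP _ (ih fun j hj => h j (by omega)) (h k (by omega))
  have hE : ∀ k, (∀ j ≤ k, ¬ T (u j)) → E (u k) (u (k + 1)) := by
    intro k h
    rw [hu1]
    exact hnE _ (hP k fun j hj => h j hj.le) (h k le_rfl)
  have hne : ∀ i j, i < j → (∀ k < j, ¬ T (u k)) → u i ≠ u j := by
    intro i
    induction i with
    | zero =>
      intro j hj h heq
      obtain ⟨m, rfl⟩ : ∃ m, j = m + 1 := ⟨j - 1, by omega⟩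
      have h1 := hE m fun k hk => h k (by omega)
      rw [← heq] at h1
      exact hstart _ (hP m fun k hk => h k (by omega)) h1
    | succ i ih =>
      intro j hj h heq
      obtain ⟨m, rfl⟩ : ∃ m, j = m + 1 := ⟨j - 1, by omega⟩
      have h1 := hE m fun k hk => h k (by omega)
      have h2 := hE i fun k hk => h k (by omega)
      rw [heq] at h2
      exact ih m (by omega) (fun k hk => h k (by omega))
        (hinj _ _ _ (hP i fun k hk => h k (by omega)) (hP m fun k hk => h k (by omega))
          (hP (m + 1) h) h2 h1)
  have hex : ∃ k, T (u k) := by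
    by_contra hc
    push Not at hc
    refine Set.infinite_of_injective_forall_mem (f := u) (fun i j hij => ?_)
      (fun k => hP k fun j _ => hc j) hfin
    rcases lt_trichotomy i j with h | h | h
    · exact absurd hij (hne i j h fun k _ => hc k)
    · exact h
    · exact absurd hij.symm (hne j i h fun k _ => hc k)
  set K := Nat.find hex with hK
  have hmin : ∀ j < K, ¬ T (u j) := fun j hj => Nat.find_min hex hj
  refine ⟨(List.range (K + 1)).map u, u K, Nat.find_spec hex, by simp, ?_, ?_, ?_, ?_, ?_⟩
  · simp [List.range_succ_eq_map, hu]
  · simp [List.range_succ]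
  · rw [List.isChain_map, List.isChain_range]
    intro m hm
    exact hE m fun j hj => hmin j (by omega)
  · refine List.Nodup.map_on ?_ List.nodup_range
    intro i hi j hj hij
    rw [List.mem_range] at hi hj
    rcases lt_trichotomy i j with h | h | h
    · exact absurd hij (hne i j h fun k hk => hmin k (by omega))
    · exact h
    · exact absurd hij.symm (hne j i h fun k hk => hmin k (by omega))
  · intro x hx
    obtain ⟨k, hk, rfl⟩ := List.mem_map.1 hx
    rw [List.mem_range] at hk
    exact hP k fun j hj => hmin j (by omega)

/-! ### Nodes and edges of a program -/

theorem sign_eq_one {a : SignType} (h : 0 ≤ a) (h0 : a ≠ 0) : a = 1 := by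
  revert a; decide

theorem sign_mul_nonneg {a b : SignType} (h : 0 ≤ a) (h' : 0 ≤ b) : 0 ≤ a * b := by
  revert a b; decide

theorem sign_mul_nonpos {a b : SignType} (h : 0 ≤ a) (h' : b ≤ 0) : a * b ≤ 0 := by
  revert a b; decide

theorem sign_mul_self_nonneg (a : SignType) : 0 ≤ a * a := by
  revert a; decide

theorem sign_mul_self_ne {a : SignType} (h : a ≠ 0) : a * a ≠ 0 := by
  revert a; decide

theorem sign_mul_neg_self (a : SignType) : a * -a ≤ 0 := by
  revert a; decide

theorem sign_neg_ne {a : SignType} (h : a ≠ 0) : -a ≠ a := by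
  revert a; decide

theorem sign_trichotomy (a b : SignType) (hb : b ≠ 0) : a = 0 ∨ a = b ∨ a = -b := by
  revert a b; decide

/-- Orthogonal sign vectors cannot meet in a single element. -/
theorem orth_single {α : Type*} {X Y : SignVec α} (h : Orth X Y) (e : α)
    (h0 : ∀ i, i ≠ e → X i * Y i = 0) : X e * Y e = 0 := by
  by_cases he : 0 ≤ X e * Y e
  · refine orth_zero_of_nonneg h (fun i => ?_) e
    by_cases hi : i = e
    · rw [hi]; exact he
    · rw [h0 i hi]
  · refine orth_zero_of_nonpos h (fun i => ?_) e
    by_cases hi : i = e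
    · rw [hi]; exact (not_le.1 he).le
    · rw [h0 i hi]

/-- What is used of a program `M`, its deletion `Mf = M ∖ f` and the generic extension `Mhat` of
`M / g`, phrased through covectors and vectors; `f = n`, `g = n + 1`, `h = n + 2`. The covectors
of `M / g` are those covectors of `M` that vanish at `g`, so `up` and `down` pass between them and
the covectors of `Mhat`. -/
structure Setting (M Mf Mhat : OrientedMatroid ℕ) (n r : ℕ) : Prop where
  groundM : M.ground = nset n ∪ {n, n + 1}
  groundH : Mhat.ground = nset n ∪ {n, n + 2}
  rank : M.rank = r
  del : ∀ Y, Y ∈ Mf.covectors ↔ ∃ Z ∈ M.covectors, Y = restrictAway {n} Z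
  up : ∀ V ∈ M.covectors, V (n + 1) = 0 → ∃ V' ∈ Mhat.covectors, ∀ i, i ≠ n + 2 → V' i = V i
  down : ∀ V' ∈ Mhat.covectors, ∃ V ∈ M.covectors, V (n + 1) = 0 ∧ ∀ i, i ≠ n + 2 → V i = V' i
  lift : ∀ X, Mhat.IsVector X → X (n + 2) = 0 →
    ∃ Z, M.IsVector Z ∧ ∀ i, i ≠ n + 1 → Z i = X i
  gpf : ∀ X, M.IsCircuit X → X n ≠ 0 → (supp X).ncard = r + 1
  gph : ∀ X, Mhat.IsCircuit X → X (n + 2) ≠ 0 → (supp X).ncard = Mhat.rank + 1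
  nodeg : ∀ Y, Mf.IsCocircuit Y → Nonneg Y → Y (n + 1) ≠ 0
  noncoloop : ∀ U ∈ M.covectors, (∀ i, i ≠ n → U i = 0) → U = 0

section

variable {M Mf Mhat : OrientedMatroid ℕ} {n r : ℕ}

theorem Setting.zeroM (S : Setting M Mf Mhat n r) {V : SignVec ℕ} (hV : supp V ⊆ M.ground)
    {i : ℕ} (h1 : ¬ i < n) (h2 : i ≠ n) (h3 : i ≠ n + 1) : V i = 0 := by
  by_contra hc
  have := hV hc
  rw [S.groundM] at this
  rcases this with h | h | h
  · exact h1 h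
  · exact h2 h
  · exact h3 h

theorem Setting.zeroH (S : Setting M Mf Mhat n r) {V : SignVec ℕ} (hV : supp V ⊆ Mhat.ground)
    {i : ℕ} (h1 : ¬ i < n) (h2 : i ≠ n) (h3 : i ≠ n + 2) : V i = 0 := by
  by_contra hc
  have := hV hc
  rw [S.groundH] at this
  rcases this with h | h | h
  · exact h1 h
  · exact h2 h
  · exact h3 h

theorem node_lt {x : Set ℕ} (hx : IsNode Mf n x) {i : ℕ} (hi : i ∈ x) : i < n := by
  obtain ⟨Y, -, -, rfl⟩ := hx
  exact hi.1

/-- A covector of `M` realising a node. -/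
theorem node_data (S : Setting M Mf Mhat n r) {x : Set ℕ} (hx : IsNode Mf n x) :
    ∃ Y ∈ M.covectors, Y (n + 1) = 1 ∧ (∀ i, i < n → i ∉ x → Y i = 1) ∧ ∀ i ∈ x, Y i = 0 := by
  obtain ⟨Y, hY, hn, rfl⟩ := hx
  obtain ⟨Z, hZ, hYZ⟩ := (S.del Y).1 hY.1
  have hag : ∀ i, i ≠ n → Z i = Y i := fun i hi => by
    rw [hYZ, restrictAway_of_notMem (by simpa using hi)]
  refine ⟨Z, hZ, ?_, ?_, ?_⟩
  · rw [hag _ (by omega)]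
    exact (hn _).resolve_right (S.nodeg Y hY hn)
  · intro i hi hix
    rw [hag i (by omega)]
    refine (hn i).resolve_right fun h0 => hix ⟨hi, fun h => h h0⟩
  · rintro i ⟨hi, hi'⟩
    rw [hag i (by have : i < n := hi; omega)]
    by_contra hc
    exact hi' hc

/-- A node spans `M / g`. -/
theorem node_sp (S : Setting M Mf Mhat n r) {x : Set ℕ} (hx : IsNode Mf n x) {U : SignVec ℕ}
    (hU : U ∈ M.covectors) (hg : U (n + 1) = 0) (h0 : ∀ i ∈ x, U i = 0) : U = 0 := by
  obtain ⟨Y, hY, hn, rfl⟩ := hx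
  have hu : restrictAway {n} U ∈ Mf.covectors := (S.del _).2 ⟨U, hU, rfl⟩
  have hu0 : restrictAway {n} U = 0 := by
    by_contra hc
    have h1 : supp (restrictAway {n} U) = supp Y := by
      refine hY.2.2 _ hu hc fun i hi => ?_
      rw [supp_restrictAway] at hi
      have hi1 : U i ≠ 0 := hi.1
      have hin : i ≠ n := hi.2
      by_contra hiY
      refine hi1 (h0 i ⟨?_, hiY⟩)
      by_contra hlt
      refine hi1 (S.zeroM (M.supp_subset U hU) hlt hin ?_)
      rintro rfl
      exact hi1 hg
    have h2 : n + 1 ∈ supp (restrictAway {n} U) := by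
      rw [h1]; exact S.nodeg Y hY hn
    rw [supp_restrictAway] at h2
    exact h2.1 hg
  refine S.noncoloop U hU fun i hi => ?_
  rw [← restrictAway_of_notMem (A := {n}) (by simpa using hi) U, hu0]; rfl

theorem node_antichain (S : Setting M Mf Mhat n r) {x y : Set ℕ} (hx : IsNode Mf n x)
    (hy : IsNode Mf n y) (hxy : x ⊆ y) : x = y := by
  obtain ⟨X, hX, hXg, hX1, hX0⟩ := node_data S hx
  obtain ⟨Y, hY, hYg, hY1, hY0⟩ := node_data S hy
  obtain ⟨U, hU, hUg, h1, h2, -, h3⟩ := elim_sub M hX hY (n + 1) (by rw [hXg, hYg])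
    (by rw [hXg]; decide)
  have hU0 := node_sp S hx hU hUg fun i hi => by rw [h1 i (hY0 i (hxy hi)), hX0 i hi]
  refine Set.Subset.antisymm hxy fun i hi => ?_
  by_contra hc
  refine h3 i ?_ (by rw [hU0]; rfl)
  rw [hX1 i (node_lt hy hi) hc, hY0 i hi]; decide

/-- Moving along an edge. Let `V` be a covector of `M / g` that is nonnegative on the node `x`
and that is determined up to sign by its zeros in `x`. Then `V` is the direction of the edge from
`x` to an adjacent node `x'`, a conformal part of the composition of the cocircuit of `x`
with `V`. -/
theorem step (S : Setting M Mf Mhat n r) {x : Set ℕ} (hx : IsNode Mf n x) {V : SignVec ℕ}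
    (hV : V ∈ M.covectors) (hVg : V (n + 1) = 0) (hVf : V n ≠ 0) (hVx : ∀ i ∈ x, 0 ≤ V i)
    (hUq : ∀ U ∈ M.covectors, U (n + 1) = 0 → (∀ i ∈ x, V i = 0 → U i = 0) →
      U = 0 ∨ U = V ∨ U = -V) :
    ∃ x', IsNode Mf n x' ∧ x ≠ x' ∧ M.rk (x ∩ x') = r - 2 ∧ M.IsCocircuit V ∧
      (∀ i ∈ x \ x', V i = 1) ∧ (∀ i ∈ x' \ x, V i = -1) ∧ ∀ i ∈ x, (i ∈ x' ↔ V i = 0) := by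
  have hV0 : V ≠ 0 := fun h => hVf (by rw [h]; rfl)
  obtain ⟨p, hpx, hVp⟩ : ∃ p ∈ x, V p = 1 := by
    by_contra hc
    push Not at hc
    refine hV0 (node_sp S hx hV hVg fun i hi => ?_)
    by_contra h
    exact hc i hi (sign_eq_one (hVx i hi) h)
  have hpn : p < n := node_lt hx hpx
  obtain ⟨Y', hY', hYg, hY1, hY0⟩ := node_data S hx
  have hY'f : restrictAway {n} Y' ∈ Mf.covectors := (S.del _).2 ⟨Y', hY', rfl⟩
  have hVf' : restrictAway {n} V ∈ Mf.covectors := (S.del _).2 ⟨V, hV, rfl⟩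
  set T := compose (restrictAway {n} Y') (restrictAway {n} V) with hT
  have hTx : ∀ i ∈ x, T i = V i := by
    intro i hi
    have h1 : i ∉ ({n} : Set ℕ) := by
      have := node_lt hx hi
      simp; omega
    simp only [hT, compose, restrictAway_of_notMem h1, hY0 i hi]
    simp
  have hTn : T n = 0 := by
    simp [hT, compose, restrictAway_of_mem (Set.mem_singleton n)]
  have hT1 : ∀ i, i < n → i ∉ x → T i = 1 := by
    intro i hi hix
    have h1 : i ∉ ({n} : Set ℕ) := by simp; omega
    simp [hT, compose, restrictAway_of_notMem h1, hY1 i hi hix]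
  have hTg : T (n + 1) = 1 := by
    have h1 : n + 1 ∉ ({n} : Set ℕ) := by simp
    simp [hT, compose, restrictAway_of_notMem h1, hYg]
  have hTM : T ∈ Mf.covectors := Mf.compose_mem _ hY'f _ hVf'
  obtain ⟨Tl, hTl, hTTl⟩ := (S.del T).1 hTM
  have hTnn : ∀ i, 0 ≤ T i := by
    intro i
    by_cases h1 : i ∈ x
    · rw [hTx i h1]; exact hVx i h1
    by_cases h2 : i < n
    · rw [hT1 i h2 h1]; decide
    by_cases h3 : i = n
    · rw [h3, hTn]
    by_cases h4 : i = n + 1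
    · rw [h4, hTg]; decide
    · rw [hTTl, restrictAway_of_notMem (by simpa using h3),
        S.zeroM (M.supp_subset _ hTl) h2 h3 h4]
  obtain ⟨C, hC, hCp, hCT⟩ := exists_conf_cocircuit Mf T hTM p (by rw [hTx p hpx, hVp]; decide)
  have hCnn : Nonneg C := by
    intro i
    rcases hCT i with h | h
    · exact Or.inr h
    · by_cases h0 : C i = 0
      · exact Or.inr h0
      · exact Or.inl (sign_eq_one (by rw [h]; exact hTnn i) h0)
  have hCg : C (n + 1) = 1 := (hCnn _).resolve_right (S.nodeg C hC hCnn)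
  obtain ⟨C', hC', hCC'⟩ := (S.del C).1 hC.1
  have hag : ∀ i, i ≠ n → C' i = C i := fun i hi => by
    rw [hCC', restrictAway_of_notMem (by simpa using hi)]
  -- the difference of the two cocircuits is the edge direction, hence equal to `V`
  obtain ⟨U, hU, hUg, hU1, hU2, -, -⟩ := elim_sub M hC' hY' (n + 1)
    (by rw [hag _ (by omega), hCg, hYg]) (by rw [hag _ (by omega), hCg]; decide)
  have hUx : ∀ i ∈ x, U i = C i := fun i hi => by
    rw [hU1 i (hY0 i hi), hag i (by have := node_lt hx hi; omega)]
  have hUp : U p = 1 := by rw [hUx p hpx, hCp, hTx p hpx, hVp]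
  have hUV : U = V := by
    rcases hUq U hU hUg (fun i hi h0 => by
      rw [hUx i hi]
      rcases hCT i with h | h
      · exact h
      · rw [h, hTx i hi, h0]) with h | h | h
    · rw [h] at hUp; exact absurd hUp (by simp)
    · exact h
    · rw [h, Pi.neg_apply, hVp] at hUp; exact absurd hUp (by decide)
  subst hUV
  have hiff : ∀ i ∈ x, (i ∈ nset n \ supp C ↔ U i = 0) := by
    intro i hi
    rw [hUx i hi]
    constructor
    · rintro ⟨-, h⟩
      by_contra hc
      exact h hc
    · exact fun h => ⟨node_lt hx hi, fun hc => hc h⟩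
  have hpx' : p ∉ nset n \ supp C := fun h => by
    rw [hiff p hpx, hVp] at h; exact absurd h (by decide)
  have hcirc : M.IsCocircuit U := by
    refine ⟨hU, hV0, fun Z hZ hZ0 hZs => ?_⟩
    have hz : ∀ i, U i = 0 → Z i = 0 := fun i hi => by
      by_contra hc
      exact hZs hc hi
    rcases hUq Z hZ (hz _ hVg) (fun i _ h => hz i h) with h | h | h
    · exact absurd h hZ0
    · rw [h]
    · rw [h]; ext i; simp [supp]
  refine ⟨nset n \ supp C, ⟨C, hC, hCnn, rfl⟩, fun h => hpx' (h ▸ hpx), ?_, hcirc, ?_, ?_, hiff⟩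
  · set w := x ∩ (nset n \ supp C) with hw
    have hwV : ∀ i ∈ w, U i = 0 := fun i hi => (hiff i hi.1).1 hi.2
    have hwn : ∀ i ∈ w, i < n := fun i hi => hi.2.1
    have hpw : p ∉ w := fun h => hpx' h.2
    have hgw : n + 1 ∉ w := fun h => by have := hwn _ h; omega
    have hnw : n ∉ w := fun h => by have := hwn _ h; omega
    have hwM : w ⊆ M.ground := fun i hi => by rw [S.groundM]; exact Or.inl (hwn i hi)
    apply le_antisymm
    · refine rk_le fun J hJw hJ => ?_
      have hJfin : J.Finite := M.ground_finite.subset hJ.1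
      have hind : M.Indep (insert p (insert (n + 1) J)) := by
        refine ⟨?_, fun D hD hDs => ?_⟩
        · rintro i (rfl | rfl | hi)
          · rw [S.groundM]; exact Or.inl hpn
          · rw [S.groundM]; exact Or.inr (Or.inr rfl)
          · exact hJ.1 hi
        have hDp : D p = 0 := by
          have := orth_single (hD.1.2 U hU) p fun i hi => by
            by_cases h0 : D i = 0
            · rw [h0, zero_mul]
            · rcases hDs h0 with rfl | rfl | h
              · exact absurd rfl hi
              · rw [hVg, mul_zero]
              · rw [hwV i (hJw h), mul_zero]
          rwa [hVp, mul_one] at this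
        have hDg : D (n + 1) = 0 := by
          have := orth_single (hD.1.2 Y' hY') (n + 1) fun i hi => by
            by_cases h0 : D i = 0
            · rw [h0, zero_mul]
            · rcases hDs h0 with rfl | rfl | h
              · exact absurd hDp h0
              · exact absurd rfl hi
              · rw [hY0 i (hJw h).1, mul_zero]
          rwa [hYg, mul_one] at this
        refine hJ.2 D hD fun i hi => ?_
        rcases hDs hi with rfl | rfl | h
        · exact absurd hDp hi
        · exact absurd hDg hi
        · exact h
      have hle := Indep.ncard_le_rk hind.1 hind
      rw [← OrientedMatroid.rank, S.rank, Set.ncard_insert_of_notMem _ (hJfin.insert _),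
        Set.ncard_insert_of_notMem (fun h => hgw (hJw h)) hJfin] at hle
      · omega
      · rintro (h | h)
        · omega
        · exact hpw (hJw h)
    · -- a covector vanishing on `w ∪ {p, g}` vanishes at `f`, so these elements span `f`
      rcases painting' M (fun _ => 1) n {n} (insert p (insert (n + 1) w)) rfl
        (by rintro _ rfl; rw [S.groundM]; exact Or.inr (Or.inl rfl))
        (fun _ _ => by decide)
        (by
          rintro _ rfl (h | h | h)
          · omega
          · omega
          · exact hnw h) with ⟨Z, hZ, hZn, -, hZ0⟩ | ⟨X, hX, hXn, -, hX0⟩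
      · exfalso
        rcases hUq Z hZ (hZ0 _ (by simp)) (fun i hi h => hZ0 i
          (Or.inr (Or.inr ⟨hi, (hiff i hi).2 h⟩))) with h | h | h
        · rw [h] at hZn; exact absurd hZn (by simp)
        · have := hZ0 p (Or.inl rfl)
          rw [h, hVp] at this; exact absurd this (by decide)
        · have := hZ0 p (Or.inl rfl)
          rw [h, Pi.neg_apply, hVp] at this; exact absurd this (by decide)
      · obtain ⟨D, hD, hDn, hDX⟩ := exists_conf_circuit M X hX n (by rw [hXn]; simp)
        have hDn0 : D n ≠ 0 := by rw [hDn, hXn]; simp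
        have hcard := S.gpf D hD hDn0
        have hI : M.Indep (supp D ∩ w) := by
          refine ⟨fun i hi => hwM hi.2, fun D' hD' hs => ?_⟩
          have h1 := hD.2.2 D' hD'.1 hD'.2.1 fun i hi => (hs hi).1
          have h2 : n ∈ supp D' := by rw [h1]; exact hDn0
          exact hnw (hs h2).2
        have hle := Indep.ncard_le_rk Set.inter_subset_right hI
        have hsub : supp D ⊆ insert n (insert p (insert (n + 1) (supp D ∩ w))) := by
          intro i hi
          by_contra hc
          simp only [Set.mem_insert_iff, Set.mem_inter_iff, not_or, not_and] at hc
          have hXi : X i ≠ 0 := by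
            rw [← (hDX i).resolve_left hi]; exact hi
          refine hXi (hX0 i hc.1 ?_)
          rintro (h | h | h)
          · exact hc.2.1 h
          · exact hc.2.2.1 h
          · exact hc.2.2.2 hi h
        have hIfin : (supp D ∩ w).Finite := (M.ground_finite.subset hwM).inter_of_right _
        have h1 := Set.ncard_le_ncard hsub (((hIfin.insert _).insert _).insert _)
        have h2 := Set.ncard_insert_le n (insert p (insert (n + 1) (supp D ∩ w)))
        have h3 := Set.ncard_insert_le p (insert (n + 1) (supp D ∩ w))
        have h4 := Set.ncard_insert_le (n + 1) (supp D ∩ w)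
        omega
  · rintro i ⟨hi, hi'⟩
    exact sign_eq_one (hVx i hi) fun h => hi' ((hiff i hi).2 h)
  · rintro i ⟨hi, hi'⟩
    have h1 : C' i = 0 := by
      rw [hag i (by have : i < n := hi.1; omega)]
      by_contra hc
      exact hi.2 hc
    rw [hU2 i h1, hY1 i hi.1 hi']

end

/-! ### Vectors of the extension at the vertices of the path -/

section

variable {M Mf Mhat : OrientedMatroid ℕ} {n r : ℕ}

/-- The target sign vector: `+` on `x ∪ {h}` and `ε` at `f`. For a node `x` it being a vector of
`Mhat` means that `x` is a vertex of `K_{[f,-h]}` (`ε = -1`) or of `K_{[-h,-f]}` (`ε = 1`). -/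
def IsKv (Mhat : OrientedMatroid ℕ) (n : ℕ) (ε : SignType) (x : Set ℕ) : Prop :=
  ∃ X, Mhat.IsVector X ∧ X n = ε ∧ X (n + 2) = 1 ∧ (∀ i ∈ x, X i = 1) ∧
    ∀ i, i ≠ n → i ≠ n + 2 → i ∉ x → X i = 0

/-- The node `x` is optimal for the objective `f`, in the direction selected by `ε`: `f` has a
dual solution supported on `x`. -/
def IsFEnd (Mhat : OrientedMatroid ℕ) (n : ℕ) (ε : SignType) (x : Set ℕ) : Prop :=
  ∃ X, Mhat.IsVector X ∧ X n = ε ∧ (∀ i ∈ x, 0 ≤ X i) ∧ ∀ i, i ≠ n → i ∉ x → X i = 0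

/-- The data of an edge along which the pencil spanned by `f` and `h` passes: `X` is a vector
carried by the edge together with `f` and `h`, and `W` is the direction of the edge, along which
`f` and `h` change in opposite ways up to `ε`. -/
structure IsCrossing (Mhat : OrientedMatroid ℕ) (n : ℕ) (ε : SignType) (x x' : Set ℕ)
    (X W : SignVec ℕ) : Prop where
  vec : Mhat.IsVector X
  Xf : X n = ε
  Xh : X (n + 2) = 1
  Xpos : ∀ i, i ≠ n → i ≠ n + 2 → 0 ≤ X i
  Xsupp : ∀ i, i ≠ n → i ≠ n + 2 → X i ≠ 0 → i ∈ x ∧ i ∈ x'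
  cov : W ∈ Mhat.covectors
  Wf : W n = ε
  Wh : W (n + 2) = -1
  W1 : ∀ i ∈ x, i ∉ x' → W i = 1
  Wm : ∀ i ∈ x', i ∉ x → W i = -1
  W0 : ∀ i ∈ x, i ∈ x' → W i = 0

theorem Setting.n_memH (S : Setting M Mf Mhat n r) : n ∈ Mhat.ground := by
  rw [S.groundH]; exact Or.inr (Or.inl rfl)

theorem Setting.h_memH (S : Setting M Mf Mhat n r) : n + 2 ∈ Mhat.ground := by
  rw [S.groundH]; exact Or.inr (Or.inr rfl)

theorem node_subH (S : Setting M Mf Mhat n r) {x : Set ℕ} (hx : IsNode Mf n x) :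
    x ⊆ Mhat.ground := fun i hi => by
  rw [S.groundH]; exact Or.inl (node_lt hx hi)

/-- A sign vector to which some vector through `h` conforms is a vector. -/
theorem isVector_of_conf (S : Setting M Mf Mhat n r) {X T : SignVec ℕ} (hX : Mhat.IsVector X)
    (hXh : X (n + 2) ≠ 0) (hXT : Conf X T) (hT : supp T ⊆ Mhat.ground) : Mhat.IsVector T := by
  refine mem_of_conf_cover (dualOM Mhat) T hT fun e he => ?_
  rcases painting' Mhat T e (supp T) ∅ he hT (fun b hb => hb) (fun _ _ h => h) with
    ⟨Y, hY, hYe, hYT, -⟩ | ⟨Z, hZ, hZe, hZT, hZ0⟩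
  · exfalso
    have h1 := orth_zero_of_nonneg (hX.2 Y hY) fun i => by
      rcases hXT i with h | h
      · rw [h, zero_mul]
      · by_cases h0 : T i = 0
        · rw [h, h0, zero_mul]
        · rw [h]; exact hYT i h0
    have h2 := eq_zero_of_genPos S.gph hX hXh hY fun i hi =>
      (mul_eq_zero.1 (h1 i)).resolve_left hi
    rw [h2] at hYe
    exact he hYe.symm
  · exact ⟨Z, hZ, hZe, conf_of_sign hZT fun b hb => hZ0 b hb (fun h => h)⟩

/-- The covectors vanishing on the support of a vector `X` through `f` and `h`, except at these
two elements, form a line. -/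
theorem line_unique (S : Setting M Mf Mhat n r) {X W V : SignVec ℕ} (hX : Mhat.IsVector X)
    (hXh : X (n + 2) ≠ 0) (hW : W ∈ Mhat.covectors) (hWf : W n ≠ 0)
    (hW0 : ∀ i, i ≠ n → i ≠ n + 2 → X i ≠ 0 → W i = 0) (hV : V ∈ Mhat.covectors)
    (hV0 : ∀ i, i ≠ n → i ≠ n + 2 → X i ≠ 0 → V i = 0) : V = 0 ∨ V = W ∨ V = -W := by
  have key : ∀ U ∈ Mhat.covectors, (∀ i, i ≠ n → i ≠ n + 2 → X i ≠ 0 → U i = 0) → U n = 0 →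
      U = 0 := by
    intro U hU hU0 hUn
    have h1 := orth_single (hX.2 U hU) (n + 2) fun i hi => by
      by_cases h2 : i = n
      · rw [h2, hUn, mul_zero]
      · by_cases h3 : X i = 0
        · rw [h3, zero_mul]
        · rw [hU0 i h2 hi h3, mul_zero]
    refine eq_zero_of_genPos S.gph hX hXh hU fun i hi => ?_
    by_cases h2 : i = n
    · rw [h2, hUn]
    by_cases h3 : i = n + 2
    · rw [h3]; exact (mul_eq_zero.1 h1).resolve_left hXh
    · exact hU0 i h2 h3 hi
  have key2 : ∀ U ∈ Mhat.covectors, (∀ i, i ≠ n → i ≠ n + 2 → X i ≠ 0 → U i = 0) → U n = W n →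
      U = W := by
    intro U hU hU0 hUn
    obtain ⟨Z, hZ, hZn, h1, -, -, h2⟩ := elim_sub Mhat hU hW n hUn (by rw [hUn]; exact hWf)
    have hZ0 := key Z hZ (fun i a b c => by rw [h1 i (hW0 i a b c), hU0 i a b c]) hZn
    funext i
    by_contra hc
    exact h2 i hc (by rw [hZ0]; rfl)
  rcases sign_trichotomy (V n) (W n) hWf with h | h | h
  · exact Or.inl (key V hV hV0 h)
  · exact Or.inr (Or.inl (key2 V hV hV0 h))
  · refine Or.inr (Or.inr ?_)
    rw [← key2 (-V) (Mhat.neg_mem V hV) (fun i a b c => by simp [hV0 i a b c]) (by simp [h]),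
      neg_neg]

/-- At a node that is not optimal there is an improving covector. -/
theorem improving (S : Setting M Mf Mhat n r) {ε : SignType} (hε : ε ≠ 0) {x : Set ℕ}
    (hx : IsNode Mf n x) (hend : ¬ IsFEnd Mhat n ε x) :
    ∃ W ∈ Mhat.covectors, W n = ε ∧ ∀ i ∈ x, 0 ≤ W i := by
  classical
  have hxn : ∀ i ∈ x, i ≠ n := fun i hi h => by have := node_lt hx hi; omega
  rcases painting' Mhat (fun i => if i = n then ε else 1) n (insert n x) ∅ (Or.inl rfl)
    (Set.insert_subset S.n_memH (node_subH S hx))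
    (fun b _ => by split_ifs <;> simp [hε]) (fun _ _ h => h) with
    ⟨W, hW, hWn, hWx, -⟩ | ⟨X, hX, hXn, hXx, hX0⟩
  · refine ⟨W, hW, by simpa using hWn, fun i hi => ?_⟩
    have := hWx i (Or.inr hi)
    simpa [hxn i hi] using this
  · refine absurd ⟨X, hX, by simpa using hXn, fun i hi => ?_, fun i h1 h2 => ?_⟩ hend
    · have := hXx i (Or.inr hi)
      simpa [hxn i hi] using this
    · exact hX0 i (by simp [h1, h2]) (fun h => h)

/-- From a vertex that is not optimal the path continues to an adjacent vertex. -/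
theorem exists_crossing (S : Setting M Mf Mhat n r) {ε : SignType} (hε : ε ≠ 0) {x : Set ℕ}
    (hx : IsNode Mf n x) (hK : IsKv Mhat n ε x) (hend : ¬ IsFEnd Mhat n ε x) :
    ∃ x' V, IsNode Mf n x' ∧ x ≠ x' ∧ M.rk (x ∩ x') = r - 2 ∧ M.IsCocircuit V ∧
      V (n + 1) = 0 ∧ V n = ε ∧ (∀ i ∈ x \ x', V i = 1) ∧ (∀ i ∈ x' \ x, V i = -1) ∧
      (∀ i ∈ x ∩ x', V i = 0) ∧ IsKv Mhat n ε x' ∧ ∃ X W, IsCrossing Mhat n ε x x' X W := by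
  classical
  obtain ⟨X0, hX0, hX0n, hX0h, hX0x, hX00⟩ := hK
  obtain ⟨W0, hW0, hW0n, hW0x⟩ := improving S hε hx hend
  have hxn : ∀ i ∈ x, i ≠ n := fun i hi h => by have := node_lt hx hi; omega
  have hxh : ∀ i ∈ x, i ≠ n + 2 := fun i hi h => by have := node_lt hx hi; omega
  have hW0h : W0 (n + 2) = -1 := by
    rcases sign_trichotomy (W0 (n + 2)) 1 (by decide) with h | h | h
    on_goal 3 => exact h
    all_goals
      exfalso
      have := orth_zero_of_nonneg (hX0.2 W0 hW0) (fun i => by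
        by_cases h1 : i = n
        · rw [h1, hX0n, hW0n]; exact sign_mul_self_nonneg ε
        by_cases h2 : i = n + 2
        · rw [h2, hX0h, h]; decide
        by_cases h3 : i ∈ x
        · rw [hX0x i h3, one_mul]; exact hW0x i h3
        · rw [hX00 i h1 h2 h3, zero_mul]) n
      rw [hX0n, hW0n] at this
      exact sign_mul_self_ne hε this
  set τ : ℕ → SignType := fun i => if i = n then ε else if i = n + 2 then -1 else 1 with hτ
  have hτn : τ n = ε := by simp [hτ]
  have hτh : τ (n + 2) = -1 := by simp [hτ]
  have hτx : ∀ i ∈ x, τ i = 1 := fun i hi => by simp [hτ, hxn i hi, hxh i hi]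
  obtain ⟨X, W, ⟨hX, hXn, hXx, hXz⟩, ⟨hW, hWh, hWx, -⟩, hc⟩ := duality Mhat τ n (n + 2)
    (by omega) S.n_memH S.h_memH (by rw [hτn]; exact hε) (by rw [hτh]; decide) x
    (Mhat.ground_finite.subset (node_subH S hx)) ∅ (node_subH S hx)
    (fun i hi => by rw [hτx i hi]; decide) (fun h => hxn n h rfl) (fun h => hxh _ h rfl)
    (fun h => h) (fun h => h) (fun _ _ h => h)
    ⟨X0, hX0, by rw [hX0n, hτn], fun i hi => by rw [hτx i hi, hX0x i hi]; decide,
      fun i h1 h2 h3 _ => hX00 i h1 h2 h3⟩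
    ⟨W0, hW0, by rw [hW0h, hτh], fun i hi => by rw [hτx i hi, one_mul]; exact hW0x i hi,
      fun i hi => absurd hi (fun h => h)⟩
  rw [hτn] at hXn
  rw [hτh] at hWh
  have hXx : ∀ i ∈ x, 0 ≤ X i := fun i hi => by
    have := hXx i hi
    rwa [hτx i hi, one_mul] at this
  have hWx : ∀ i ∈ x, 0 ≤ W i := fun i hi => by
    have := hWx i hi
    rwa [hτx i hi, one_mul] at this
  have hXz : ∀ i, i ≠ n → i ≠ n + 2 → i ∉ x → X i = 0 := fun i h1 h2 h3 =>
    hXz i h1 h2 h3 (fun h => h)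
  have hXh : X (n + 2) = 1 := by
    rcases sign_trichotomy (X (n + 2)) 1 (by decide) with h | h | h
    · refine absurd ⟨X, hX, hXn, hXx, fun i h1 h2 => ?_⟩ hend
      by_cases h3 : i = n + 2
      · rw [h3, h]
      · exact hXz i h1 h3 h2
    · exact h
    · -- eliminating `h` against the given vector would show that `x` is optimal
      exfalso
      obtain ⟨Z, hZ, hZh, h1, h2, h3, -⟩ := elim_add (dualOM Mhat) (X := X) (Y := X0) hX hX0
        (n + 2) (by rw [h, hX0h]) (by rw [h]; decide)
      refine hend ⟨Z, hZ, ?_, fun i hi => ?_, fun i a b => ?_⟩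
      · rw [h3 n (by rw [hXn, hX0n]), hXn]
      · by_cases h0 : X i = 0
        · rw [h2 i h0, hX0x i hi]; decide
        · have := sign_eq_one (hXx i hi) h0
          rw [h3 i (by rw [this, hX0x i hi]), this]; decide
      · by_cases c : i = n + 2
        · rw [c, hZh]
        · rw [h1 i (hX00 i a c b), hXz i a c b]
  have hWn : W n = ε := by
    rcases sign_trichotomy (W n) ε hε with h | h | h
    on_goal 2 => exact h
    all_goals
      exfalso
      have := orth_zero_of_nonpos (hX.2 W hW) (fun i => by
        by_cases h1 : i = n
        · rw [h1, hXn, h]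
          first
          | rw [mul_zero]
          | exact sign_mul_neg_self ε
        by_cases h2 : i = n + 2
        · rw [h2, hXh, hWh]; decide
        by_cases h3 : i ∈ x
        · rcases hc i h3 with h4 | h4 <;> rw [h4]
          · rw [zero_mul]
          · rw [mul_zero]
        · rw [hXz i h1 h2 h3, zero_mul]) (n + 2)
      rw [hXh, hWh] at this
      exact absurd this (by decide)
  have hWsupp : ∀ i, i ≠ n → i ≠ n + 2 → X i ≠ 0 → i ∈ x ∧ W i = 0 := by
    intro i h1 h2 h3
    have hix : i ∈ x := by
      by_contra h4
      exact h3 (hXz i h1 h2 h4)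
    exact ⟨hix, (hc i hix).resolve_left h3⟩
  obtain ⟨V, hV, hVg, hVW⟩ := S.down W hW
  have hVh : V (n + 2) = 0 := S.zeroM (M.supp_subset V hV) (by omega) (by omega) (by omega)
  have hVx : ∀ i ∈ x, V i = W i := fun i hi => hVW i (hxh i hi)
  obtain ⟨x', hx', hxx', hrk, hcirc, h1, hm, h0⟩ := step S hx hV hVg
    (by rw [hVW n (by omega), hWn]; exact hε) (fun i hi => by rw [hVx i hi]; exact hWx i hi)
    (by
      intro U hU hUg hU0
      obtain ⟨U', hU', hUU'⟩ := S.up U hU hUg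
      have hUh : U (n + 2) = 0 := S.zeroM (M.supp_subset U hU) (by omega) (by omega) (by omega)
      rcases line_unique S hX (by rw [hXh]; decide) hW (by rw [hWn]; exact hε)
        (fun i a b c => (hWsupp i a b c).2) hU' (fun i a b c => by
          obtain ⟨d, e⟩ := hWsupp i a b c
          rw [hUU' i b, hU0 i d (by rw [hVx i d, e])]) with h | h | h
      · refine Or.inl (funext fun i => ?_)
        by_cases hi : i = n + 2
        · rw [hi, hUh]; rfl
        · rw [← hUU' i hi, h]
      · refine Or.inr (Or.inl (funext fun i => ?_))
        by_cases hi : i = n + 2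
        · rw [hi, hUh, hVh]
        · rw [← hUU' i hi, h, hVW i hi]
      · refine Or.inr (Or.inr (funext fun i => ?_))
        by_cases hi : i = n + 2
        · rw [hi, hUh, Pi.neg_apply, hVh]; rfl
        · rw [← hUU' i hi, h, Pi.neg_apply, Pi.neg_apply, hVW i hi])
  have hx'n : ∀ i ∈ x', i ≠ n := fun i hi h => by have := node_lt hx' hi; omega
  have hx'h : ∀ i ∈ x', i ≠ n + 2 := fun i hi h => by have := node_lt hx' hi; omega
  have hXpos : ∀ i, i ≠ n → i ≠ n + 2 → 0 ≤ X i := fun i a b => by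
    by_cases hi : i ∈ x
    · exact hXx i hi
    · rw [hXz i a b hi]
  have hXsupp : ∀ i, i ≠ n → i ≠ n + 2 → X i ≠ 0 → i ∈ x ∧ i ∈ x' := fun i a b c => by
    obtain ⟨d, e⟩ := hWsupp i a b c
    exact ⟨d, (h0 i d).2 (by rw [hVx i d, e])⟩
  refine ⟨x', V, hx', hxx', hrk, hcirc, hVg, by rw [hVW n (by omega), hWn], h1, hm,
    fun i hi => (h0 i hi.1).1 hi.2, ?_, X, W, hX, hXn, hXh, hXpos, hXsupp, hW, hWn, hWh,
    fun i a b => by rw [← hVx i a, h1 i ⟨a, b⟩],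
    fun i a b => by rw [← hVW i (hx'h i a), hm i ⟨a, b⟩],
    fun i a b => by rw [← hVx i a, (h0 i a).1 b]⟩
  refine ⟨fun i => if i = n then ε else if i = n + 2 then 1 else if i ∈ x' then 1 else 0, ?_,
    by simp, by simp, fun i hi => by simp [hi, hx'n i hi],
    fun i a b c => by simp [a, b, c]⟩
  refine isVector_of_conf S hX (by rw [hXh]; decide) (fun i => ?_) (fun i hi => ?_)
  · by_cases a : i = n
    · right; simp [a, hXn]
    by_cases b : i = n + 2
    · right; simp [b, hXh]
    by_cases c : X i = 0
    · exact Or.inl c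
    · right; simp [a, b, (hXsupp i a b c).2, sign_eq_one (hXpos i a b) c]
  · by_cases a : i = n
    · rw [a]; exact S.n_memH
    by_cases b : i = n + 2
    · rw [b]; exact S.h_memH
    by_cases c : i ∈ x'
    · exact node_subH S hx' c
    · exact absurd (by simp [a, b, c]) hi

/-- A vertex has at most one predecessor. -/
theorem crossing_inj (S : Setting M Mf Mhat n r) {ε : SignType} (hε : ε ≠ 0) {s₁ s₂ t : Set ℕ}
    (hs₁ : IsNode Mf n s₁) (hs₂ : IsNode Mf n s₂) {X₁ W₁ X₂ W₂ : SignVec ℕ}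
    (h₁ : IsCrossing Mhat n ε s₁ t X₁ W₁) (h₂ : IsCrossing Mhat n ε s₂ t X₂ W₂) : s₁ = s₂ := by
  obtain ⟨Z, hZ, hZh, hZ1, hZ2, -, -⟩ := elim_sub (dualOM Mhat) (X := X₁) (Y := X₂) h₁.vec h₂.vec
    (n + 2) (by rw [h₁.Xh, h₂.Xh]) (by rw [h₁.Xh]; decide)
  have hZ : Mhat.IsVector Z := hZ
  have hX₁ : ∀ i, i ≠ n → i ≠ n + 2 → ¬ (i ∈ s₁ ∧ i ∈ t) → X₁ i = 0 := fun i a b c => by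
    by_contra h
    exact c (h₁.Xsupp i a b h)
  have hX₂ : ∀ i, i ≠ n → i ≠ n + 2 → ¬ (i ∈ s₂ ∧ i ∈ t) → X₂ i = 0 := fun i a b c => by
    by_contra h
    exact c (h₂.Xsupp i a b h)
  -- the difference `Z` of the two vectors, tested against `W₁` and then against `W₂`
  have hW1 : ∀ i, i ≠ n → 0 ≤ Z i * W₁ i := by
    intro i a
    by_cases b : i = n + 2
    · rw [b, hZh, zero_mul]
    by_cases c : i ∈ s₁ ∧ i ∈ t
    · rw [h₁.W0 i c.1 c.2, mul_zero]
    have e := hZ2 i (hX₁ i a b c)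
    by_cases d : i ∈ s₂ ∧ i ∈ t
    · rw [e, h₁.Wm i d.2 (fun h => c ⟨h, d.2⟩)]
      have := h₂.Xpos i a b
      revert this
      generalize X₂ i = u
      revert u; decide
    · rw [e, hX₂ i a b d, neg_zero, zero_mul]
  have hZn : Z n * ε ≤ 0 := by
    by_contra hc
    have := orth_zero_of_nonneg (hZ.2 W₁ h₁.cov) (fun i => by
      by_cases a : i = n
      · rw [a, h₁.Wf]; exact (not_le.1 hc).le
      · exact hW1 i a) n
    rw [h₁.Wf] at this
    exact hc this.le
  have hW2 := orth_zero_of_nonpos (hZ.2 W₂ h₂.cov) (fun i => by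
    by_cases a : i = n
    · rw [a, h₂.Wf]; exact hZn
    by_cases b : i = n + 2
    · rw [b, hZh, zero_mul]
    by_cases c : i ∈ s₂ ∧ i ∈ t
    · rw [h₂.W0 i c.1 c.2, mul_zero]
    have e := hZ1 i (hX₂ i a b c)
    by_cases d : i ∈ s₁ ∧ i ∈ t
    · rw [e, h₂.Wm i d.2 (fun h => c ⟨h, d.2⟩)]
      have := h₁.Xpos i a b
      revert this
      generalize X₁ i = u
      revert u; decide
    · rw [e, hX₁ i a b d, zero_mul])
  have hA : ∀ i, i ≠ n → i ≠ n + 2 → X₁ i ≠ 0 → i ∈ s₁ ∧ i ∈ t ∧ i ∈ s₂ := by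
    intro i a b c
    obtain ⟨d, e⟩ := h₁.Xsupp i a b c
    refine ⟨d, e, ?_⟩
    by_contra hc
    have := hW2 i
    rw [hZ1 i (hX₂ i a b (fun h => hc h.1)), h₂.Wm i e hc] at this
    exact c ((mul_eq_zero.1 this).resolve_right (by decide))
  have hW₁0 : ∀ i, i ≠ n → i ≠ n + 2 → X₁ i ≠ 0 → W₁ i = 0 := fun i a b c =>
    h₁.W0 i (h₁.Xsupp i a b c).1 (h₁.Xsupp i a b c).2
  have hXh : X₁ (n + 2) ≠ 0 := by rw [h₁.Xh]; decide
  have hWf : W₁ n ≠ 0 := by rw [h₁.Wf]; exact hε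
  have hWW : W₂ = W₁ := by
    rcases line_unique S h₁.vec hXh h₁.cov hWf hW₁0 h₂.cov (fun i a b c => by
      obtain ⟨-, d, e⟩ := hA i a b c
      exact h₂.W0 i e d) with h | h | h
    · have := h₂.Wf
      rw [h] at this
      exact absurd this.symm hε
    · exact h
    · have := h₂.Wf
      rw [h, Pi.neg_apply, h₁.Wf] at this
      exact absurd this (sign_neg_ne hε)
  subst hWW
  have hst : ∀ i ∈ t, (i ∈ s₁ ↔ i ∈ s₂) := by
    intro i hi
    constructor
    · intro h
      by_contra hc
      have := h₂.Wm i hi hc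
      rw [h₁.W0 i h hi] at this
      exact absurd this (by decide)
    · intro h
      by_contra hc
      have := h₁.Wm i hi hc
      rw [h₂.W0 i h hi] at this
      exact absurd this (by decide)
  -- the segment joining the two nodes has the direction of both crossings
  obtain ⟨Y₁, hY₁, hY₁g, hY₁1, hY₁0⟩ := node_data S hs₁
  obtain ⟨Y₂, hY₂, hY₂g, hY₂1, hY₂0⟩ := node_data S hs₂
  obtain ⟨V, hV, hVg, hV1, hV2, -, -⟩ := elim_sub M hY₂ hY₁ (n + 1) (by rw [hY₁g, hY₂g])
    (by rw [hY₂g]; decide)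
  obtain ⟨V', hV', hVV'⟩ := S.up V hV hVg
  have hs₁h : ∀ i ∈ s₁, i ≠ n + 2 := fun i hi h => by have := node_lt hs₁ hi; omega
  have hs₂h : ∀ i ∈ s₂, i ≠ n + 2 := fun i hi h => by have := node_lt hs₂ hi; omega
  have e1 : ∀ i ∈ s₁, i ∉ s₂ → V' i = 1 := fun i a b => by
    rw [hVV' i (hs₁h i a), hV1 i (hY₁0 i a), hY₂1 i (node_lt hs₁ a) b]
  have e2 : ∀ i ∈ s₂, i ∉ s₁ → V' i = -1 := fun i a b => by
    rw [hVV' i (hs₂h i a), hV2 i (hY₂0 i a), hY₁1 i (node_lt hs₂ a) b]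
  have e3 : ∀ i ∈ s₁, i ∉ s₂ → W₂ i = 1 := fun i a b =>
    h₁.W1 i a (fun h => b ((hst i h).1 a))
  have e4 : ∀ i ∈ s₂, i ∉ s₁ → W₂ i = 1 := fun i a b =>
    h₂.W1 i a (fun h => b ((hst i h).2 a))
  rcases line_unique S h₁.vec hXh h₁.cov hWf hW₁0 hV' (fun i a b c => by
    obtain ⟨d, -, e⟩ := hA i a b c
    rw [hVV' i b, hV1 i (hY₁0 i d), hY₂0 i e]) with h | h | h
  · refine node_antichain S hs₁ hs₂ fun i hi => ?_
    by_contra hc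
    have := e1 i hi hc
    rw [h] at this
    exact absurd this (by simp)
  · refine (node_antichain S hs₂ hs₁ fun i hi => ?_).symm
    by_contra hc
    have := e2 i hi hc
    rw [h, e4 i hi hc] at this
    exact absurd this (by decide)
  · refine node_antichain S hs₁ hs₂ fun i hi => ?_
    by_contra hc
    have := e1 i hi hc
    rw [h, Pi.neg_apply, e3 i hi hc] at this
    exact absurd this (by decide)

/-- A vertex at which `h` is optimal has no predecessor. -/
theorem no_crossing_to {ε : SignType} {y x : Set ℕ}
    {X₀ : SignVec ℕ} (hX₀ : Mhat.IsVector X₀) (hh : X₀ (n + 2) = 1) (hn : X₀ n = 0)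
    (h1 : ∀ i ∈ x, X₀ i = 1) (h0 : ∀ i, i ≠ n → i ≠ n + 2 → i ∉ x → X₀ i = 0) {X W : SignVec ℕ}
    (hc : IsCrossing Mhat n ε y x X W) : False := by
  have := orth_zero_of_nonpos (hX₀.2 W hc.cov) (fun i => by
    by_cases a : i = n
    · rw [a, hn, zero_mul]
    by_cases b : i = n + 2
    · rw [b, hh, hc.Wh]; decide
    by_cases c : i ∈ x
    · rw [h1 i c, one_mul]
      by_cases d : i ∈ y
      · rw [hc.W0 i d c]
      · rw [hc.Wm i c d]; decide
    · rw [h0 i a b c, zero_mul]) (n + 2)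
  rw [hh, hc.Wh] at this
  exact absurd this (by decide)

/-- A node that is not optimal has an outgoing edge. -/
theorem exists_step (S : Setting M Mf Mhat n r) {ε : SignType} (hε : ε ≠ 0) {x : Set ℕ}
    (hx : IsNode Mf n x) (hend : ¬ IsFEnd Mhat n ε x) :
    ∃ x' V, IsNode Mf n x' ∧ x ≠ x' ∧ M.rk (x ∩ x') = r - 2 ∧ M.IsCocircuit V ∧
      V (n + 1) = 0 ∧ V n = ε ∧ (∀ i ∈ x \ x', V i = 1) ∧ (∀ i ∈ x' \ x, V i = -1) ∧
      ∀ i ∈ x ∩ x', V i = 0 := by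
  obtain ⟨W, hW, hWn, hWx⟩ := improving S hε hx hend
  obtain ⟨V₀, hV₀, hV₀g, hV₀W⟩ := S.down W hW
  have hxn : ∀ i ∈ x, i ≠ n := fun i hi h => by have := node_lt hx hi; omega
  have hxh : ∀ i ∈ x, i ≠ n + 2 := fun i hi h => by have := node_lt hx hi; omega
  -- a cocircuit of the restriction of `M / g` to `x ∪ {f}`
  set B : Set ℕ := (insert n x)ᶜ with hB
  have hnB : n ∉ B := fun h => h (Or.inl rfl)
  have hxB : ∀ i ∈ x, i ∉ B := fun i hi h => h (Or.inr hi)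
  set N := delOM (conOM M {n + 1}) B with hN
  have hV₀N : restrictAway B V₀ ∈ N.covectors :=
    ⟨V₀, ⟨hV₀, by rintro _ rfl; exact hV₀g⟩, rfl⟩
  have hV₀n : restrictAway B V₀ n = ε := by
    rw [restrictAway_of_notMem hnB, hV₀W n (by omega), hWn]
  obtain ⟨C, hC, hCn, hCc⟩ := exists_conf_cocircuit N _ hV₀N n (by rw [hV₀n]; exact hε)
  obtain ⟨V, ⟨hV, hVg⟩, rfl⟩ := hC.1
  have hVg : V (n + 1) = 0 := hVg _ rfl
  have hVn : V n = ε := by rw [← hV₀n, ← hCn, restrictAway_of_notMem hnB]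
  have hVx : ∀ i ∈ x, 0 ≤ V i := fun i hi => by
    have := hCc i
    rw [restrictAway_of_notMem (hxB i hi), restrictAway_of_notMem (hxB i hi)] at this
    rcases this with h | h
    · rw [h]
    · rw [h, hV₀W i (hxh i hi)]; exact hWx i hi
  -- a covector of `M / g` whose zeros in `x ∪ {f}` properly extend those of `V` is zero
  have key : ∀ U ∈ M.covectors, U (n + 1) = 0 → (∀ i ∈ x, V i = 0 → U i = 0) → U n = 0 →
      U = 0 := by
    intro U hU hUg hU0 hUn
    have hu : restrictAway B U ∈ N.covectors := ⟨U, ⟨hU, by rintro _ rfl; exact hUg⟩, rfl⟩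
    by_cases h0 : restrictAway B U = 0
    · refine node_sp S hx hU hUg fun i hi => ?_
      rw [← restrictAway_of_notMem (hxB i hi) U, h0]; rfl
    · exfalso
      have h1 := hC.2.2 _ hu h0 (fun i hi => by
        rw [supp_restrictAway] at hi ⊢
        refine ⟨fun h => hi.1 ?_, hi.2⟩
        have h2 : i ∈ insert n x := by
          by_contra hc
          exact hi.2 hc
        rcases h2 with rfl | h2
        · exact hUn
        · exact hU0 i h2 h)
      have h2 : n ∈ supp (restrictAway B V) := by
        rw [supp_restrictAway]
        exact ⟨fun h => hε (by rw [← hVn, h]), hnB⟩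
      rw [← h1, supp_restrictAway] at h2
      exact h2.1 hUn
  have key2 : ∀ U ∈ M.covectors, U (n + 1) = 0 → (∀ i ∈ x, V i = 0 → U i = 0) → U n = V n →
      U = V := by
    intro U hU hUg hU0 hUn
    obtain ⟨Z, hZ, hZn, h1, -, -, h2⟩ := elim_sub M hU hV n hUn (by rw [hUn, hVn]; exact hε)
    have hZ0 := key Z hZ (by rw [h1 _ hVg, hUg])
      (fun i a b => by rw [h1 i b, hU0 i a b]) hZn
    funext i
    by_contra hc
    exact h2 i hc (by rw [hZ0]; rfl)
  obtain ⟨x', hx', hxx', hrk, hcirc, h1, hm, h0⟩ := step S hx hV hVg (by rw [hVn]; exact hε) hVx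
    (by
      intro U hU hUg hU0
      rcases sign_trichotomy (U n) (V n) (by rw [hVn]; exact hε) with h | h | h
      · exact Or.inl (key U hU hUg hU0 h)
      · exact Or.inr (Or.inl (key2 U hU hUg hU0 h))
      · refine Or.inr (Or.inr ?_)
        rw [← key2 (-U) (M.neg_mem U hU) (by simp [hUg]) (fun i a b => by simp [hU0 i a b])
          (by simp [h]), neg_neg])
  exact ⟨x', V, hx', hxx', hrk, hcirc, hVg, hVn, h1, hm, fun i hi => (h0 i hi.1).1 hi.2⟩

/-- The optimal node is unique: an optimal dual solution of one node would, by genericity of `f`,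
annihilate the direction joining two of them. -/
theorem fEnd_unique (S : Setting M Mf Mhat n r) {ε : SignType} (hε : ε ≠ 0) {s t : Set ℕ}
    (hs : IsNode Mf n s) (ht : IsNode Mf n t) (hsE : IsFEnd Mhat n ε s)
    (htE : IsFEnd Mhat n ε t) : s = t := by
  obtain ⟨Y, hY, hYg, hY1, hY0⟩ := node_data S hs
  obtain ⟨Y', hY', hYg', hY1', hY0'⟩ := node_data S ht
  obtain ⟨V, hV, hVg, h1, h2, -, h3⟩ := elim_sub M hY hY' (n + 1) (by rw [hYg, hYg'])
    (by rw [hYg]; decide)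
  have lift : ∀ x, IsNode Mf n x → IsFEnd Mhat n ε x → ∃ Z, M.IsVector Z ∧ Z n = ε ∧
      (∀ i ∈ x, 0 ≤ Z i) ∧ ∀ i, i ≠ n → i ≠ n + 1 → i ∉ x → Z i = 0 := by
    rintro x hx ⟨X, hX, hXn, hXx, hX0⟩
    obtain ⟨Z, hZ, hag⟩ := S.lift X hX (hX0 _ (by omega) fun h => by
      have := node_lt hx h; omega)
    exact ⟨Z, hZ, by rw [hag n (by omega), hXn], fun i hi => by
      rw [hag i (by have := node_lt hx hi; omega)]; exact hXx i hi,
      fun i a b c => by rw [hag i b, hX0 i a c]⟩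
  have gpf : ∀ Z, M.IsVector Z → Z n = ε → (∀ i, Z i * V i = 0) → V = 0 := fun Z hZ hZn h =>
    eq_zero_of_genPos (h := n) (by rw [S.rank]; exact S.gpf) hZ (by rw [hZn]; exact hε) hV
      fun i hi => (mul_eq_zero.1 (h i)).resolve_left hi
  have hV0 : V = 0 := by
    by_cases hsg : 0 ≤ ε * V n
    · obtain ⟨Z, hZ, hZn, hZx, hZ0⟩ := lift t ht htE
      refine gpf Z hZ hZn (orth_zero_of_nonneg (hZ.2 V hV) fun i => ?_)
      by_cases a : i = n
      · rw [a, hZn]; exact hsg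
      by_cases b : i = n + 1
      · rw [b, hVg, mul_zero]
      by_cases c : i ∈ t
      · refine sign_mul_nonneg (hZx i c) ?_
        rw [h1 i (hY0' i c)]
        by_cases d : i ∈ s
        · rw [hY0 i d]
        · rw [hY1 i (node_lt ht c) d]; decide
      · rw [hZ0 i a b c, zero_mul]
    · obtain ⟨Z, hZ, hZn, hZx, hZ0⟩ := lift s hs hsE
      refine gpf Z hZ hZn (orth_zero_of_nonpos (hZ.2 V hV) fun i => ?_)
      by_cases a : i = n
      · rw [a, hZn]; exact (not_le.1 hsg).le
      by_cases b : i = n + 1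
      · rw [b, hVg, mul_zero]
      by_cases c : i ∈ s
      · refine sign_mul_nonpos (hZx i c) ?_
        rw [h2 i (hY0 i c)]
        by_cases d : i ∈ t
        · rw [hY0' i d, neg_zero]
        · rw [hY1' i (node_lt hs c) d]; decide
      · rw [hZ0 i a b c, zero_mul]
  refine node_antichain S hs ht fun i hi => ?_
  by_contra hc
  refine h3 i ?_ (by rw [hV0]; rfl)
  rw [hY0 i hi, hY1' i (node_lt hs hi) hc]; decide

/-- The path from the `h`-optimal node `xh` to the terminal node `t` of an arc relation `R` that
contains the edges in whose direction `f` has sign `ε`. -/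
theorem half_path (S : Setting M Mf Mhat n r) {ε : SignType} (hε : ε ≠ 0) {xh t : Set ℕ}
    (R : Set ℕ → Set ℕ → Prop)
    (hR : ∀ x x' V, IsNode Mf n x → IsNode Mf n x' → x ≠ x' → M.rk (x ∩ x') = r - 2 →
      M.IsCocircuit V → V (n + 1) = 0 → V n = ε → (∀ i ∈ x \ x', V i = 1) →
      (∀ i ∈ x' \ x, V i = -1) → (∀ i ∈ x ∩ x', V i = 0) → R x x')
    (ht : IsNode Mf n t) (htR : ∀ u, ¬ R t u) (hxh : IsNode Mf n xh) {X₀ : SignVec ℕ}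
    (hX₀ : Mhat.IsVector X₀) (hh : X₀ (n + 2) = 1) (hn : X₀ n = 0)
    (h1 : ∀ i ∈ xh, X₀ i = 1) (h0 : ∀ i, i ≠ n → i ≠ n + 2 → i ∉ xh → X₀ i = 0) :
    ∃ p : List (Set ℕ), p ≠ [] ∧ p.head? = some xh ∧ p.getLast? = some t ∧ p.IsChain R ∧
      p.Nodup ∧ ∀ x ∈ p, IsNode Mf n x ∧ IsKv Mhat n ε x := by
  classical
  have htE : IsFEnd Mhat n ε t := by
    by_contra hc
    obtain ⟨x', V, a1, a2, a3, a4, a5, a6, a7, a8, a9⟩ := exists_step S hε ht hc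
    exact htR x' (hR t x' V ht a1 a2 a3 a4 a5 a6 a7 a8 a9)
  have hxn : ∀ i ∈ xh, i ≠ n := fun i hi h => by have := node_lt hxh hi; omega
  have hK : IsKv Mhat n ε xh := by
    refine ⟨fun i => if i = n then ε else X₀ i, ?_, by simp, by simp [hh],
      fun i hi => by simp [hxn i hi, h1 i hi], fun i a b c => by simp [a, h0 i a b c]⟩
    refine isVector_of_conf S hX₀ (by rw [hh]; decide) (fun i => ?_) (fun i hi => ?_)
    · by_cases a : i = n
      · left; rw [a, hn]
      · right; simp [a]
    · by_cases a : i = n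
      · rw [a]; exact S.n_memH
      · exact hX₀.1 (by simpa [supp, a] using hi)
  obtain ⟨p, t', ⟨ht'E, ht'⟩, p1, p2, p3, p4, p5, p6⟩ := path_following
    (fun x => IsNode Mf n x ∧ IsKv Mhat n ε x) (fun x => IsFEnd Mhat n ε x ∧ IsNode Mf n x)
    (fun x x' => R x x' ∧ ∃ X W, IsCrossing Mhat n ε x x' X W) xh
    ((Set.Finite.finite_subsets (Set.finite_lt_nat n)).subset fun x hx i hi => node_lt hx.1 hi)
    ⟨hxh, hK⟩
    (by
      rintro x ⟨hx, hxK⟩ hend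
      obtain ⟨x', V, a1, a2, a3, a4, a5, a6, a7, a8, a9, a10, a11⟩ :=
        exists_crossing S hε hx hxK fun h => hend ⟨h, hx⟩
      exact ⟨x', ⟨a1, a10⟩, hR x x' V hx a1 a2 a3 a4 a5 a6 a7 a8 a9, a11⟩)
    (by
      rintro x y z ⟨hx, -⟩ ⟨hy, -⟩ - ⟨-, X, W, hc⟩ ⟨-, X', W', hc'⟩
      exact crossing_inj S hε hx hy hc hc')
    (by
      rintro x - ⟨-, X, W, hc⟩
      exact no_crossing_to hX₀ hh hn h1 h0 hc)
  have htt : t' = t := fEnd_unique S hε ht' ht ht'E htE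
  subst htt
  exact ⟨p, p1, p2, p3, p4.imp fun _ _ h => h.1, p5, p6⟩

end

/-! ### The setting attached to a program, and the two halves of the path -/

theorem setting_of {M Mf Mg Mhat : OrientedMatroid ℕ} {n r : ℕ} {X₀ : SignVec ℕ}
    (hProg : IsProgram M Mf n r) (hMg : IsContraction M {n + 1} Mg)
    (hExt : IsExtension Mg (n + 2) Mhat) (hGP : GenPos Mhat (n + 2))
    (hX₀ : Mhat.IsVector X₀) (hh : X₀ (n + 2) = 1) (hn : X₀ n = 0) :
    Setting M Mf Mhat n r := by
  obtain ⟨hg, hr, hdel, hi, -, hiii⟩ := hProg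
  obtain ⟨-, hEg, -, hEd⟩ := hExt
  have groundH : Mhat.ground = nset n ∪ {n, n + 2} := by
    rw [hEg, hMg.1, hg]
    ext i
    simp only [Set.mem_insert_iff, Set.mem_sdiff, Set.mem_union, Set.mem_singleton_iff, nset,
      Set.mem_ofPred_eq]
    omega
  have zeroM : ∀ V ∈ M.covectors, V (n + 2) = 0 := by
    intro V hV
    by_contra hc
    have := M.supp_subset V hV hc
    rw [hg] at this
    simp [nset] at this
  have up : ∀ V ∈ M.covectors, V (n + 1) = 0 →
      ∃ V' ∈ Mhat.covectors, ∀ i, i ≠ n + 2 → V' i = V i := by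
    intro V hV hVg
    have h1 : V ∈ Mg.covectors :=
      (isContraction_covectors hMg V).2 ⟨hV, by rintro _ rfl; exact hVg⟩
    obtain ⟨V', hV', rfl⟩ := (isDeletion_covectors hEd V).1 h1
    exact ⟨V', hV', fun i hi => (restrictAway_of_notMem (by simpa using hi) V').symm⟩
  refine ⟨hg, groundH, hr, isDeletion_covectors hdel, up, ?_, ?_, hiii, hGP, hi, ?_⟩
  · intro V' hV'
    have h1 : restrictAway {n + 2} V' ∈ Mg.covectors :=
      (isDeletion_covectors hEd _).2 ⟨V', hV', rfl⟩
    obtain ⟨h2, h3⟩ := (isContraction_covectors hMg _).1 h1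
    exact ⟨_, h2, h3 _ rfl, fun i hi => restrictAway_of_notMem (by simpa using hi) V'⟩
  · intro X hX hXh
    have h1 : Mg.IsVector X :=
      (isDeletion_isVector hEd X).2 ⟨hX, by rintro _ rfl; exact hXh⟩
    obtain ⟨Z, hZ, rfl⟩ := (isContraction_isVector hMg X).1 h1
    exact ⟨Z, hZ, fun i hi => (restrictAway_of_notMem (by simpa using hi) Z).symm⟩
  · intro U hU hU0
    obtain ⟨U', hU', hag⟩ := up U hU (hU0 _ (by omega))
    have h1 := orth_single (hX₀.2 U' hU') (n + 2) fun i hi => by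
      by_cases a : i = n
      · rw [a, hn, zero_mul]
      · rw [hag i hi, hU0 i a, mul_zero]
    have h2 : U' = 0 := eq_zero_of_genPos hGP hX₀ (by rw [hh]; decide) hU' fun i hi => by
      by_cases a : i = n
      · exact absurd (by rw [a, hn]) hi
      by_cases b : i = n + 2
      · rw [b]; exact (mul_eq_zero.1 h1).resolve_left (by rw [hh]; decide)
      · rw [hag i b, hU0 i a]
    funext i
    by_cases b : i = n + 2
    · rw [b]; exact zeroM U hU
    · rw [← hag i b, h2]

theorem isDipath_append {V : Type*} {A : V → V → Prop} {p q : List V} {a b c : V}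
    (hp : IsDipath A p a b) (hq : IsDipath A q b c) (hpq : ∀ x, x ∈ p → x ∈ q → x = b) :
    IsDipath A (p ++ q.tail) a c := by
  obtain ⟨p0, p1, p2, p3, p4⟩ := hp
  obtain ⟨q0, q1, q2, q3, q4⟩ := hq
  obtain ⟨q', rfl⟩ : ∃ q', q = b :: q' := by
    cases q with
    | nil => exact absurd rfl q0
    | cons x q' => exact ⟨q', by simp at q1; rw [q1]⟩
  have p3 : p.IsChain A := p3
  have q3 : (b :: q').IsChain A := q3
  refine ⟨by simp [p0], ?_, ?_, ?_, ?_⟩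
  · rw [List.head?_append, p1]; rfl
  · rw [List.tail_cons, List.getLast?_append, p2]
    rw [List.getLast?_cons] at q2
    cases h : q'.getLast? with
    | none => simpa [h] using q2
    | some d => simpa [h] using q2
  · change (p ++ q').IsChain A
    rw [List.isChain_append]
    refine ⟨p3, q3.tail, fun x hx y hy => ?_⟩
    rw [p2] at hx
    obtain rfl : b = x := by simpa using hx
    exact (List.isChain_cons.1 q3).1 y hy
  · rw [List.tail_cons, List.nodup_append]
    refine ⟨p4, q4.tail, fun x hx y hy hxy => ?_⟩
    subst hxy
    have := hpq x hx (List.mem_cons_of_mem _ hy)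
    subst this
    exact (List.nodup_cons.1 q4).1 hy

/-- Let `M` be an oriented matroid program of rank `r` on
`[n] ∪ {f, g}` (`f = n`, `g = n + 1`, `Mf = M ∖ f`), let `Mhat` be an
extension of `M / g` by the element `h = n + 2` in general position, let
`Mhf = Mhat ∖ f`, and let `xh` be the sink of `K_h`, i.e. the unique node
admitting a vector `X` of `Mhat ∖ f` with `X₊ = xh ∪ {h}` and `X₋ = ∅`.
Then there are a monotone path in `K_f` from the source of `K_f` to `xh`
all of whose vertices lie in `K_{[f,-h]}`, and a monotone path in `K_f` from
`xh` to the sink of `K_f` all of whose vertices lie in `K_{[-h,-f]}`; the two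
paths share only the vertex `xh`, and their concatenation is a monotone path
in `K_f` from the source to the sink. -/
theorem path_through_Kh_sink (M Mf Mg Mhat Mhf : OrientedMatroid ℕ) (n r : ℕ)
    (src snk xh : Set ℕ)
    (hProg : IsProgram M Mf n r)
    (hMg : IsContraction M {n + 1} Mg)
    (hExt : IsExtension Mg (n + 2) Mhat)
    (hGP : GenPos Mhat (n + 2))
    (hMhf : IsDeletion Mhat {n} Mhf)
    (hsrc : IsSource M Mf n r src)
    (hsnk : IsSink M Mf n r snk)
    (hxh : IsNode Mf n xh ∧ ∃ X, Mhf.IsVector X ∧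
      {e | X e = 1} = xh ∪ {n + 2} ∧ {e | X e = -1} = (∅ : Set ℕ))
    (hxh_uniq : ∀ v : Set ℕ, (IsNode Mf n v ∧ ∃ X, Mhf.IsVector X ∧
      {e | X e = 1} = v ∪ {n + 2} ∧ {e | X e = -1} = (∅ : Set ℕ)) → v = xh) :
    ∃ p1 p2 : List (Set ℕ),
      IsDipath (Arc M Mf n r) p1 src xh ∧ (∀ x ∈ p1, InKfmh Mhat n x) ∧
      IsDipath (Arc M Mf n r) p2 xh snk ∧ (∀ x ∈ p2, InKmhmf Mhat n x) ∧
      (∀ x, x ∈ p1 → x ∈ p2 → x = xh) ∧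
      IsDipath (Arc M Mf n r) (p1 ++ p2.tail) src snk := by
  obtain ⟨hxhN, X₀, hX₀', hXp, hXm⟩ := hxh
  obtain ⟨hX₀, hX₀n⟩ := (isDeletion_isVector hMhf X₀).1 hX₀'
  have hn : X₀ n = 0 := hX₀n n rfl
  have hpos : ∀ i, X₀ i = 1 ↔ i ∈ xh ∨ i = n + 2 := fun i => Set.ext_iff.1 hXp i
  have hneg : ∀ i, X₀ i ≠ -1 := fun i hi => (Set.ext_iff.1 hXm i).1 hi
  have hh : X₀ (n + 2) = 1 := (hpos _).2 (Or.inr rfl)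
  have h1 : ∀ i ∈ xh, X₀ i = 1 := fun i hi => (hpos i).2 (Or.inl hi)
  have h0 : ∀ i, i ≠ n → i ≠ n + 2 → i ∉ xh → X₀ i = 0 := fun i _ b c =>
    ((sign_trichotomy (X₀ i) 1 (by decide)).resolve_right fun h =>
      h.elim (fun h => ((hpos i).1 h).elim c b) (hneg i))
  have S := setting_of hProg hMg hExt hGP hX₀ hh hn
  -- upwards from `xh` to the sink
  obtain ⟨p2, a1, a2, a3, a4, a5, a6⟩ := half_path S (ε := 1) (by decide) (Arc M Mf n r)
    (fun x x' V hx hx' hne hrk hV hVg hVf b1 bm b0 => by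
      have hV' : M.IsCocircuit (-V) := by
        have hs : supp (-V) = supp V := by ext i; simp [supp]
        refine ⟨M.neg_mem V hV.1, fun h => hV.2.1 (by rw [← neg_neg V, h, neg_zero]), ?_⟩
        rw [hs]
        exact hV.2.2
      exact ⟨hx, hx', hne, hrk, -V, hV', by simp [hVg], fun i hi => by simp [bm i hi],
        fun i hi => by simp [b1 i hi], fun i hi => by simp [b0 i hi], by simp [hVf],
        fun i hi => by simp [b1 i hi, hVf]⟩)
    hsnk.1 hsnk.2 hxhN hX₀ hh hn h1 h0
  -- downwards from `xh` to the source, against the arcs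
  obtain ⟨q, c1, c2, c3, c4, c5, c6⟩ := half_path S (ε := -1) (by decide)
    (fun x x' => Arc M Mf n r x' x)
    (fun x x' V hx hx' hne hrk hV hVg hVf b1 bm b0 =>
      ⟨hx', hx, hne.symm, by rw [Set.inter_comm]; exact hrk, V, hV, hVg, b1, bm,
        fun i hi => b0 i hi.symm, by rw [hVf]; decide, fun i hi => by rw [bm i hi, hVf]⟩)
    hsrc.1 hsrc.2 hxhN hX₀ hh hn h1 h0
  have hp1 : IsDipath (Arc M Mf n r) q.reverse src xh := by
    refine ⟨by simpa using c1, by rw [List.head?_reverse, c3],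
      by rw [List.getLast?_reverse, c2], ?_, List.nodup_reverse.2 c5⟩
    exact List.isChain_reverse.2 c4
  have hp2 : IsDipath (Arc M Mf n r) p2 xh snk := ⟨a1, a2, a3, a4, a5⟩
  have hcap : ∀ x, x ∈ q.reverse → x ∈ p2 → x = xh := by
    intro x hx hx'
    obtain ⟨hxN, X, hX, hXn, hXh, hX1, hX0⟩ := c6 x (List.mem_reverse.1 hx)
    obtain ⟨-, X', hX', hXn', hXh', hX1', hX0'⟩ := a6 x hx'
    -- eliminating `f` between the two vectors shows that `x` is optimal for `h`
    obtain ⟨Z, hZ, hZn, e1, -, e3, -⟩ := elim_add (dualOM Mhat) (X := X) (Y := X') hX hX' n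
      (by rw [hXn, hXn']) (by rw [hXn]; decide)
    have hZ1 : ∀ i, i ∈ x ∨ i = n + 2 → Z i = 1 := by
      rintro i (hi | rfl)
      · rw [e3 i (by rw [hX1 i hi, hX1' i hi]), hX1 i hi]
      · rw [e3 _ (by rw [hXh, hXh']), hXh]
    have hZ0 : ∀ i, ¬ (i ∈ x ∨ i = n + 2) → Z i = 0 := by
      intro i hi
      by_cases a : i = n
      · rw [a, hZn]
      · rw [e1 i (hX0' i a (fun h => hi (Or.inr h)) fun h => hi (Or.inl h)),
          hX0 i a (fun h => hi (Or.inr h)) fun h => hi (Or.inl h)]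
    refine hxh_uniq x ⟨hxN, Z, (isDeletion_isVector hMhf Z).2
      ⟨hZ, by rintro _ rfl; exact hZn⟩, ?_, ?_⟩
    · ext i
      refine ⟨fun h => ?_, fun h => hZ1 i h⟩
      by_contra hc
      have h : Z i = 1 := h
      rw [hZ0 i hc] at h
      exact absurd h (by decide)
    · ext i
      refine ⟨fun h => ?_, fun h => absurd h (fun h => h)⟩
      have h : Z i = -1 := h
      by_cases hc : i ∈ x ∨ i = n + 2
      · rw [hZ1 i hc] at h; exact absurd h (by decide)
      · rw [hZ0 i hc] at h; exact absurd h (by decide)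
  refine ⟨q.reverse, p2, hp1, fun x hx => ?_, hp2, fun x hx => ?_, hcap,
    isDipath_append hp1 hp2 hcap⟩
  · obtain ⟨hxN, X, hX, hXn, hXh, hX1, hX0⟩ := c6 x (List.mem_reverse.1 hx)
    refine ⟨X, hX, ?_, ?_⟩
    · ext i
      refine ⟨fun h => ?_, ?_⟩
      · by_contra hc
        have h : X i = 1 := h
        have a : i ≠ n := fun a => by rw [a, hXn] at h; exact absurd h (by decide)
        rw [hX0 i a (fun b => hc (Or.inr b)) fun b => hc (Or.inl b)] at h
        exact absurd h (by decide)
      · rintro (h | rfl)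
        · exact hX1 i h
        · exact hXh
    · ext i
      refine ⟨fun h => ?_, ?_⟩
      · by_contra hc
        have h : X i = -1 := h
        by_cases b : i = n + 2
        · rw [b, hXh] at h; exact absurd h (by decide)
        by_cases c : i ∈ x
        · rw [hX1 i c] at h; exact absurd h (by decide)
        · rw [hX0 i hc b c] at h; exact absurd h (by decide)
      · rintro rfl
        exact hXn
  · obtain ⟨hxN, X, hX, hXn, hXh, hX1, hX0⟩ := a6 x hx
    refine ⟨X, hX, ?_, ?_⟩
    · ext i
      refine ⟨fun h => ?_, ?_⟩
      · by_contra hc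
        have h : X i = 1 := h
        rw [hX0 i (fun b => hc (Or.inr (Or.inl b))) (fun b => hc (Or.inr (Or.inr b)))
          fun b => hc (Or.inl b)] at h
        exact absurd h (by decide)
      · rintro (h | rfl | rfl)
        · exact hX1 i h
        · exact hXn
        · exact hXh
    · ext i
      refine ⟨fun h => ?_, fun h => absurd h (fun h => h)⟩
      have h : X i = -1 := h
      by_cases a : i = n
      · rw [a, hXn] at h; exact absurd h (by decide)
      by_cases b : i = n + 2
      · rw [b, hXh] at h; exact absurd h (by decide)
      by_cases c : i ∈ x
      · rw [hX1 i c] at h; exact absurd h (by decide)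
      · rw [hX0 i a b c] at h; exact absurd h (by decide)

end OMHK
end
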